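/- arXiv:1202.6259 — 8 statements merged into one kernel-verified Lean document; each statement's English description precedes it below -/
import Mathlib

section
/- For all Borel probability measures u and v on X, one has d_1(u,v) = d_2(u,v) = d_2^+(u,v) = d_3(u,v). -/
open MeasureTheory Set

namespace Stmt0

variable {V : Type*} [NormedAddCommGroup V] [NormedSpace ℝ V]
  [MeasurableSpace V] [BorelSpace V]

/-- The pairing `u(f) = ∫_X f du`. -/
noncomputable def pairing {X : Set V} (u : ProbabilityMeasure X) (f : C(X, ℝ)) : ℝ :=
  ∫ x, f x ∂(u : Measure X)

/-- `D₁ = {f ∈ C(X,ℝ) : ∀ x,y ∈ X, ∀ a,b ≥ 0, a·f(x) − b·f(y) ≤ ‖a·x − b·y‖}`. -/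
def D1 (X : Set V) : Set C(X, ℝ) :=
  {f | ∀ x y : X, ∀ a b : ℝ, 0 ≤ a → 0 ≤ b →
    a * f x - b * f y ≤ ‖a • (x : V) - b • (y : V)‖}

noncomputable def d1 {X : Set V} (u v : ProbabilityMeasure X) : ℝ :=
  sSup ((fun f => pairing u f - pairing v f) '' D1 X)

/-- `D₂ = {(f,g) : ∀ x,y ∈ X, ∀ a,b ≥ 0, a·f(x) + b·g(y) ≤ ‖a·x − b·y‖}`. -/
def D2 (X : Set V) : Set (C(X, ℝ) × C(X, ℝ)) :=
  {fg | ∀ x y : X, ∀ a b : ℝ, 0 ≤ a → 0 ≤ b →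
    a * fg.1 x + b * fg.2 y ≤ ‖a • (x : V) - b • (y : V)‖}

noncomputable def d2 {X : Set V} (u v : ProbabilityMeasure X) : ℝ :=
  sSup ((fun fg => pairing u fg.1 + pairing v fg.2) '' D2 X)

/-- `D₂^ε`, where `a, b` now range over `[0,1]`. -/
def D2eps (X : Set V) (ε : ℝ) : Set (C(X, ℝ) × C(X, ℝ)) :=
  {fg | ∀ x y : X, ∀ a b : ℝ, a ∈ Icc (0:ℝ) 1 → b ∈ Icc (0:ℝ) 1 →
    a * fg.1 x + b * fg.2 y ≤ ε + ‖a • (x : V) - b • (y : V)‖}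

noncomputable def d2eps {X : Set V} (ε : ℝ) (u v : ProbabilityMeasure X) : ℝ :=
  sSup ((fun fg => pairing u fg.1 + pairing v fg.2) '' D2eps X ε)

noncomputable def d2plus {X : Set V} (u v : ProbabilityMeasure X) : ℝ :=
  sInf ((fun ε => d2eps ε u v) '' Ioi (0:ℝ))

/-- `M₃(u,v)`: finite positive measures `γ` on `X²×[0,1]²` whose suitably weighted
marginals are `u` and `v`. -/
def M3 {X : Set V} (u v : ProbabilityMeasure X) :
    Set (Measure (X × X × Icc (0:ℝ) 1 × Icc (0:ℝ) 1)) :=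
  {γ | IsFiniteMeasure γ ∧ ∀ f : C(X, ℝ),
    (∫ p, (p.2.2.1 : ℝ) * f p.1 ∂γ = pairing u f) ∧
    (∫ p, (p.2.2.2 : ℝ) * f p.2.1 ∂γ = pairing v f)}

noncomputable def d3 {X : Set V} (u v : ProbabilityMeasure X) : ℝ :=
  sInf ((fun γ => ∫ p, ‖(p.2.2.1 : ℝ) • (p.1 : V) - (p.2.2.2 : ℝ) • ((p.2.1 : X) : V)‖ ∂γ) ''
    M3 u v)

end Stmt0

open Filter
open scoped NNReal Topology

/-!
The chain `d₂ ≤ d₂⁺ ≤ d₃ ≤ d₂` is linear programming duality. The middle inequality is weak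
duality: integrating the constraint of `D₂^ε` against a plan `γ` costs an error `ε γ(1)`, which
vanishes as `ε → 0`. For the last one, homogeneity allows the constraints of `D₂` to be imposed only
for `λ + μ = 1`, where `λ f(x) + μ g(y)` takes every constant value; so the Riesz extension theorem
turns the supremum `d₂` into a positive functional on a space `C(K)`, hence into a plan of cost
`d₂`.

For `d₂ ≤ d₁`, the infimal convolution of the norm with the homogeneous extension of `-g` is a
positively homogeneous `1`-Lipschitz function that lies between `f` and `-g` whenever
`(f, g) ∈ D₂`; its restriction to `X` belongs to `D₁`.
-/

section OrderedLinearProgramming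

variable {E W : Type*} [AddCommGroup E] [Module ℝ E]
  [AddCommGroup W] [PartialOrder W] [IsOrderedAddMonoid W] [Module ℝ W] [PosSMulMono ℝ W]

theorem exists_positiveLinearMap_comp_eq (A : E →ₗ[ℝ] W) (l : E →ₗ[ℝ] ℝ)
    (hA : ∀ w, ∃ e, w ≤ A e) (hl : ∀ e, 0 ≤ A e → 0 ≤ l e) :
    ∃ L : W →ₚ[ℝ] ℝ, ∀ e, L (A e) = l e := by
  obtain ⟨M, rfl⟩ : l ∈ LinearMap.range A.dualMap := by
    rw [LinearMap.range_dualMap_eq_dualAnnihilator_ker, Submodule.mem_dualAnnihilator]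
    intro e he
    rw [LinearMap.mem_ker] at he
    have h_neg : 0 ≤ l (-e) := hl (-e) (by rw [map_neg, he, neg_zero])
    rw [map_neg] at h_neg
    exact le_antisymm (neg_nonneg.1 h_neg) (hl e he.ge)
  obtain ⟨L, hLM, hL⟩ :=
    riesz_extension (PointedCone.positive ℝ W) (M.toPMap (LinearMap.range A))
      (by rintro ⟨_, e, rfl⟩ he; exact hl e he)
      (fun w ↦ by
        obtain ⟨e, he⟩ := hA (-w)
        exact ⟨⟨A e, e, rfl⟩, neg_le_iff_add_nonneg.1 he⟩)
  exact ⟨PositiveLinearMap.mk₀ L hL, fun e ↦ hLM ⟨A e, e, rfl⟩⟩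

theorem nonneg_of_bddAbove_image_le {A : E →ₗ[ℝ] W} {l : E →ₗ[ℝ] ℝ} {c : W}
    (hne : {e | A e ≤ c}.Nonempty) (hbdd : BddAbove (l '' {e | A e ≤ c}))
    {e : E} (he : 0 ≤ A e) : 0 ≤ l e := by
  obtain ⟨e₀, he₀⟩ := hne
  obtain ⟨B, hB⟩ := hbdd
  by_contra! h_neg
  obtain ⟨n, hn⟩ := exists_nat_gt ((B - l e₀) / -l e)
  have h_mem : A (e₀ - (n : ℝ) • e) ≤ c := by
    rw [map_sub, map_smul]
    exact (sub_le_self _ (smul_nonneg n.cast_nonneg he)).trans he₀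
  have h_le : l (e₀ - (n : ℝ) • e) ≤ B := hB ⟨_, h_mem, rfl⟩
  rw [map_sub, map_smul, smul_eq_mul] at h_le
  rw [div_lt_iff₀ (neg_pos.2 h_neg)] at hn
  linarith

theorem nonneg_add_mul_of_isLUB {A : E →ₗ[ℝ] W} {l : E →ₗ[ℝ] ℝ} {c : W} {S : ℝ}
    (hS : IsLUB (l '' {e | A e ≤ c}) S) {e : E} {t : ℝ} (h : 0 ≤ A e + t • c) :
    0 ≤ l e + t * S := by
  have h_recession : ∀ {e'}, 0 ≤ A e' → 0 ≤ l e' :=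
    nonneg_of_bddAbove_image_le hS.nonempty.of_image ⟨S, hS.1⟩
  rcases lt_trichotomy t 0 with ht | rfl | ht
  · have h_dominates : c ≤ A ((-t)⁻¹ • e) := by
      rw [map_smul, le_inv_smul_iff_of_pos (neg_pos.2 ht), neg_smul]
      exact neg_le_iff_add_nonneg.2 h
    have h_upper : S ≤ l ((-t)⁻¹ • e) := hS.2 <| by
      rintro _ ⟨e', he', rfl⟩
      have h_diff : 0 ≤ A ((-t)⁻¹ • e - e') := by
        rw [map_sub]
        exact sub_nonneg.2 (he'.trans h_dominates)
      rw [← sub_nonneg, ← map_sub]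
      exact h_recession h_diff
    rw [map_smul, smul_eq_mul, le_inv_mul_iff₀ (neg_pos.2 ht)] at h_upper
    linarith
  · simpa using h_recession (by simpa using h)
  · have h_mem : A (-(t⁻¹ • e)) ≤ c := by
      rw [map_neg, map_smul, ← smul_neg, inv_smul_le_iff_of_pos ht]
      exact neg_le_iff_add_nonneg'.2 h
    have h_le : l (-(t⁻¹ • e)) ≤ S := hS.1 ⟨_, h_mem, rfl⟩
    rw [map_neg, map_smul, smul_eq_mul, neg_le, le_inv_mul_iff₀ ht] at h_le
    linarith

theorem exists_positiveLinearMap_comp_eq_and_eq_of_isLUB (A : E →ₗ[ℝ] W) (l : E →ₗ[ℝ] ℝ)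
    (hA : ∀ w, ∃ e, w ≤ A e) {c : W} {S : ℝ} (hS : IsLUB (l '' {e | A e ≤ c}) S) :
    ∃ L : W →ₚ[ℝ] ℝ, (∀ e, L (A e) = l e) ∧ L c = S := by
  obtain ⟨L, hL⟩ := exists_positiveLinearMap_comp_eq
    (A.coprod (LinearMap.toSpanSingleton ℝ W c)) (l.coprod (LinearMap.toSpanSingleton ℝ ℝ S))
    (fun w ↦ (hA w).imp' (·, 0) fun e he ↦ by simpa using he)
    (fun ⟨e, t⟩ h ↦ nonneg_add_mul_of_isLUB hS h)
  exact ⟨L, fun e ↦ by simpa using hL (e, 0), by simpa using hL (0, 1)⟩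

end OrderedLinearProgramming

section ContinuousMapIntegration

variable {K : Type*} [TopologicalSpace K] [CompactSpace K] [MeasurableSpace K]

theorem integrable_continuousMap [OpensMeasurableSpace K] (γ : Measure K)
    [IsFiniteMeasureOnCompacts γ] (φ : C(K, ℝ)) : Integrable φ γ :=
  φ.continuous.integrable_of_hasCompactSupport (.of_compactSpace φ)

theorem exists_isFiniteMeasure_integral_eq [T2Space K] [BorelSpace K] (L : C(K, ℝ) →ₚ[ℝ] ℝ) :
    ∃ γ : Measure K, IsFiniteMeasure γ ∧ ∀ φ : C(K, ℝ), ∫ k, φ k ∂γ = L φ := by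
  let Λ : CompactlySupportedContinuousMap K ℝ →ₚ[ℝ] ℝ :=
    { toFun := fun f ↦ L f.toContinuousMap
      map_add' := fun f g ↦ map_add L f.toContinuousMap g.toContinuousMap
      map_smul' := fun r f ↦ map_smul L r f.toContinuousMap
      monotone' := fun _ _ h ↦ OrderHomClass.mono L h }
  exact ⟨RealRMK.rieszMeasure Λ, inferInstance, fun φ ↦
    RealRMK.integral_rieszMeasure Λ (CompactlySupportedContinuousMap.continuousMapEquiv φ)⟩

end ContinuousMapIntegration

namespace Stmt0

section ConicEnvelope

variable {V : Type*} [NormedAddCommGroup V] [NormedSpace ℝ V] {X : Set V}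

/-- The infimal convolution `w ↦ inf {‖w - b • y‖ - b * g y | y ∈ X, b ≥ 0}` of the norm with the
positively homogeneous extension of `-g`. When `X` is nonempty and `g y ≤ ‖y‖` on it, this is the
largest positively homogeneous `1`-Lipschitz function on `V` lying below `-g` on `X`. The infimum
has the junk value `0` if `X` is empty or if the expression is not bounded below. -/
noncomputable def conicEnvelope (g : X → ℝ) (w : V) : ℝ :=
  ⨅ p : X × ℝ≥0, (‖w - p.2 • (p.1 : V)‖ - p.2 * g p.1)

theorem neg_norm_le_norm_sub_smul_sub {g : X → ℝ} (hg : ∀ y : X, g y ≤ ‖(y : V)‖) (w : V)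
    (p : X × ℝ≥0) : -‖w‖ ≤ ‖w - p.2 • (p.1 : V)‖ - p.2 * g p.1 := by
  have h_norm : ‖p.2 • (p.1 : V)‖ = p.2 * ‖(p.1 : V)‖ := norm_smul_of_nonneg p.2.2 (p.1 : V)
  have h_triangle : ‖p.2 • (p.1 : V)‖ - ‖w‖ ≤ ‖w - p.2 • (p.1 : V)‖ := by
    rw [norm_sub_rev]
    exact norm_sub_norm_le _ _
  have h_mul : p.2 * g p.1 ≤ p.2 * ‖(p.1 : V)‖ := mul_le_mul_of_nonneg_left (hg p.1) p.2.2
  linarith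

theorem conicEnvelope_le {g : X → ℝ} (hg : ∀ y : X, g y ≤ ‖(y : V)‖) (w : V) (y : X) (b : ℝ≥0) :
    conicEnvelope g w ≤ ‖w - b • (y : V)‖ - b * g y :=
  ciInf_le ⟨-‖w‖, forall_mem_range.2 (neg_norm_le_norm_sub_smul_sub hg w)⟩ (y, b)

theorem conicEnvelope_le_add_norm_sub [Nonempty X] {g : X → ℝ} (hg : ∀ y : X, g y ≤ ‖(y : V)‖)
    (w z : V) : conicEnvelope g w ≤ conicEnvelope g z + ‖w - z‖ := by
  rw [← sub_le_iff_le_add]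
  refine le_ciInf fun ⟨y, b⟩ ↦ ?_
  have h_le := conicEnvelope_le hg w y b
  have h_triangle := norm_sub_le_norm_sub_add_norm_sub w z (b • (y : V))
  linarith

theorem conicEnvelope_zero [Nonempty X] {g : X → ℝ} (hg : ∀ y : X, g y ≤ ‖(y : V)‖) :
    conicEnvelope g 0 = 0 := by
  refine le_antisymm ?_ (le_ciInf fun p ↦ ?_)
  · simpa using conicEnvelope_le hg 0 (Classical.arbitrary X) 0
  · simpa using neg_norm_le_norm_sub_smul_sub hg 0 p

theorem conicEnvelope_smul [Nonempty X] {g : X → ℝ} (hg : ∀ y : X, g y ≤ ‖(y : V)‖) (a : ℝ≥0)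
    (w : V) : conicEnvelope g (a • w) = a * conicEnvelope g w := by
  rcases eq_or_ne a 0 with rfl | ha
  · simp [conicEnvelope_zero hg]
  rw [conicEnvelope, conicEnvelope, Real.mul_iInf_of_nonneg a.coe_nonneg]
  refine (((Equiv.refl X).prodCongr (Equiv.mulLeft₀ a ha)).iInf_congr fun ⟨y, b⟩ ↦ ?_).symm
  have h_norm : ‖a • w - (a * b) • (y : V)‖ = a * ‖w - b • (y : V)‖ := by
    rw [mul_smul, ← smul_sub]
    exact norm_smul_of_nonneg a.2 (w - b • (y : V))
  change ‖a • w - (a * b) • (y : V)‖ - (a * b : ℝ≥0) * g y = a * (‖w - b • (y : V)‖ - b * g y)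
  rw [h_norm, NNReal.coe_mul]
  ring

theorem exists_mem_D1_between [Nonempty X] {f g : C(X, ℝ)} (hfg : (f, g) ∈ D2 X) :
    ∃ k ∈ D1 X, f ≤ k ∧ k ≤ -g := by
  have hg : ∀ y : X, g y ≤ ‖(y : V)‖ := fun y ↦ by simpa using hfg y y 0 1 le_rfl zero_le_one
  have h_lipschitz : LipschitzWith 1 (conicEnvelope g) := .of_le_add fun w z ↦ by
    rw [dist_eq_norm]
    exact conicEnvelope_le_add_norm_sub hg w z
  refine ⟨⟨fun x ↦ conicEnvelope g x, h_lipschitz.continuous.comp continuous_subtype_val⟩,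
    fun x y a b ha hb ↦ ?_, fun x ↦ le_ciInf fun ⟨y, b⟩ ↦ ?_, fun x ↦ ?_⟩
  · lift a to ℝ≥0 using ha
    lift b to ℝ≥0 using hb
    have h_le := conicEnvelope_le_add_norm_sub hg (a • (x : V)) (b • (y : V))
    rw [conicEnvelope_smul hg, conicEnvelope_smul hg] at h_le
    exact sub_le_iff_le_add'.2 h_le
  · have h_le := hfg x y 1 b zero_le_one b.2
    rw [one_mul, one_smul] at h_le
    exact le_sub_iff_add_le.2 h_le
  · simpa using conicEnvelope_le hg x x 1

end ConicEnvelope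

section DualConstraints

variable {V : Type*} [NormedAddCommGroup V] [NormedSpace ℝ V] {X : Set V}

theorem D2_subset_D2eps {ε : ℝ} (hε : 0 ≤ ε) : D2 X ⊆ D2eps X ε :=
  fun _ h x y a b ha hb ↦ (h x y a b ha.1 hb.1).trans (le_add_of_nonneg_left hε)

theorem zero_mem_D2 : (0 : C(X, ℝ) × C(X, ℝ)) ∈ D2 X :=
  fun x y a b _ _ ↦ by simp

theorem prod_neg_mem_D2 {f : C(X, ℝ)} (hf : f ∈ D1 X) : (f, -f) ∈ D2 X :=
  fun x y a b ha hb ↦ by simpa [sub_eq_add_neg] using hf x y a b ha hb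

/-- The linear map sending `(f, g)` to the function `λ f(x) + μ g(y)` of `(x, y, λ, μ)`. -/
def weightedSum (X : Set V) :
    C(X, ℝ) × C(X, ℝ) →ₗ[ℝ] C(X × X × Icc (0 : ℝ) 1 × Icc (0 : ℝ) 1, ℝ) where
  toFun fg := ⟨fun p ↦ p.2.2.1 * fg.1 p.1 + p.2.2.2 * fg.2 p.2.1, by fun_prop⟩
  map_add' fg fg' := by ext p; simp; ring
  map_smul' r fg := by ext p; simp; ring

/-- The transport cost `‖λ • x - μ • y‖` of `(x, y, λ, μ)`. -/
def cost (X : Set V) : C(X × X × Icc (0 : ℝ) 1 × Icc (0 : ℝ) 1, ℝ) where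
  toFun p := ‖(p.2.2.1 : ℝ) • (p.1 : V) - (p.2.2.2 : ℝ) • (p.2.1 : V)‖

/-- The embedding `(x, y, t) ↦ (x, y, t, 1 - t)`. By homogeneity the constraints defining `D2` need
only be imposed on its image, where the weights add up to `1`. -/
def normalizedWeights (X : Set V) :
    C(X × X × Icc (0 : ℝ) 1, X × X × Icc (0 : ℝ) 1 × Icc (0 : ℝ) 1) where
  toFun p := (p.1, p.2.1, p.2.2, unitInterval.symm p.2.2)

theorem mem_D2_iff_normalizedWeights {fg : C(X, ℝ) × C(X, ℝ)} :
    fg ∈ D2 X ↔ (weightedSum X fg).comp (normalizedWeights X) ≤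
      (cost X).comp (normalizedWeights X) := by
  refine ⟨fun h p ↦ h p.1 p.2.1 p.2.2 (1 - p.2.2) p.2.2.2.1 (sub_nonneg.2 p.2.2.2.2),
    fun h x y a b ha hb ↦ ?_⟩
  rcases (add_nonneg ha hb).eq_or_lt with h_zero | h_pos
  · obtain ⟨rfl, rfl⟩ : a = 0 ∧ b = 0 := (add_eq_zero_iff_of_nonneg ha hb).1 h_zero.symm
    simp
  have ha' : (a + b) * (a / (a + b)) = a := mul_div_cancel₀ a h_pos.ne'
  have hb' : (a + b) * (1 - a / (a + b)) = b := by rw [mul_sub, ha']; ring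
  have h_mem : a / (a + b) ∈ Icc (0 : ℝ) 1 :=
    ⟨div_nonneg ha h_pos.le, div_le_one_of_le₀ (le_add_of_nonneg_right hb) h_pos.le⟩
  have h_le : a / (a + b) * fg.1 x + (1 - a / (a + b)) * fg.2 y ≤
      ‖(a / (a + b)) • (x : V) - (1 - a / (a + b)) • (y : V)‖ := h (x, y, ⟨a / (a + b), h_mem⟩)
  calc a * fg.1 x + b * fg.2 y
      = (a + b) * (a / (a + b) * fg.1 x + (1 - a / (a + b)) * fg.2 y) := by
        rw [mul_add, ← mul_assoc, ← mul_assoc, ha', hb']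
    _ ≤ (a + b) * ‖(a / (a + b)) • (x : V) - (1 - a / (a + b)) • (y : V)‖ := by gcongr
    _ = ‖a • (x : V) - b • (y : V)‖ := by
        rw [← norm_smul_of_nonneg h_pos.le, smul_sub, smul_smul, smul_smul, ha', hb']

end DualConstraints

variable {V : Type*} [NormedAddCommGroup V] [MeasurableSpace V] [BorelSpace V] {X : Set V}
  [CompactSpace X]

theorem pairing_mono (u : ProbabilityMeasure X) {f g : C(X, ℝ)} (h : f ≤ g) :
    pairing u f ≤ pairing u g :=
  integral_mono (integrable_continuousMap _ f) (integrable_continuousMap _ g) h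

/-- The objective `(f, g) ↦ u(f) + v(g)` maximised in `d2` and `d2eps`. -/
noncomputable def dualObjective (u v : ProbabilityMeasure X) : C(X, ℝ) × C(X, ℝ) →ₗ[ℝ] ℝ where
  toFun fg := pairing u fg.1 + pairing v fg.2
  map_add' fg fg' := by
    have h_add (w : ProbabilityMeasure X) (f g : C(X, ℝ)) :
        pairing w (f + g) = pairing w f + pairing w g :=
      integral_add (integrable_continuousMap _ f) (integrable_continuousMap _ g)
    rw [Prod.fst_add, Prod.snd_add, h_add, h_add]
    ring
  map_smul' r fg := by simp [pairing, integral_const_mul, mul_add]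

theorem dualObjective_apply (u v : ProbabilityMeasure X) (fg : C(X, ℝ) × C(X, ℝ)) :
    dualObjective u v fg = pairing u fg.1 + pairing v fg.2 :=
  rfl

theorem dualObjective_prod_neg (u v : ProbabilityMeasure X) (f : C(X, ℝ)) :
    dualObjective u v (f, -f) = pairing u f - pairing v f := by
  simp [dualObjective_apply, pairing, integral_neg, sub_eq_add_neg]

theorem dualObjective_mono (u v : ProbabilityMeasure X) : Monotone (dualObjective u v) :=
  fun _ _ h ↦ add_le_add (pairing_mono u h.1) (pairing_mono v h.2)

theorem mem_M3_iff {u v : ProbabilityMeasure X}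
    {γ : Measure (X × X × Icc (0 : ℝ) 1 × Icc (0 : ℝ) 1)} [IsFiniteMeasure γ] :
    γ ∈ M3 u v ↔ ∀ fg, ∫ p, weightedSum X fg p ∂γ = dualObjective u v fg := by
  refine ⟨fun h fg ↦ ?_, fun h ↦ ⟨inferInstance, fun f ↦ ⟨?_, ?_⟩⟩⟩
  · rw [dualObjective_apply, ← (h.2 fg.1).1, ← (h.2 fg.2).2]
    refine integral_add ?_ ?_
    · exact integrable_continuousMap γ ⟨fun p ↦ p.2.2.1 * fg.1 p.1, by fun_prop⟩
    · exact integrable_continuousMap γ ⟨fun p ↦ p.2.2.2 * fg.2 p.2.1, by fun_prop⟩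
  · simpa [weightedSum, dualObjective_apply, pairing] using h (f, 0)
  · simpa [weightedSum, dualObjective_apply, pairing] using h (0, f)

variable [NormedSpace ℝ V]

theorem bddAbove_dualObjective_D2eps (ε : ℝ) (u v : ProbabilityMeasure X) :
    BddAbove (dualObjective u v '' D2eps X ε) := by
  let h : C(X, ℝ) := ⟨fun x ↦ ε + ‖(x : V)‖, by fun_prop⟩
  refine (dualObjective_mono u v).map_bddAbove ⟨(h, h), fun fg hfg ↦ ⟨fun x ↦ ?_, fun x ↦ ?_⟩⟩
  · simpa [h] using hfg x x 1 0 (by simp) (by simp)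
  · simpa [h] using hfg x x 0 1 (by simp) (by simp)

theorem isLUB_d2 (u v : ProbabilityMeasure X) : IsLUB (dualObjective u v '' D2 X) (d2 u v) :=
  isLUB_csSup (image_nonempty.2 ⟨0, zero_mem_D2⟩)
    ((bddAbove_dualObjective_D2eps 0 u v).mono (image_mono (D2_subset_D2eps le_rfl)))

theorem d1_eq_d2 (u v : ProbabilityMeasure X) : d1 u v = d2 u v := by
  refine IsLUB.csSup_eq ⟨?_, fun B hB ↦ (isLUB_d2 u v).2 ?_⟩ ⟨_, 0, ?_, rfl⟩
  · rintro _ ⟨f, hf, rfl⟩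
    exact (isLUB_d2 u v).1 ⟨(f, -f), prod_neg_mem_D2 hf, dualObjective_prod_neg u v f⟩
  · rintro _ ⟨⟨f, g⟩, hfg, rfl⟩
    have : Nonempty X := u.nonempty
    obtain ⟨k, hk, hfk, hkg⟩ := exists_mem_D1_between hfg
    calc dualObjective u v (f, g)
        ≤ dualObjective u v (k, -k) := dualObjective_mono u v ⟨hfk, le_neg_of_le_neg hkg⟩
      _ = pairing u k - pairing v k := dualObjective_prod_neg u v k
      _ ≤ B := hB ⟨k, hk, rfl⟩
  · exact fun x y a b _ _ ↦ by simp

theorem d2_le_d2eps {ε : ℝ} (hε : 0 ≤ ε) (u v : ProbabilityMeasure X) : d2 u v ≤ d2eps ε u v :=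
  csSup_le_csSup (bddAbove_dualObjective_D2eps ε u v) (isLUB_d2 u v).nonempty
    (image_mono (D2_subset_D2eps hε))

theorem d2_le_d2plus (u v : ProbabilityMeasure X) : d2 u v ≤ d2plus u v :=
  le_csInf (nonempty_Ioi.image _) (forall_mem_image.2 fun _ hε ↦ d2_le_d2eps (le_of_lt hε) u v)

theorem dualObjective_le_of_mem_D2eps_of_mem_M3 {ε : ℝ} {u v : ProbabilityMeasure X}
    {fg : C(X, ℝ) × C(X, ℝ)} (hfg : fg ∈ D2eps X ε)
    {γ : Measure (X × X × Icc (0 : ℝ) 1 × Icc (0 : ℝ) 1)} (hγ : γ ∈ M3 u v) :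
    dualObjective u v fg ≤ ε * γ.real univ + ∫ p, cost X p ∂γ := by
  have := hγ.1
  calc dualObjective u v fg
      = ∫ p, weightedSum X fg p ∂γ := (mem_M3_iff.1 hγ fg).symm
    _ ≤ ∫ p, (ε + cost X p) ∂γ :=
        integral_mono (integrable_continuousMap γ _)
          ((integrable_const ε).add (integrable_continuousMap γ _))
          fun p ↦ hfg p.1 p.2.1 p.2.2.1 p.2.2.2 p.2.2.1.2 p.2.2.2.2
    _ = ε * γ.real univ + ∫ p, cost X p ∂γ := by
        rw [integral_add (integrable_const ε) (integrable_continuousMap γ _), integral_const,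
          smul_eq_mul, mul_comm]

theorem d2plus_le_integral_cost {u v : ProbabilityMeasure X}
    {γ : Measure (X × X × Icc (0 : ℝ) 1 × Icc (0 : ℝ) 1)} (hγ : γ ∈ M3 u v) :
    d2plus u v ≤ ∫ p, cost X p ∂γ := by
  have h_bdd : BddBelow ((fun ε ↦ d2eps ε u v) '' Ioi (0 : ℝ)) :=
    ⟨d2 u v, forall_mem_image.2 fun _ hε ↦ d2_le_d2eps (le_of_lt hε) u v⟩
  have h_le (ε : ℝ) (hε : ε ∈ Ioi 0) : d2plus u v ≤ ε * γ.real univ + ∫ p, cost X p ∂γ :=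
    calc d2plus u v ≤ d2eps ε u v := csInf_le h_bdd ⟨ε, hε, rfl⟩
      _ ≤ ε * γ.real univ + ∫ p, cost X p ∂γ :=
        csSup_le (image_nonempty.2 ⟨0, D2_subset_D2eps (le_of_lt hε) zero_mem_D2⟩)
          (forall_mem_image.2 fun _ hfg ↦ dualObjective_le_of_mem_D2eps_of_mem_M3 hfg hγ)
  have h_lim : Tendsto (fun ε : ℝ ↦ ε * γ.real univ + ∫ p, cost X p ∂γ) (𝓝[>] 0)
      (𝓝 (0 * γ.real univ + ∫ p, cost X p ∂γ)) :=
    (Continuous.tendsto (by fun_prop) 0).mono_left nhdsWithin_le_nhds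
  rw [zero_mul, zero_add] at h_lim
  exact ge_of_tendsto h_lim (eventually_mem_nhdsWithin.mono h_le)

theorem exists_mem_M3_integral_cost_eq_d2 (u v : ProbabilityMeasure X) :
    ∃ γ ∈ M3 u v, ∫ p, cost X p ∂γ = d2 u v := by
  let restrict : C(X × X × Icc (0 : ℝ) 1 × Icc (0 : ℝ) 1, ℝ) →ₗ[ℝ] C(X × X × Icc (0 : ℝ) 1, ℝ) :=
    (ContinuousMap.compRightAlgHom ℝ ℝ (normalizedWeights X)).toLinearMap
  have h_dominate (φ : C(X × X × Icc (0 : ℝ) 1, ℝ)) :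
      ∃ fg, φ ≤ (restrict ∘ₗ weightedSum X) fg := by
    refine ⟨(.const X ‖φ‖, .const X ‖φ‖), fun p ↦ ?_⟩
    calc φ p ≤ ‖φ‖ := (le_abs_self _).trans (φ.norm_coe_le_norm p)
      _ = p.2.2 * ‖φ‖ + (1 - p.2.2) * ‖φ‖ := by ring
  have h_sup : IsLUB (dualObjective u v ''
      {fg | (restrict ∘ₗ weightedSum X) fg ≤ restrict (cost X)}) (d2 u v) := by
    convert isLUB_d2 u v using 2
    ext fg
    exact mem_D2_iff_normalizedWeights.symm
  obtain ⟨L, hL_sum, hL_cost⟩ :=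
    exists_positiveLinearMap_comp_eq_and_eq_of_isLUB _ _ h_dominate h_sup
  obtain ⟨γ, hγ, hγL⟩ := exists_isFiniteMeasure_integral_eq L
  have h_map (φ : C(X × X × Icc (0 : ℝ) 1 × Icc (0 : ℝ) 1, ℝ)) :
      ∫ p, φ p ∂(γ.map (normalizedWeights X)) = L (restrict φ) := by
    rw [integral_map (by fun_prop) (by fun_prop)]
    exact hγL (restrict φ)
  exact ⟨γ.map (normalizedWeights X), mem_M3_iff.2 fun fg ↦ (h_map _).trans (hL_sum fg),
    (h_map _).trans hL_cost⟩

theorem d2plus_le_d3 (u v : ProbabilityMeasure X) : d2plus u v ≤ d3 u v := by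
  obtain ⟨γ, hγ, -⟩ := exists_mem_M3_integral_cost_eq_d2 u v
  exact le_csInf ⟨_, γ, hγ, rfl⟩ (forall_mem_image.2 fun _ ↦ d2plus_le_integral_cost)

theorem d3_le_d2 (u v : ProbabilityMeasure X) : d3 u v ≤ d2 u v := by
  obtain ⟨γ, hγ, h_eq⟩ := exists_mem_M3_integral_cost_eq_d2 u v
  exact csInf_le ⟨0, forall_mem_image.2 fun _ _ ↦ integral_nonneg fun _ ↦ norm_nonneg _⟩
    ⟨γ, hγ, h_eq⟩

end Stmt0

/-- **Theorem 1 (Renault–Venel).** For all Borel probability measures `u, v` on a compact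
subset `X` of a real normed vector space, `d₁(u,v) = d₂(u,v) = d₂⁺(u,v) = d₃(u,v)`. -/
theorem stmt0 {V : Type*} [NormedAddCommGroup V] [NormedSpace ℝ V]
    [MeasurableSpace V] [BorelSpace V] (X : Set V) (hX : IsCompact X)
    (u v : ProbabilityMeasure X) :
    Stmt0.d1 u v = Stmt0.d2 u v ∧ Stmt0.d2 u v = Stmt0.d2plus u v ∧
      Stmt0.d2plus u v = Stmt0.d3 u v := by
  have : CompactSpace X := isCompact_iff_compactSpace.1 hX
  have h₁₂ : Stmt0.d1 u v = Stmt0.d2 u v := Stmt0.d1_eq_d2 u v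
  have h₂_plus : Stmt0.d2 u v ≤ Stmt0.d2plus u v := Stmt0.d2_le_d2plus u v
  have h_plus₃ : Stmt0.d2plus u v ≤ Stmt0.d3 u v := Stmt0.d2plus_le_d3 u v
  have h₃₂ : Stmt0.d3 u v ≤ Stmt0.d2 u v := Stmt0.d3_le_d2 u v
  exact ⟨h₁₂, h₂_plus.antisymm (h_plus₃.trans h₃₂), h_plus₃.antisymm (h₃₂.trans h₂_plus)⟩
end

section
/- Fix ε > 0 and f ∈ C(X,ℝ) such that a·f(x) ≤ ε + a·‖x‖ for all x ∈ X and a ∈ [0,1]. Define f̂ : X → ℝ by f̂(y) = inf over a ∈ [0,1], b ∈ (0,1], x ∈ X of (1/b)·(ε + ‖a·x − b·y‖ − a·f(x)). Then: (i) for each y ∈ X, −‖y‖ ≤ f̂(y) ≤ −f(y) + ε; (ii) f̂ is 1-Lipschitz (hence continuous); (iii) for all x, y ∈ X and all a, b ∈ [0,1], a·f̂(x) − b·f̂(y) ≤ a·ε + ‖b·y − a·x‖. -/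
open Set

/-
For fixed `s = a / b`, the constraints `a, b ≤ 1` say that `1 / b ≥ max 1 s`. Minimising over `b`
therefore turns the definition of `f̂` into the one-parameter infimum
`f̂(y) = inf_{s ≥ 0, x} (max(1, s)·ε + ‖s·x − y‖ − s·f(x))`.
Every term is 1-Lipschitz in `y`, is at least `−‖y‖` by the bound on `f`, and equals `ε − f(y)` for
`s = 1`, `x = y`. The last inequality compares the term with parameter `s` at `y` to the term with
parameter `b·s/a` at `x`, by the triangle inequality and `max(a, b·s) ≤ a + b·max(1, s)`.
-/

section ScalingEnvelope

open scoped NNReal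

variable {V ι : Type*} [SeminormedAddCommGroup V] [NormedSpace ℝ V]
  {ε : ℝ} {u : ι → V} {f : ι → ℝ}

/-- The cost of approximating `y` by the multiple `s • u i`, with reward `f i` per unit of `s`. The
factor `max 1 s` is the least value of `1 / b` over `b ∈ (0, 1]` with `s * b ≤ 1`. -/
def scalingCost (ε : ℝ) (u : ι → V) (f : ι → ℝ) (s : ℝ) (i : ι) (y : V) : ℝ :=
  max 1 s * ε + ‖s • u i - y‖ - s * f i

/-- The transform `f̂` as an infimum over the single ratio `s = a / b ≥ 0` and the index `i`. It is
defined on all of `V`, for a function `f` on an arbitrary family of points `u` of `V`. -/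
noncomputable def scalingEnvelope (ε : ℝ) (u : ι → V) (f : ι → ℝ) (y : V) : ℝ :=
  ⨅ p : ℝ≥0 × ι, scalingCost ε u f p.1 p.2 y

theorem neg_norm_le_scalingCost (hε : 0 ≤ ε) (hf : ∀ i, f i ≤ ε + ‖u i‖) {s : ℝ} (hs : 0 ≤ s)
    (i : ι) (y : V) : -‖y‖ ≤ scalingCost ε u f s i y := by
  have reward_le : s * f i ≤ s * ε + ‖s • u i‖ := by
    rw [norm_smul_of_nonneg hs, ← mul_add]
    gcongr
    exact hf i
  have penalty_ge : s * ε ≤ max 1 s * ε := by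
    gcongr
    exact le_max_right 1 s
  have triangle := norm_sub_norm_le (s • u i) y
  unfold scalingCost
  linarith

theorem scalingCost_le_add_dist (s : ℝ) (i : ι) (y z : V) :
    scalingCost ε u f s i y ≤ scalingCost ε u f s i z + dist y z := by
  have triangle := norm_sub_le_norm_sub_add_norm_sub (s • u i) z y
  rw [← dist_eq_norm z y, dist_comm z y] at triangle
  unfold scalingCost
  linarith

theorem mul_scalingCost_rescale_le (hε : 0 ≤ ε) {a b s : ℝ} (ha : 0 < a) (hb : 0 ≤ b) (i : ι)
    (x y : V) :
    a * scalingCost ε u f (b * s / a) i x ≤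
      a * ε + ‖b • y - a • x‖ + b * scalingCost ε u f s i y := by
  have cancel : a * (b * s / a) = b * s := mul_div_cancel₀ (b * s) ha.ne'
  have penalty_le : a * max 1 (b * s / a) ≤ a + b * max 1 s := by
    rw [mul_max_of_nonneg _ _ ha.le, mul_max_of_nonneg _ _ hb, cancel, mul_one, mul_one]
    exact max_le (le_add_of_nonneg_right (hb.trans (le_max_left _ _)))
      ((le_max_right _ _).trans (le_add_of_nonneg_left ha.le))
  have distance_le : a * ‖(b * s / a) • u i - x‖ ≤ b * ‖s • u i - y‖ + ‖b • y - a • x‖ :=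
    calc a * ‖(b * s / a) • u i - x‖
        = ‖b • (s • u i - y) + (b • y - a • x)‖ := by
          rw [← norm_smul_of_nonneg ha.le, smul_sub, smul_smul, cancel, smul_sub, smul_smul,
            sub_add_sub_cancel]
      _ ≤ ‖b • (s • u i - y)‖ + ‖b • y - a • x‖ := norm_add_le _ _
      _ = b * ‖s • u i - y‖ + ‖b • y - a • x‖ := by rw [norm_smul_of_nonneg hb]
  calc a * scalingCost ε u f (b * s / a) i x
      = a * max 1 (b * s / a) * ε + a * ‖(b * s / a) • u i - x‖ - a * (b * s / a) * f i := by
        unfold scalingCost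
        ring
    _ ≤ (a + b * max 1 s) * ε + (b * ‖s • u i - y‖ + ‖b • y - a • x‖) - b * s * f i := by
        rw [cancel]
        gcongr
    _ = a * ε + ‖b • y - a • x‖ + b * scalingCost ε u f s i y := by
        unfold scalingCost
        ring

theorem scalingEnvelope_le_scalingCost (hε : 0 ≤ ε) (hf : ∀ i, f i ≤ ε + ‖u i‖) {s : ℝ}
    (hs : 0 ≤ s) (i : ι) (y : V) : scalingEnvelope ε u f y ≤ scalingCost ε u f s i y := by
  have bddBelow : BddBelow (range fun p : ℝ≥0 × ι ↦ scalingCost ε u f p.1 p.2 y) :=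
    ⟨-‖y‖, forall_mem_range.2 fun p ↦ neg_norm_le_scalingCost hε hf p.1.2 p.2 y⟩
  exact ciInf_le bddBelow (⟨s, hs⟩, i)

theorem scalingEnvelope_apply_le (hε : 0 ≤ ε) (hf : ∀ i, f i ≤ ε + ‖u i‖) (i : ι) :
    scalingEnvelope ε u f (u i) ≤ -f i + ε :=
  calc scalingEnvelope ε u f (u i) ≤ scalingCost ε u f 1 i (u i) :=
        scalingEnvelope_le_scalingCost hε hf zero_le_one i (u i)
    _ = -f i + ε := by
        simp only [scalingCost, max_self, one_mul, one_smul, sub_self, norm_zero]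
        ring

theorem neg_norm_le_scalingEnvelope [Nonempty ι] (hε : 0 ≤ ε) (hf : ∀ i, f i ≤ ε + ‖u i‖)
    (y : V) : -‖y‖ ≤ scalingEnvelope ε u f y :=
  le_ciInf fun p ↦ neg_norm_le_scalingCost hε hf p.1.2 p.2 y

theorem lipschitzWith_one_scalingEnvelope [Nonempty ι] (hε : 0 ≤ ε)
    (hf : ∀ i, f i ≤ ε + ‖u i‖) : LipschitzWith 1 (scalingEnvelope ε u f) := by
  refine .of_le_add fun y z ↦ sub_le_iff_le_add.1 <| le_ciInf fun p ↦ sub_le_iff_le_add.2 ?_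
  exact (scalingEnvelope_le_scalingCost hε hf p.1.2 p.2 y).trans
    (scalingCost_le_add_dist (p.1 : ℝ) p.2 y z)

theorem mul_scalingEnvelope_sub_le [Nonempty ι] (hε : 0 ≤ ε) (hf : ∀ i, f i ≤ ε + ‖u i‖)
    (x y : V) {a b : ℝ} (ha : 0 ≤ a) (hb : 0 ≤ b) :
    a * scalingEnvelope ε u f x - b * scalingEnvelope ε u f y ≤ a * ε + ‖b • y - a • x‖ := by
  obtain rfl | ha := ha.eq_or_lt
  · have lower := mul_le_mul_of_nonneg_left (neg_norm_le_scalingEnvelope hε hf y) hb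
    simp only [zero_mul, zero_smul, sub_zero, zero_sub, zero_add, norm_smul_of_nonneg hb]
    linarith
  · refine sub_le_comm.1 ?_
    calc a * scalingEnvelope ε u f x - (a * ε + ‖b • y - a • x‖)
        ≤ ⨅ p : ℝ≥0 × ι, b * scalingCost ε u f p.1 p.2 y := by
          refine le_ciInf fun p ↦ sub_le_iff_le_add'.2 ?_
          have ratio_nonneg : 0 ≤ b * p.1 / a := by positivity
          exact (mul_le_mul_of_nonneg_left
            (scalingEnvelope_le_scalingCost hε hf ratio_nonneg p.2 x) ha.le).trans
            (mul_scalingCost_rescale_le hε ha hb p.2 x y)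
      _ = b * scalingEnvelope ε u f y := (Real.mul_iInf_of_nonneg hb _).symm

theorem one_div_mul_add_norm_sub_eq {a b : ℝ} (hb : 0 < b) (i : ι) (y : V) :
    1 / b * (ε + ‖a • u i - b • y‖ - a * f i) =
      1 / b * ε + ‖(a / b) • u i - y‖ - a / b * f i := by
  have norm_eq : ‖a • u i - b • y‖ = b * ‖(a / b) • u i - y‖ := by
    rw [← norm_smul_of_nonneg hb.le, smul_sub, smul_smul, mul_div_cancel₀ a hb.ne']
  rw [norm_eq]
  field_simp

theorem scalingCost_div_le (hε : 0 ≤ ε) {a b : ℝ} (ha : a ≤ 1) (hb : b ∈ Ioc (0 : ℝ) 1) (i : ι)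
    (y : V) :
    scalingCost ε u f (a / b) i y ≤ 1 / b * (ε + ‖a • u i - b • y‖ - a * f i) := by
  rw [one_div_mul_add_norm_sub_eq hb.1, scalingCost]
  gcongr
  exact max_le (one_le_one_div hb.1 hb.2) (div_le_div_of_nonneg_right ha hb.1.le)

theorem scalingCost_eq_one_div_mul (s : ℝ) (i : ι) (y : V) :
    scalingCost ε u f s i y =
      1 / (max 1 s)⁻¹ *
        (ε + ‖(s / max 1 s) • u i - (max 1 s)⁻¹ • y‖ - s / max 1 s * f i) := by
  have max_pos : 0 < max 1 s := zero_lt_one.trans_le (le_max_left 1 s)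
  rw [one_div_mul_add_norm_sub_eq (inv_pos.2 max_pos), one_div, inv_inv, div_inv_eq_mul,
    div_mul_cancel₀ s max_pos.ne', scalingCost]

theorem sInf_eq_scalingEnvelope (hε : 0 ≤ ε) (y : V) :
    sInf {r : ℝ | ∃ a ∈ Icc (0 : ℝ) 1, ∃ b ∈ Ioc (0 : ℝ) 1, ∃ i : ι,
      r = (1 / b) * (ε + ‖a • u i - b • y‖ - a * f i)} = scalingEnvelope ε u f y := by
  refine csInf_eq_csInf_of_forall_exists_le ?_ (forall_mem_range.2 ?_)
  · rintro _ ⟨a, ha, b, hb, i, rfl⟩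
    exact ⟨_, mem_range_self (⟨a / b, div_nonneg ha.1 hb.1.le⟩, i),
      scalingCost_div_le hε ha.2 hb i y⟩
  · rintro ⟨⟨s, hs⟩, i⟩
    have one_le_max : 1 ≤ max 1 s := le_max_left 1 s
    have max_pos : 0 < max 1 s := zero_lt_one.trans_le one_le_max
    exact ⟨_, ⟨s / max 1 s, ⟨by positivity, div_le_one_of_le₀ (le_max_right 1 s) max_pos.le⟩,
      (max 1 s)⁻¹, ⟨inv_pos.2 max_pos, inv_le_one_of_one_le₀ one_le_max⟩, i, rfl⟩,
      (scalingCost_eq_one_div_mul s i y).ge⟩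

theorem stmt1_general [Nonempty ι] (hε : 0 ≤ ε) (hf : ∀ i, f i ≤ ε + ‖u i‖) (fhat : V → ℝ)
    (hfhat : ∀ y, fhat y =
      sInf {r : ℝ | ∃ a ∈ Icc (0 : ℝ) 1, ∃ b ∈ Ioc (0 : ℝ) 1, ∃ i : ι,
        r = (1 / b) * (ε + ‖a • u i - b • y‖ - a * f i)}) :
    (∀ y, -‖y‖ ≤ fhat y) ∧ (∀ i, fhat (u i) ≤ -f i + ε) ∧ LipschitzWith 1 fhat ∧
    (∀ (x y : V) (a b : ℝ), 0 ≤ a → 0 ≤ b →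
      a * fhat x - b * fhat y ≤ a * ε + ‖b • y - a • x‖) := by
  obtain rfl : fhat = scalingEnvelope ε u f :=
    funext fun y ↦ (hfhat y).trans (sInf_eq_scalingEnvelope hε y)
  exact ⟨neg_norm_le_scalingEnvelope hε hf, scalingEnvelope_apply_le hε hf,
    lipschitzWith_one_scalingEnvelope hε hf,
    fun x y _ _ ha hb ↦ mul_scalingEnvelope_sub_le hε hf x y ha hb⟩

end ScalingEnvelope

/-- **Lemma 1 (Renault–Venel).** Let `X` be a compact subset of a real normed vector
space, `ε > 0`, and `f ∈ C(X,ℝ)` with `a·f(x) ≤ ε + a·‖x‖` for all `x ∈ X`, `a ∈ [0,1]`.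
Define `f̂(y) = inf_{a ∈ [0,1], b ∈ (0,1], x ∈ X} (1/b)·(ε + ‖a·x − b·y‖ − a·f(x))`. Then
`−‖y‖ ≤ f̂(y) ≤ −f(y) + ε` for each `y`, `f̂` is 1-Lipschitz, and for all `x, y ∈ X` and
`a, b ∈ [0,1]`, `a·f̂(x) − b·f̂(y) ≤ a·ε + ‖b·y − a·x‖`. -/
theorem stmt1 {V : Type*} [NormedAddCommGroup V] [NormedSpace ℝ V]
    (X : Set V) (hX : IsCompact X) (ε : ℝ) (hε : 0 < ε) (f : C(X, ℝ))
    (hf : ∀ (x : X) (a : ℝ), a ∈ Icc (0:ℝ) 1 → a * f x ≤ ε + a * ‖(x : V)‖)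
    (fhat : X → ℝ)
    (hfhat : ∀ y : X, fhat y =
      sInf {r : ℝ | ∃ a ∈ Icc (0:ℝ) 1, ∃ b ∈ Ioc (0:ℝ) 1, ∃ x : X,
        r = (1 / b) * (ε + ‖a • (x : V) - b • (y : V)‖ - a * f x)}) :
    (∀ y : X, -‖(y : V)‖ ≤ fhat y ∧ fhat y ≤ -f y + ε) ∧
    LipschitzWith 1 fhat ∧
    (∀ (x y : X) (a b : ℝ), a ∈ Icc (0:ℝ) 1 → b ∈ Icc (0:ℝ) 1 →
      a * fhat x - b * fhat y ≤ a * ε + ‖b • (y : V) - a • (x : V)‖) := by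
  obtain _ | _ := isEmpty_or_nonempty X
  · exact ⟨isEmptyElim, .of_dist_le_mul isEmptyElim, isEmptyElim⟩
  · obtain ⟨lower, upper, lipschitz, scaled⟩ := stmt1_general (u := ((↑) : X → V)) hε.le
      (fun x ↦ by simpa only [one_mul] using hf x 1 ⟨zero_le_one, le_rfl⟩) _ fun _ ↦ rfl
    obtain rfl := funext hfhat
    exact ⟨fun y ↦ ⟨lower y, upper y⟩, fun y z ↦ lipschitz y z,
      fun x y a b ha hb ↦ scaled x y a b ha.1 hb.1⟩
end

section
/- For all Borel probability measures u and v on X, d_2^+(u,v) ≥ d_3(u,v). -/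
open MeasureTheory Set

namespace Stmt2

variable {V : Type*} [NormedAddCommGroup V] [NormedSpace ℝ V]
  [MeasurableSpace V] [BorelSpace V]

/-- The pairing `u(f) = ∫_X f du`. -/
noncomputable def pairing {X : Set V} (u : ProbabilityMeasure X) (f : C(X, ℝ)) : ℝ :=
  ∫ x, f x ∂(u : Measure X)

/-- `D₂^ε`, where `a, b` range over `[0,1]`. -/
def D2eps (X : Set V) (ε : ℝ) : Set (C(X, ℝ) × C(X, ℝ)) :=
  {fg | ∀ x y : X, ∀ a b : ℝ, a ∈ Icc (0:ℝ) 1 → b ∈ Icc (0:ℝ) 1 →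
    a * fg.1 x + b * fg.2 y ≤ ε + ‖a • (x : V) - b • (y : V)‖}

noncomputable def d2eps {X : Set V} (ε : ℝ) (u v : ProbabilityMeasure X) : ℝ :=
  sSup ((fun fg => pairing u fg.1 + pairing v fg.2) '' D2eps X ε)

noncomputable def d2plus {X : Set V} (u v : ProbabilityMeasure X) : ℝ :=
  sInf ((fun ε => d2eps ε u v) '' Ioi (0:ℝ))

/-- `M₃(u,v)`: finite positive measures `γ` on `X²×[0,1]²` whose suitably weighted
marginals are `u` and `v`. -/
def M3 {X : Set V} (u v : ProbabilityMeasure X) :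
    Set (Measure (X × X × Icc (0:ℝ) 1 × Icc (0:ℝ) 1)) :=
  {γ | IsFiniteMeasure γ ∧ ∀ f : C(X, ℝ),
    (∫ p, (p.2.2.1 : ℝ) * f p.1 ∂γ = pairing u f) ∧
    (∫ p, (p.2.2.2 : ℝ) * f p.2.1 ∂γ = pairing v f)}

noncomputable def d3 {X : Set V} (u v : ProbabilityMeasure X) : ℝ :=
  sInf ((fun γ => ∫ p, ‖(p.2.2.1 : ℝ) • (p.1 : V) - (p.2.2.2 : ℝ) • ((p.2.1 : X) : V)‖ ∂γ) ''
    M3 u v)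

end Stmt2

/-!
Fix `ε > 0`; it suffices to bound `d₃` by `d₂^ε`, its counterpart under linear programming duality.
In `C(X² × [0,1]², ℝ)` the function `ε + ‖a x - b y‖` is positive, hence an order unit by
compactness, and `d₂^ε(u, v)` bounds the functional `(f, g) ↦ u(f) + v(g)` wherever
`a f(x) + b g(y)` lies below this function. The M. Riesz extension theorem turns this bound into a
positive functional on the whole space, and the Riesz–Markov–Kakutani theorem represents it by a
measure. That measure belongs to `M₃(u, v)` and has cost at most `d₂^ε(u, v)`.
-/

open Filter Topology

namespace Stmt2

section OrderedVectorSpace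

variable {E M : Type*} [AddCommGroup E] [PartialOrder E] [IsOrderedAddMonoid E] [Module ℝ E]
  [AddCommGroup M] [Module ℝ M]

theorem exists_positiveLinearMap_apply_eq [PosSMulMono ℝ E] (T : M →ₗ[ℝ] E) (φ : M →ₗ[ℝ] ℝ)
    (hφ : ∀ m, 0 ≤ T m → 0 ≤ φ m) (hT : ∀ y, ∃ m, 0 ≤ T m + y) :
    ∃ L : E →ₚ[ℝ] ℝ, ∀ m, L (T m) = φ m := by
  -- Extending from `M × 0` inside `M × E`, rather than from `range T`, spares the check that `φ`
  -- factors through `T`.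
  let cone : PointedCone ℝ (M × E) :=
    (PointedCone.positive ℝ E).comap (T.coprod LinearMap.id)
  have mem_cone (m : M) (y : E) : (m, y) ∈ cone ↔ 0 ≤ T m + y := by simp [cone]
  let φ₀ : M × E →ₗ.[ℝ] ℝ :=
    (φ ∘ₗ LinearMap.fst ℝ M E).toPMap (LinearMap.ker (LinearMap.snd ℝ M E))
  obtain ⟨g, g_eq, g_nonneg⟩ := riesz_extension cone φ₀
    (by
      rintro ⟨⟨m, y⟩, rfl : y = 0⟩ hm
      exact hφ m (by simpa [mem_cone] using hm))
    (by
      rintro ⟨m, y⟩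
      obtain ⟨n, hn⟩ := hT (T m + y)
      exact ⟨⟨(n, 0), rfl⟩, by simpa [mem_cone, add_assoc] using hn⟩)
  have g_fst (m : M) : g (m, 0) = φ m := g_eq ⟨(m, 0), rfl⟩
  have g_graph_nonneg (m : M) : 0 ≤ g (m, -T m) := g_nonneg _ (by simp [mem_cone])
  refine ⟨.mk₀ (g ∘ₗ LinearMap.inr ℝ M E) fun y hy ↦ g_nonneg _ (by simpa [mem_cone]),
    fun m ↦ ?_⟩
  change g (0, T m) = φ m
  have g_inr_le : g (0, T m) ≤ φ m :=
    sub_nonneg.mp (by simpa [← g_fst, ← map_sub] using g_graph_nonneg m)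
  have le_g_inr : φ m ≤ g (0, T m) :=
    sub_nonneg.mp (by simpa [← g_fst, ← map_sub] using g_graph_nonneg (-m))
  exact g_inr_le.antisymm le_g_inr

theorem apply_le_mul_of_apply_le_smul [IsOrderedModule ℝ E] {w : E} (hw₀ : 0 ≤ w)
    {T : M →ₗ[ℝ] E} {φ : M →ₗ[ℝ] ℝ} {S : ℝ} (hφ : ∀ m, T m ≤ w → φ m ≤ S) {m : M} {t : ℝ}
    (ht : 0 ≤ t) (hm : T m ≤ t • w) : φ m ≤ t * S := by
  have le_mul_of_lt {c : ℝ} (hc : t < c) : φ m ≤ c * S := by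
    have hc₀ : 0 < c := ht.trans_lt hc
    have : T (c⁻¹ • m) ≤ w := by
      rw [map_smul, inv_smul_le_iff_of_pos hc₀]
      exact hm.trans (smul_le_smul_of_nonneg_right hc.le hw₀)
    simpa [inv_mul_le_iff₀ hc₀] using hφ _ this
  have : Tendsto (· * S) (𝓝[>] t) (𝓝 (t * S)) :=
    (continuous_mul_const S).continuousWithinAt
  exact ge_of_tendsto this (eventually_mem_nhdsWithin.mono fun _ ↦ le_mul_of_lt)

theorem exists_positiveLinearMap_apply_eq_and_le [IsOrderedModule ℝ E] {w : E} (hw₀ : 0 ≤ w)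
    (hw : ∀ y, ∃ t : ℝ, y ≤ t • w) (T : M →ₗ[ℝ] E) (φ : M →ₗ[ℝ] ℝ) {S : ℝ}
    (hφ : ∀ m, T m ≤ w → φ m ≤ S) :
    ∃ L : E →ₚ[ℝ] ℝ, (∀ m, L (T m) = φ m) ∧ L w ≤ S := by
  -- The extra coordinate is a slack variable: it encodes `L w ≤ S` as positivity of `(0, 1)`.
  let T' : M × ℝ →ₗ[ℝ] E × ℝ :=
    ((-T).coprod (LinearMap.toSpanSingleton ℝ E w)).prod (LinearMap.snd ℝ M ℝ)
  let φ' : M × ℝ →ₗ[ℝ] ℝ := (-φ).coprod (LinearMap.toSpanSingleton ℝ ℝ S)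
  have T'_apply (m : M) (t : ℝ) : T' (m, t) = (-T m + t • w, t) := rfl
  obtain ⟨L, hL⟩ := exists_positiveLinearMap_apply_eq T' φ'
    (by
      rintro ⟨m, t⟩ hm
      obtain ⟨hm, ht⟩ : T m ≤ t • w ∧ 0 ≤ t := by simpa [T'_apply, Prod.le_def] using hm
      simpa [φ'] using apply_le_mul_of_apply_le_smul hw₀ hφ ht hm)
    (by
      rintro ⟨y, r⟩
      obtain ⟨t, ht⟩ := hw (-y)
      have : -y ≤ max t (-r) • w :=
        ht.trans (smul_le_smul_of_nonneg_right (le_max_left _ _) hw₀)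
      refine ⟨(0, max t (-r)), ?_, ?_⟩
      · simpa [T'_apply] using neg_le_iff_add_nonneg.mp this
      · simpa [T'_apply] using neg_le_iff_add_nonneg.mp (le_max_right t (-r)))
  refine ⟨.mk₀ (L.toLinearMap ∘ₗ LinearMap.inl ℝ E ℝ) fun y hy ↦
    map_nonneg L (show 0 ≤ (y, (0 : ℝ)) from ⟨hy, le_rfl⟩), fun m ↦ ?_, ?_⟩
  · change L (T m, 0) = φ m
    simpa [T'_apply, φ'] using hL (-m, 0)
  · change L (w, 0) ≤ S
    have L_w_one : L (w, 1) = S := by simpa [T'_apply, φ'] using hL (0, 1)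
    exact L_w_one ▸ OrderHomClass.mono L (show (w, (0 : ℝ)) ≤ (w, 1) from ⟨le_rfl, zero_le_one⟩)

end OrderedVectorSpace

section CompactSpace

variable {K : Type*} [TopologicalSpace K] [CompactSpace K]

theorem exists_le_smul_of_forall_pos {w : C(K, ℝ)} (hw : ∀ k, 0 < w k) (f : C(K, ℝ)) :
    ∃ t : ℝ, f ≤ t • w := by
  have hcont : Continuous fun k ↦ f k / w k :=
    f.continuous.div w.continuous fun k ↦ (hw k).ne'
  obtain ⟨t, ht⟩ := (isCompact_range hcont).bddAbove
  exact ⟨t, fun k ↦ (div_le_iff₀ (hw k)).mp (ht (mem_range_self k))⟩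

variable [MeasurableSpace K]

theorem integrable_of_compactSpace [OpensMeasurableSpace K] (f : C(K, ℝ)) (μ : Measure K)
    [IsFiniteMeasure μ] : Integrable f μ :=
  (CompactlySupportedContinuousMap.continuousMapEquiv f).integrable

/-- Integration against a finite measure on a compact space, as a linear form on the continuous
functions. -/
noncomputable def integralLinearMap [OpensMeasurableSpace K] (μ : Measure K) [IsFiniteMeasure μ] :
    C(K, ℝ) →ₗ[ℝ] ℝ where
  toFun f := ∫ k, f k ∂μ
  map_add' f g :=
    integral_add (integrable_of_compactSpace f μ) (integrable_of_compactSpace g μ)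
  map_smul' c f := integral_smul c f

variable [T2Space K] [BorelSpace K]

open CompactlySupported in
theorem exists_measure_integral_eq (Λ : C(K, ℝ) →ₚ[ℝ] ℝ) :
    ∃ γ : Measure K, IsFiniteMeasure γ ∧ ∀ f : C(K, ℝ), ∫ k, f k ∂γ = Λ f := by
  let Λc : C_c(K, ℝ) →ₚ[ℝ] ℝ :=
    { toFun := fun f ↦ Λ f.toContinuousMap
      map_add' := fun f g ↦ map_add Λ f.toContinuousMap g.toContinuousMap
      map_smul' := fun c f ↦ map_smul Λ c f.toContinuousMap
      monotone' := fun _ _ hfg ↦ OrderHomClass.mono Λ hfg }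
  exact ⟨RealRMK.rieszMeasure Λc, inferInstance, fun f ↦ RealRMK.integral_rieszMeasure Λc
    (CompactlySupportedContinuousMap.continuousMapEquiv f)⟩

theorem exists_measure_integral_eq_and_le {M : Type*} [AddCommGroup M] [Module ℝ M]
    {w : C(K, ℝ)} (hw : ∀ k, 0 < w k) (T : M →ₗ[ℝ] C(K, ℝ)) (φ : M →ₗ[ℝ] ℝ) {S : ℝ}
    (hφ : ∀ m, T m ≤ w → φ m ≤ S) :
    ∃ γ : Measure K, IsFiniteMeasure γ ∧ (∀ m, ∫ k, T m k ∂γ = φ m) ∧ ∫ k, w k ∂γ ≤ S := by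
  obtain ⟨L, hLT, hLw⟩ := exists_positiveLinearMap_apply_eq_and_le (fun k ↦ (hw k).le)
    (exists_le_smul_of_forall_pos hw) T φ hφ
  obtain ⟨γ, hγ, hγL⟩ := exists_measure_integral_eq L
  exact ⟨γ, hγ, fun m ↦ (hγL _).trans (hLT m), (hγL w).trans_le hLw⟩

end CompactSpace

section WeightedMarginals

/-- The weighted pullback `f ↦ a · (f ∘ p)`. A measure on `K` has `a`-weighted marginal `μ` along
`p` when its integral of the pullback of each `f` is the integral of `f` against `μ`. -/
noncomputable def weightedPullback {K X : Type*} [TopologicalSpace K] [TopologicalSpace X]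
    (a : C(K, ℝ)) (p : C(K, X)) : C(X, ℝ) →ₗ[ℝ] C(K, ℝ) :=
  LinearMap.mulLeft ℝ a ∘ₗ (ContinuousMap.compRightAlgHom ℝ ℝ p).toLinearMap

theorem exists_measure_weighted_marginals_and_integral_le
    {K X Y : Type*} [TopologicalSpace K] [CompactSpace K] [T2Space K] [MeasurableSpace K]
    [BorelSpace K] [TopologicalSpace X] [CompactSpace X] [MeasurableSpace X]
    [OpensMeasurableSpace X] [TopologicalSpace Y] [CompactSpace Y] [MeasurableSpace Y]
    [OpensMeasurableSpace Y] (μ : Measure X) [IsFiniteMeasure μ] (ν : Measure Y)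
    [IsFiniteMeasure ν] (a b : C(K, ℝ)) (p : C(K, X)) (q : C(K, Y)) {w : C(K, ℝ)}
    (hw : ∀ k, 0 < w k) {S : ℝ}
    (hS : ∀ (f : C(X, ℝ)) (g : C(Y, ℝ)), (∀ k, a k * f (p k) + b k * g (q k) ≤ w k) →
      ∫ x, f x ∂μ + ∫ y, g y ∂ν ≤ S) :
    ∃ γ : Measure K, IsFiniteMeasure γ ∧
      (∀ f : C(X, ℝ), ∫ k, a k * f (p k) ∂γ = ∫ x, f x ∂μ) ∧
      (∀ g : C(Y, ℝ), ∫ k, b k * g (q k) ∂γ = ∫ y, g y ∂ν) ∧ ∫ k, w k ∂γ ≤ S := by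
  obtain ⟨γ, hγ, hγ_eq, hγ_le⟩ := exists_measure_integral_eq_and_le hw
    ((weightedPullback a p).coprod (weightedPullback b q))
    ((integralLinearMap μ).coprod (integralLinearMap ν)) (fun fg ↦ hS fg.1 fg.2)
  refine ⟨γ, hγ, fun f ↦ ?_, fun g ↦ ?_, hγ_le⟩
  · simpa [weightedPullback, integralLinearMap] using hγ_eq (f, 0)
  · simpa [weightedPullback, integralLinearMap] using hγ_eq (0, g)

end WeightedMarginals

section Distances

variable {V : Type*} [NormedAddCommGroup V] [NormedSpace ℝ V]

/-- The integrand `‖a x - b y‖` of `d₃`, at the point `(x, y, a, b)`. -/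
def transportCost (X : Set V) : C(X × X × Icc (0 : ℝ) 1 × Icc (0 : ℝ) 1, ℝ) where
  toFun p := ‖(p.2.2.1 : ℝ) • (p.1 : V) - (p.2.2.2 : ℝ) • (p.2.1 : V)‖

variable {X : Set V}

theorem transportCost_nonneg (p : X × X × Icc (0 : ℝ) 1 × Icc (0 : ℝ) 1) :
    0 ≤ transportCost X p :=
  norm_nonneg ((p.2.2.1 : ℝ) • (p.1 : V) - (p.2.2.2 : ℝ) • (p.2.1 : V))

variable [MeasurableSpace V]

theorem d3_le_integral_transportCost {u v : ProbabilityMeasure X}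
    {γ : Measure (X × X × Icc (0 : ℝ) 1 × Icc (0 : ℝ) 1)} (hγ : γ ∈ M3 u v) :
    d3 u v ≤ ∫ p, transportCost X p ∂γ := by
  refine csInf_le ⟨0, ?_⟩ ⟨γ, hγ, rfl⟩
  rintro _ ⟨γ', -, rfl⟩
  exact integral_nonneg fun _ ↦ transportCost_nonneg _

variable [BorelSpace V]

theorem pairing_add_pairing_le (hX : IsCompact X) {ε : ℝ} (u v : ProbabilityMeasure X)
    {f g : C(X, ℝ)} (hfg : (f, g) ∈ D2eps X ε) :
    pairing u f + pairing v g ≤ ε + Metric.diam X := by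
  have : CompactSpace X := isCompact_iff_compactSpace.mp hX
  obtain ⟨x, hx⟩ : ∃ x, pairing u f ≤ f x :=
    exists_integral_le (integrable_of_compactSpace f (u : Measure X))
  obtain ⟨y, hy⟩ : ∃ y, pairing v g ≤ g y :=
    exists_integral_le (integrable_of_compactSpace g (v : Measure X))
  calc pairing u f + pairing v g ≤ f x + g y := add_le_add hx hy
    _ ≤ ε + dist (x : V) y := by
        simpa [dist_eq_norm] using hfg x y 1 1 (by simp) (by simp)
    _ ≤ ε + Metric.diam X := by
        gcongr
        exact Metric.dist_le_diam_of_mem hX.isBounded x.2 y.2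

theorem pairing_add_pairing_le_d2eps (hX : IsCompact X) {ε : ℝ} (u v : ProbabilityMeasure X)
    {f g : C(X, ℝ)} (hfg : (f, g) ∈ D2eps X ε) :
    pairing u f + pairing v g ≤ d2eps ε u v := by
  refine le_csSup ⟨ε + Metric.diam X, ?_⟩ ⟨(f, g), hfg, rfl⟩
  rintro _ ⟨fg, hfg', rfl⟩
  exact pairing_add_pairing_le hX u v hfg'

theorem exists_mem_M3_integral_transportCost_le (hX : IsCompact X) {ε : ℝ} (hε : 0 < ε)
    (u v : ProbabilityMeasure X) :
    ∃ γ ∈ M3 u v, ∫ p, transportCost X p ∂γ ≤ d2eps ε u v := by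
  have : CompactSpace X := isCompact_iff_compactSpace.mp hX
  let w := ContinuousMap.const _ ε + transportCost X
  have hw (p) : 0 < w p := add_pos_of_pos_of_nonneg hε (transportCost_nonneg p)
  obtain ⟨γ, hγ, hγu, hγv, hγw⟩ := exists_measure_weighted_marginals_and_integral_le
    (u : Measure X) (v : Measure X) ⟨fun p ↦ (p.2.2.1 : ℝ), by fun_prop⟩
    ⟨fun p ↦ (p.2.2.2 : ℝ), by fun_prop⟩ ⟨fun p ↦ p.1, by fun_prop⟩
    ⟨fun p ↦ p.2.1, by fun_prop⟩ hw
    (fun f g hfg ↦ pairing_add_pairing_le_d2eps hX u v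
      fun x y a b ha hb ↦ hfg (x, y, ⟨a, ha⟩, ⟨b, hb⟩))
  refine ⟨γ, ⟨hγ, fun f ↦ ⟨hγu f, hγv f⟩⟩, le_trans ?_ hγw⟩
  exact integral_mono (integrable_of_compactSpace _ γ) (integrable_of_compactSpace w γ)
    fun p ↦ le_add_of_nonneg_left hε.le

theorem d3_le_d2eps (hX : IsCompact X) {ε : ℝ} (hε : 0 < ε) (u v : ProbabilityMeasure X) :
    d3 u v ≤ d2eps ε u v := by
  obtain ⟨γ, hγ, hcost⟩ := exists_mem_M3_integral_transportCost_le hX hε u v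
  exact (d3_le_integral_transportCost hγ).trans hcost

end Distances

end Stmt2

/-- **Proposition 2 (Renault–Venel).** For all Borel probability measures `u, v` on a
compact subset `X` of a real normed vector space, `d₂⁺(u,v) ≥ d₃(u,v)`. -/
theorem stmt2 {V : Type*} [NormedAddCommGroup V] [NormedSpace ℝ V]
    [MeasurableSpace V] [BorelSpace V] (X : Set V) (hX : IsCompact X)
    (u v : ProbabilityMeasure X) :
    Stmt2.d2plus u v ≥ Stmt2.d3 u v := by
  refine le_csInf (nonempty_Ioi.image _) ?_
  rintro _ ⟨ε, hε, rfl⟩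
  exact Stmt2.d3_le_d2eps hX hε u v
end

section
/- If f and g belong to D_0 and λ ∈ [0,1], then −f, the pointwise maximum sup{f,g}, the pointwise minimum inf{f,g}, and the convex combination λ·f + (1−λ)·g all belong to D_0. Moreover the linear span of D_0 is dense in C(X,ℝ) for the uniform norm. -/
open Set

namespace Stmt4

variable (K : Type*) [Fintype K]

/-- The simplex `Δ(K)` of probability vectors on `K`, inside `K → ℝ`
(endowed with the ℓ¹ norm, written explicitly as sums of absolute values below). -/
def Δ : Set (K → ℝ) := {p | (∀ k, 0 ≤ p k) ∧ ∑ k, p k = 1}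

/-- The probability simplex on `Fin n`. -/
def fsimplex (n : ℕ) : Set (Fin n → ℝ) := {x | (∀ i, 0 ≤ x i) ∧ ∑ i, x i = 1}

/-- The value `max_{x ∈ Δ(I)} min_{y ∈ Δ(J)} Σ_{i,j} x(i)·y(j)·M(i,j)` of a matrix game. -/
noncomputable def matValue {n m : ℕ} (M : Fin n → Fin m → ℝ) : ℝ :=
  sSup ((fun x => sInf ((fun y => ∑ i, ∑ j, x i * y j * M i j) '' fsimplex m)) '' fsimplex n)

/-- `D₀`: the set of non-revealing game functions `p ↦ Val(Σ_k p^k G^k)`, for families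
`(G^k)` of `I×J` matrices with entries in `[−1,1]` (with `I`, `J` nonempty finite). -/
def D0 : Set C(Δ K, ℝ) :=
  {f | ∃ (n m : ℕ), 0 < n ∧ 0 < m ∧ ∃ G : K → Fin n → Fin m → ℝ,
    (∀ k i j, G k i j ∈ Icc (-1 : ℝ) 1) ∧
    ∀ p : Δ K, f p = matValue (fun i j => ∑ k, (p : K → ℝ) k * G k i j)}

end Stmt4

/-!
Von Neumann's minimax theorem reduces every claim to exhibiting good strategies. If `f` and `g` are
the values of the families `G` and `H`, then `-f` is the value of `-Gᵀ`, where the players have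
exchanged roles; `l • f + (1 - l) • g` is the value of the game in which both games are played
independently with weights `l` and `1 - l`; and `f ⊔ g` is the value of the game in which player 1
chooses which of the two games is played while player 2, not knowing the choice, prepares a strategy
for each. Hence the cone generated by `D₀` is a sublattice of `C(Δ(K), ℝ)`. It contains every linear
function, so it interpolates arbitrary values at two points, and the lattice form of the
Stone–Weierstrass theorem shows that it is dense.
-/

open Matrix

namespace Stmt4

section StdSimplex

variable {R I J : Type*} [Fintype I] [Fintype J]

lemma le_dotProduct_of_mem_stdSimplex [Semiring R] [PartialOrder R] [IsOrderedRing R]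
    {x a : I → R} {v : R} (hx : x ∈ stdSimplex R I) (h : ∀ i, v ≤ a i) : v ≤ x ⬝ᵥ a :=
  calc v = ∑ i, x i * v := by rw [← Finset.sum_mul, hx.2, one_mul]
    _ ≤ x ⬝ᵥ a := dotProduct_le_dotProduct_of_nonneg_left h hx.1

lemma dotProduct_le_of_mem_stdSimplex [Semiring R] [PartialOrder R] [IsOrderedRing R]
    {x a : I → R} {v : R} (hx : x ∈ stdSimplex R I) (h : ∀ i, a i ≤ v) : x ⬝ᵥ a ≤ v :=
  calc x ⬝ᵥ a ≤ ∑ i, x i * v := dotProduct_le_dotProduct_of_nonneg_left h hx.1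
    _ = v := by rw [← Finset.sum_mul, hx.2, one_mul]

lemma mul_mem_stdSimplex_prod [Semiring R] [PartialOrder R] [IsOrderedRing R]
    {x : I → R} {y : J → R} (hx : x ∈ stdSimplex R I) (hy : y ∈ stdSimplex R J) :
    (fun q : I × J => x q.1 * y q.2) ∈ stdSimplex R (I × J) := by
  refine ⟨fun q => mul_nonneg (hx.1 _) (hy.1 _), ?_⟩
  simp only [Fintype.sum_prod_type, ← Finset.mul_sum, hy.2, mul_one, hx.2]

end StdSimplex

section VecMul

variable {R I I' J J' : Type*} [Fintype I] [Fintype I'] [CommSemiring R]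

lemma map_vecMul (f : I' → I) (x : I' → R) (A : Matrix I J R) :
    FunOnFinite.linearMap R R f x ᵥ* A = x ᵥ* A.submatrix f id := by
  classical
  ext j
  simp only [vecMul, dotProduct, FunOnFinite.linearMap_apply_apply, Finset.sum_mul, submatrix_apply]
  rw [← Finset.sum_fiberwise Finset.univ f]
  refine Finset.sum_congr rfl fun i _ => Finset.sum_congr rfl fun i' hi' => ?_
  rw [(Finset.mem_filter.1 hi').2, id]

lemma mul_vecMul_submatrix_fst {y : I' → R} (hy : ∑ i, y i = 1) (x : I → R)
    (A : Matrix I J R) (σ : J' → J) :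
    (fun q : I × I' => x q.1 * y q.2) ᵥ* A.submatrix Prod.fst σ = (x ᵥ* A) ∘ σ := by
  ext j
  simp only [vecMul, dotProduct, submatrix_apply, Function.comp_apply, Fintype.sum_prod_type,
    ← Finset.sum_mul, ← Finset.mul_sum, hy, mul_one]

lemma mul_vecMul_submatrix_snd {x : I → R} (hx : ∑ i, x i = 1) (y : I' → R)
    (A : Matrix I' J R) (σ : J' → J) :
    (fun q : I × I' => x q.1 * y q.2) ᵥ* A.submatrix Prod.snd σ = (y ᵥ* A) ∘ σ := by
  ext j
  simp only [vecMul, dotProduct, submatrix_apply, Function.comp_apply, Fintype.sum_prod_type_right,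
    ← Finset.sum_mul, hx, one_mul]

end VecMul

section Guarantee

variable {I I' J J' : Type*} [Fintype I] [Fintype I']

/-- Player 1, who chooses the rows and maximizes, has a mixed strategy in the matrix game `A` whose
expected payoff is at least `v` against every column. -/
def IsGuaranteed (A : Matrix I J ℝ) (v : ℝ) : Prop :=
  ∃ x ∈ stdSimplex ℝ I, ∀ j, v ≤ (x ᵥ* A) j

lemma isGuaranteed_neg_transpose_iff {A : Matrix J I ℝ} {v : ℝ} :
    IsGuaranteed (-Aᵀ) (-v) ↔ ∃ y ∈ stdSimplex ℝ I, ∀ j, (A *ᵥ y) j ≤ v := by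
  simp only [IsGuaranteed, vecMul_neg, vecMul_transpose, Pi.neg_apply, neg_le_neg_iff]

namespace IsGuaranteed

lemma mono {A : Matrix I J ℝ} {v w : ℝ} (h : IsGuaranteed A v) (hwv : w ≤ v) :
    IsGuaranteed A w :=
  let ⟨x, hx, hxv⟩ := h
  ⟨x, hx, fun j => hwv.trans (hxv j)⟩

lemma submatrix_right {A : Matrix I J ℝ} {v : ℝ} (h : IsGuaranteed A v) (σ : J' → J) :
    IsGuaranteed (A.submatrix id σ) v :=
  let ⟨x, hx, hxv⟩ := h
  ⟨x, hx, fun j => hxv (σ j)⟩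

lemma of_submatrix_left {A : Matrix I J ℝ} {v : ℝ} (f : I' → I)
    (h : IsGuaranteed (A.submatrix f id) v) : IsGuaranteed A v := by
  obtain ⟨x, hx, hxv⟩ := h
  refine ⟨FunOnFinite.linearMap ℝ ℝ f x,
    stdSimplex.image_linearMap f (mem_image_of_mem _ hx), ?_⟩
  rwa [map_vecMul]

lemma reindex {A : Matrix I J ℝ} {v : ℝ} (h : IsGuaranteed A v) (e : I ≃ I') (e' : J ≃ J') :
    IsGuaranteed (A.reindex e e') v :=
  of_submatrix_left e <| by simpa using h.submatrix_right e'.symm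

lemma const_mul {A : Matrix I J ℝ} {v c : ℝ} (h : IsGuaranteed A v) (hc : 0 ≤ c) :
    IsGuaranteed (c • A) (c * v) := by
  obtain ⟨x, hx, hxv⟩ := h
  refine ⟨x, hx, fun j => ?_⟩
  rw [vecMul_smul]
  exact mul_le_mul_of_nonneg_left (hxv j) hc

lemma add_prod {A : Matrix I J ℝ} {B : Matrix I' J' ℝ} {v w : ℝ} (hA : IsGuaranteed A v)
    (hB : IsGuaranteed B w) :
    IsGuaranteed (A.submatrix Prod.fst Prod.fst + B.submatrix Prod.snd Prod.snd) (v + w) := by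
  obtain ⟨x, hx, hxv⟩ := hA
  obtain ⟨y, hy, hyw⟩ := hB
  refine ⟨_, mul_mem_stdSimplex_prod hx hy, fun j => ?_⟩
  rw [vecMul_add, mul_vecMul_submatrix_fst hy.2, mul_vecMul_submatrix_snd hx.2]
  exact add_le_add (hxv j.1) (hyw j.2)

lemma fromCols_prod {A : Matrix I J ℝ} {B : Matrix I' J' ℝ} {v w : ℝ} (hA : IsGuaranteed A v)
    (hB : IsGuaranteed B w) :
    IsGuaranteed (fromCols (A.submatrix Prod.fst id) (B.submatrix Prod.snd id)) (min v w) := by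
  obtain ⟨x, hx, hxv⟩ := hA
  obtain ⟨y, hy, hyw⟩ := hB
  refine ⟨_, mul_mem_stdSimplex_prod hx hy, ?_⟩
  rw [vecMul_fromCols, mul_vecMul_submatrix_fst hy.2, mul_vecMul_submatrix_snd hx.2]
  rintro (j | j)
  · exact (min_le_left v w).trans (hxv j)
  · exact (min_le_right v w).trans (hyw j)

lemma fromRows_max {A : Matrix I J ℝ} {B : Matrix I' J ℝ} {v w : ℝ} (hA : IsGuaranteed A v)
    (hB : IsGuaranteed B w) : IsGuaranteed (fromRows A B) (max v w) := by
  rcases le_total w v with hwv | hvw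
  · exact of_submatrix_left Sum.inl (hA.mono (max_eq_left hwv).le)
  · exact of_submatrix_left Sum.inr (hB.mono (max_eq_right hvw).le)

end IsGuaranteed

end Guarantee

section Value

variable {I I' J J' : Type*} [Fintype I] [Fintype I'] [Fintype J] [Fintype J']

/-- `v` is the value of the matrix game `A`: player 1 guarantees `v`, and so does player 2. The
latter is expressed as a guarantee of player 1 in `-Aᵀ`, the game with the roles exchanged. -/
def IsValue (A : Matrix I J ℝ) (v : ℝ) : Prop :=
  IsGuaranteed A v ∧ IsGuaranteed (-Aᵀ) (-v)

theorem exists_isValue [Nonempty I] [Nonempty J] (A : Matrix I J ℝ) : ∃ v, IsValue A v := by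
  classical
  let B : (I → ℝ) →ₗ[ℝ] (J → ℝ) →ₗ[ℝ] ℝ := toLinearMap₂' ℝ A
  have hB (x : I → ℝ) (y : J → ℝ) : B x y = x ⬝ᵥ A *ᵥ y := toLinearMap₂'_apply' A x y
  obtain ⟨y, hy, x, hx, hxy⟩ := Sion.exists_isSaddlePointOn (f := fun y x => B x y)
    ⟨_, single_mem_stdSimplex ℝ (Classical.arbitrary J)⟩ (convex_stdSimplex ℝ J)
    (isCompact_stdSimplex ℝ J)
    (fun x _ => (B x).continuous_of_finiteDimensional.continuousOn.lowerSemicontinuousOn)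
    (fun x _ => ((B x).convexOn (convex_stdSimplex ℝ J)).quasiconvexOn)
    (convex_stdSimplex ℝ I) ⟨_, single_mem_stdSimplex ℝ (Classical.arbitrary I)⟩
    (isCompact_stdSimplex ℝ I)
    (fun y _ => (B.flip y).continuous_of_finiteDimensional.continuousOn.upperSemicontinuousOn)
    (fun y _ => ((B.flip y).concaveOn (convex_stdSimplex ℝ I)).quasiconcaveOn)
  refine ⟨B x y, ⟨x, hx, fun j => ?_⟩, isGuaranteed_neg_transpose_iff.2 ⟨y, hy, fun i => ?_⟩⟩
  · simpa only [hB, dotProduct_mulVec, dotProduct_single_one] using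
      hxy _ (single_mem_stdSimplex ℝ j) x hx
  · simpa [hB] using hxy y hy _ (single_mem_stdSimplex ℝ i)

lemma isValue_const [Nonempty I] [Nonempty J] (v : ℝ) :
    IsValue (of fun (_ : I) (_ : J) => v) v := by
  classical
  refine ⟨⟨_, single_mem_stdSimplex ℝ (Classical.arbitrary I), fun j => ?_⟩,
    ⟨_, single_mem_stdSimplex ℝ (Classical.arbitrary J), fun i => ?_⟩⟩ <;>
  simp

namespace IsValue

lemma neg_transpose {A : Matrix I J ℝ} {v : ℝ} (h : IsValue A v) : IsValue (-Aᵀ) (-v) :=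
  ⟨h.2, by simpa using h.1⟩

lemma reindex {A : Matrix I J ℝ} {v : ℝ} (h : IsValue A v) (e : I ≃ I') (e' : J ≃ J') :
    IsValue (A.reindex e e') v :=
  ⟨h.1.reindex e e', h.2.reindex e' e⟩

lemma const_mul {A : Matrix I J ℝ} {v c : ℝ} (h : IsValue A v) (hc : 0 ≤ c) :
    IsValue (c • A) (c * v) :=
  ⟨h.1.const_mul hc, by simpa using h.2.const_mul hc⟩

lemma add_prod {A : Matrix I J ℝ} {B : Matrix I' J' ℝ} {v w : ℝ} (hA : IsValue A v)
    (hB : IsValue B w) :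
    IsValue (A.submatrix Prod.fst Prod.fst + B.submatrix Prod.snd Prod.snd) (v + w) := by
  refine ⟨hA.1.add_prod hB.1, ?_⟩
  rw [transpose_add, neg_add, neg_add]
  exact hA.2.add_prod hB.2

lemma fromRows_prod {A : Matrix I J ℝ} {B : Matrix I' J' ℝ} {v w : ℝ} (hA : IsValue A v)
    (hB : IsValue B w) :
    IsValue (fromRows (A.submatrix id Prod.fst) (B.submatrix id Prod.snd)) (max v w) := by
  refine ⟨(hA.1.submatrix_right _).fromRows_max (hB.1.submatrix_right _), ?_⟩
  rw [transpose_fromRows, fromCols_neg, ← min_neg_neg]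
  exact hA.2.fromCols_prod hB.2

end IsValue

lemma dotProduct_mulVec_eq_sum (A : Matrix I J ℝ) (x : I → ℝ) (y : J → ℝ) :
    x ⬝ᵥ A *ᵥ y = ∑ i, ∑ j, x i * y j * A i j := by
  simp only [dotProduct, mulVec, Finset.mul_sum, mul_assoc, mul_comm (y _)]

lemma IsValue.matValue_eq {n m : ℕ} {A : Matrix (Fin n) (Fin m) ℝ} {v : ℝ} (h : IsValue A v) :
    matValue A = v := by
  obtain ⟨⟨x, hx, hxv⟩, hdual⟩ := h
  obtain ⟨y, hy, hyv⟩ := isGuaranteed_neg_transpose_iff.1 hdual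
  have inf_le : ∀ x' ∈ fsimplex n, sInf ((fun y => x' ⬝ᵥ A *ᵥ y) '' fsimplex m) ≤ v := by
    intro x' hx'
    have hbdd : BddBelow ((fun y => x' ⬝ᵥ A *ᵥ y) '' fsimplex m) :=
      ((isCompact_stdSimplex ℝ (Fin m)).image (by fun_prop)).bddBelow
    exact (csInf_le hbdd (mem_image_of_mem _ hy)).trans (dotProduct_le_of_mem_stdSimplex hx' hyv)
  have le_inf : v ≤ sInf ((fun y => x ⬝ᵥ A *ᵥ y) '' fsimplex m) := by
    refine le_csInf ⟨_, mem_image_of_mem _ hy⟩ (forall_mem_image.2 fun y' hy' => ?_)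
    rw [dotProduct_mulVec, dotProduct_comm]
    exact le_dotProduct_of_mem_stdSimplex hy' hxv
  have hgreatest : IsGreatest ((fun x => sInf ((fun y => x ⬝ᵥ A *ᵥ y) '' fsimplex m)) ''
      fsimplex n) v :=
    ⟨⟨x, hx, (inf_le x hx).antisymm le_inf⟩, forall_mem_image.2 inf_le⟩
  simpa only [matValue, dotProduct_mulVec_eq_sum] using hgreatest.csSup_eq

lemma isValue_matValue {n m : ℕ} [NeZero n] [NeZero m] (A : Matrix (Fin n) (Fin m) ℝ) :
    IsValue A (matValue A) := by
  obtain ⟨v, hv⟩ := exists_isValue A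
  rwa [hv.matValue_eq]

end Value

section GameFunctions

variable {K : Type*} [Fintype K]

/-- `f` is the non-revealing game function of the family `G`, whose entries lie in `[-1, 1]`. Unlike
in the definition of `D0`, the players' action sets are arbitrary finite types. -/
structure Represents {I J : Type*} [Fintype I] [Fintype J] (G : K → Matrix I J ℝ)
    (f : C(Δ K, ℝ)) : Prop where
  mem_Icc : ∀ k i j, G k i j ∈ Icc (-1 : ℝ) 1
  isValue : ∀ p : Δ K, IsValue (∑ k, (p : K → ℝ) k • G k) (f p)

section

variable {I I' J J' : Type*} [Fintype I] [Fintype I'] [Fintype J] [Fintype J']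

namespace Represents

lemma mem_D0 [Nonempty I] [Nonempty J] {G : K → Matrix I J ℝ} {f : C(Δ K, ℝ)}
    (h : Represents G f) : f ∈ D0 K := by
  let e := Fintype.equivFin I
  let e' := Fintype.equivFin J
  refine ⟨_, _, Fintype.card_pos, Fintype.card_pos, fun k => (G k).reindex e e',
    fun k i j => h.mem_Icc _ _ _, fun p => ?_⟩
  rw [← ((h.isValue p).reindex e e').matValue_eq]
  congr 1
  ext i j
  simp [Matrix.sum_apply]

lemma neg {G : K → Matrix I J ℝ} {f : C(Δ K, ℝ)} (h : Represents G f) :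
    Represents (fun k => -(G k)ᵀ) (-f) where
  mem_Icc k i j := by simpa [neg_le, and_comm] using h.mem_Icc k j i
  isValue p := by simpa [transpose_sum] using (h.isValue p).neg_transpose

lemma sup {G : K → Matrix I J ℝ} {H : K → Matrix I' J' ℝ} {f g : C(Δ K, ℝ)}
    (hf : Represents G f) (hg : Represents H g) :
    Represents
      (fun k => fromRows ((G k).submatrix id Prod.fst) ((H k).submatrix id Prod.snd)) (f ⊔ g) where
  mem_Icc := by
    rintro k (i | i) j
    · exact hf.mem_Icc _ _ _
    · exact hg.mem_Icc _ _ _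
  isValue p := by
    convert (hf.isValue p).fromRows_prod (hg.isValue p) using 1
    · ext (i | i) j <;> simp [Matrix.sum_apply]
    · rfl

lemma convexCombo {G : K → Matrix I J ℝ} {H : K → Matrix I' J' ℝ} {f g : C(Δ K, ℝ)}
    (hf : Represents G f) (hg : Represents H g) {a b : ℝ} (ha : 0 ≤ a) (hb : 0 ≤ b)
    (hab : a + b = 1) :
    Represents (fun k => (a • G k).submatrix Prod.fst Prod.fst +
      (b • H k).submatrix Prod.snd Prod.snd) (a • f + b • g) where
  mem_Icc k _ _ := convex_Icc (-1) 1 (hf.mem_Icc k _ _) (hg.mem_Icc k _ _) ha hb hab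
  isValue p := by
    convert ((hf.isValue p).const_mul ha).add_prod ((hg.isValue p).const_mul hb) using 1
    · ext i j
      simp [Matrix.sum_apply, Finset.sum_add_distrib, Finset.mul_sum, mul_left_comm]
    · rfl

end Represents

end

lemma exists_represents_of_mem_D0 {f : C(Δ K, ℝ)} (hf : f ∈ D0 K) :
    ∃ (n m : ℕ) (_ : NeZero n) (_ : NeZero m) (G : K → Matrix (Fin n) (Fin m) ℝ),
      Represents G f := by
  obtain ⟨n, m, hn, hm, G, hG, hf⟩ := hf
  have : NeZero n := ⟨hn.ne'⟩
  have : NeZero m := ⟨hm.ne'⟩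
  refine ⟨n, m, ‹_›, ‹_›, G, hG, fun p => ?_⟩
  have hsum : ∑ k, (p : K → ℝ) k • of (G k) = of fun i j => ∑ k, (p : K → ℝ) k * G k i j := by
    ext i j
    simp [Matrix.sum_apply]
  rw [hf p]
  exact hsum ▸ isValue_matValue _

lemma neg_mem_D0 {f : C(Δ K, ℝ)} (hf : f ∈ D0 K) : -f ∈ D0 K := by
  obtain ⟨_, _, _, _, _, hG⟩ := exists_represents_of_mem_D0 hf
  exact hG.neg.mem_D0

lemma sup_mem_D0 {f g : C(Δ K, ℝ)} (hf : f ∈ D0 K) (hg : g ∈ D0 K) : f ⊔ g ∈ D0 K := by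
  obtain ⟨_, _, _, _, _, hG⟩ := exists_represents_of_mem_D0 hf
  obtain ⟨_, _, _, _, _, hH⟩ := exists_represents_of_mem_D0 hg
  exact (hG.sup hH).mem_D0

lemma inf_mem_D0 {f g : C(Δ K, ℝ)} (hf : f ∈ D0 K) (hg : g ∈ D0 K) : f ⊓ g ∈ D0 K := by
  have hneg : f ⊓ g = -(-f ⊔ -g) := by rw [neg_sup, neg_neg, neg_neg]
  rw [hneg]
  exact neg_mem_D0 (sup_mem_D0 (neg_mem_D0 hf) (neg_mem_D0 hg))

variable (K) in
theorem convex_D0 : Convex ℝ (D0 K) := by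
  intro f hf g hg a b ha hb hab
  obtain ⟨_, _, _, _, _, hG⟩ := exists_represents_of_mem_D0 hf
  obtain ⟨_, _, _, _, _, hH⟩ := exists_represents_of_mem_D0 hg
  exact (hG.convexCombo hH ha hb hab).mem_D0

/-- The expectation `p ↦ ∑ k, p k * c k` of a random variable `c` on the set `K` of states, as a
function of the law `p` of the state. -/
def expectation (c : K → ℝ) : C(Δ K, ℝ) where
  toFun p := (p : K → ℝ) ⬝ᵥ c
  continuous_toFun := by fun_prop

lemma expectation_mem_D0 {c : K → ℝ} (hc : ∀ k, c k ∈ Icc (-1 : ℝ) 1) : expectation c ∈ D0 K := by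
  have h : Represents (fun k => of fun (_ _ : Unit) => c k) (expectation c) :=
    ⟨fun k _ _ => hc k, fun p => by
      convert isValue_const (I := Unit) (J := Unit) (expectation c p)
      ext i j
      simp [Matrix.sum_apply, expectation, dotProduct]⟩
  exact h.mem_D0

lemma zero_mem_D0 : (0 : C(Δ K, ℝ)) ∈ D0 K := by
  have h : (0 : C(Δ K, ℝ)) = expectation 0 := ContinuousMap.ext fun p => (dotProduct_zero _).symm
  exact h ▸ expectation_mem_D0 fun _ => by simp

end GameFunctions

section Density

lemma op_mem_hull_of_convex {E : Type*} [AddCommGroup E] [Module ℝ E] {s : Set E}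
    (hs : Convex ℝ s) (h0 : 0 ∈ s) {op : E → E → E}
    (hop_smul : ∀ c : ℝ, 0 < c → ∀ u v, op (c • u) (c • v) = c • op u v)
    (hop_mem : ∀ u ∈ s, ∀ v ∈ s, op u v ∈ s) {u v : E}
    (hu : u ∈ ConvexCone.hull ℝ s) (hv : v ∈ ConvexCone.hull ℝ s) :
    op u v ∈ ConvexCone.hull ℝ s := by
  rw [ConvexCone.mem_hull_of_convex hs] at hu hv ⊢
  obtain ⟨a, ha, u, hu, rfl⟩ := hu
  obtain ⟨b, hb, v, hv, rfl⟩ := hv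
  have hab : 0 < a + b := add_pos ha hb
  have rescale {c : ℝ} {w : E} (hw : w ∈ s) (hc : 0 < c) (hcab : c ≤ a + b) :
      (c / (a + b)) • w ∈ s :=
    hs.smul_mem_of_zero_mem h0 hw ⟨by positivity, (div_le_one hab).2 hcab⟩
  refine ⟨a + b, hab, op ((a / (a + b)) • u) ((b / (a + b)) • v),
    hop_mem _ (rescale hu ha (by linarith)) _ (rescale hv hb (by linarith)), ?_⟩
  simp only [← hop_smul _ hab, smul_smul, mul_div_cancel₀ _ hab.ne']

lemma exists_dotProduct_eq_and_dotProduct_eq {R K : Type*} [Field R] [Fintype K] {p q : K → R}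
    (hp : ∑ k, p k = 1) (hq : ∑ k, q k = 1) (hpq : p ≠ q) (a b : R) :
    ∃ c, p ⬝ᵥ c = a ∧ q ⬝ᵥ c = b := by
  classical
  obtain ⟨k, hk⟩ := Function.ne_iff.1 hpq
  have hk' : p k - q k ≠ 0 := sub_ne_zero.2 hk
  let β := (a - b) / (p k - q k)
  have hβ : β * (p k - q k) = a - b := div_mul_cancel₀ _ hk'
  refine ⟨(a - β * p k) • 1 + β • Pi.single k 1, ?_, ?_⟩
  · simp [dotProduct_add, dotProduct_one, hp]
  · simp only [dotProduct_add, dotProduct_smul, dotProduct_one, hq, dotProduct_single_one,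
      smul_eq_mul]
    linear_combination -hβ

variable {K : Type*} [Fintype K]

lemma expectation_mem_hull_D0 (c : K → ℝ) : expectation c ∈ ConvexCone.hull ℝ (D0 K) := by
  have hpos : 0 < ‖c‖ + 1 := by positivity
  rw [ConvexCone.mem_hull_of_convex (convex_D0 K)]
  refine ⟨‖c‖ + 1, hpos, expectation ((‖c‖ + 1)⁻¹ • c), expectation_mem_D0 fun k => ?_, ?_⟩
  · have hck : |c k| ≤ ‖c‖ + 1 := (norm_le_pi_norm c k).trans (le_add_of_nonneg_right zero_le_one)
    rw [mem_Icc, ← abs_le, Pi.smul_apply, smul_eq_mul, abs_mul, abs_of_pos (inv_pos.2 hpos)]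
    exact inv_mul_le_one_of_le₀ hck hpos.le
  · ext p
    simp [expectation, hpos.ne']

theorem separatesPointsStrongly_hull_D0 :
    (ConvexCone.hull ℝ (D0 K) : Set C(Δ K, ℝ)).SeparatesPointsStrongly := by
  intro v p q
  suffices ∃ c, (p : K → ℝ) ⬝ᵥ c = v p ∧ (q : K → ℝ) ⬝ᵥ c = v q by
    obtain ⟨c, hp, hq⟩ := this
    exact ⟨expectation c, expectation_mem_hull_D0 c, hp, hq⟩
  rcases eq_or_ne p q with rfl | hpq
  · have hconst : (p : K → ℝ) ⬝ᵥ (v p • 1) = v p := by simp [dotProduct_one, p.2.2]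
    exact ⟨_, hconst, hconst⟩
  · exact exists_dotProduct_eq_and_dotProduct_eq p.2.2 q.2.2 (Subtype.coe_ne_coe.2 hpq) _ _

theorem dense_hull_D0 : Dense (ConvexCone.hull ℝ (D0 K) : Set C(Δ K, ℝ)) := by
  have : CompactSpace (Δ K) := isCompact_iff_compactSpace.1 (isCompact_stdSimplex ℝ K)
  refine dense_iff_closure_eq.2 <| ContinuousMap.sublattice_closure_eq_top _
    ⟨0, ConvexCone.subset_hull zero_mem_D0⟩ ?_ ?_ separatesPointsStrongly_hull_D0
  · exact fun f hf g hg => op_mem_hull_of_convex (convex_D0 K) zero_mem_D0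
      (fun c hc f g => ContinuousMap.ext fun p => (mul_min_of_nonneg (f p) (g p) hc.le).symm)
      (fun f hf g hg => inf_mem_D0 hf hg) hf hg
  · exact fun f hf g hg => op_mem_hull_of_convex (convex_D0 K) zero_mem_D0
      (fun c hc f g => ContinuousMap.ext fun p => (mul_max_of_nonneg (f p) (g p) hc.le).symm)
      (fun f hf g hg => sup_mem_D0 hf hg) hf hg

end Density

end Stmt4

/-- **Lemma 2 (Renault–Venel).** If `f, g ∈ D₀` and `λ ∈ [0,1]`, then `−f`, `f ⊔ g`,
`f ⊓ g` and `λ·f + (1−λ)·g` belong to `D₀`; moreover the linear span of `D₀` is dense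
in `C(X,ℝ)` (for the uniform norm, `X = Δ(K)` being compact). -/
theorem stmt4 (K : Type*) [Fintype K] [Nonempty K] :
    (∀ f g : C(Stmt4.Δ K, ℝ), ∀ l : ℝ, f ∈ Stmt4.D0 K → g ∈ Stmt4.D0 K →
      l ∈ Icc (0:ℝ) 1 →
      -f ∈ Stmt4.D0 K ∧ f ⊔ g ∈ Stmt4.D0 K ∧ f ⊓ g ∈ Stmt4.D0 K ∧
        l • f + (1 - l) • g ∈ Stmt4.D0 K) ∧
    Dense ((Submodule.span ℝ (Stmt4.D0 K) : Submodule ℝ C(Stmt4.Δ K, ℝ)) :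
      Set C(Stmt4.Δ K, ℝ)) := by
  refine ⟨fun f g l hf hg hl => ⟨Stmt4.neg_mem_D0 hf, Stmt4.sup_mem_D0 hf hg,
    Stmt4.inf_mem_D0 hf hg, Stmt4.convex_D0 K hf hg hl.1 (sub_nonneg.2 hl.2) (by ring)⟩, ?_⟩
  exact Stmt4.dense_hull_D0.mono <| ConvexCone.hull_min
    (C := (Submodule.span ℝ (Stmt4.D0 K)).toConvexCone) Submodule.subset_span
end

section
/- The closure of D_0 in C(X,ℝ) for the uniform norm is exactly D_1. -/
open Set

namespace Stmt5

variable (K : Type*) [Fintype K]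

/-- The simplex `Δ(K)` of probability vectors on `K`, inside `K → ℝ`
(endowed with the ℓ¹ norm, written explicitly as sums of absolute values below). -/
def Δ : Set (K → ℝ) := {p | (∀ k, 0 ≤ p k) ∧ ∑ k, p k = 1}

/-- The probability simplex on `Fin n`. -/
def fsimplex (n : ℕ) : Set (Fin n → ℝ) := {x | (∀ i, 0 ≤ x i) ∧ ∑ i, x i = 1}

/-- The value `max_{x ∈ Δ(I)} min_{y ∈ Δ(J)} Σ_{i,j} x(i)·y(j)·M(i,j)` of a matrix game. -/
noncomputable def matValue {n m : ℕ} (M : Fin n → Fin m → ℝ) : ℝ :=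
  sSup ((fun x => sInf ((fun y => ∑ i, ∑ j, x i * y j * M i j) '' fsimplex m)) '' fsimplex n)

/-- `D₀`: the set of non-revealing game functions `p ↦ Val(Σ_k p^k G^k)`, for families
`(G^k)` of `I×J` matrices with entries in `[−1,1]` (with `I`, `J` nonempty finite). -/
def D0 : Set C(Δ K, ℝ) :=
  {f | ∃ (n m : ℕ), 0 < n ∧ 0 < m ∧ ∃ G : K → Fin n → Fin m → ℝ,
    (∀ k i j, G k i j ∈ Icc (-1 : ℝ) 1) ∧
    ∀ p : Δ K, f p = matValue (fun i j => ∑ k, (p : K → ℝ) k * G k i j)}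

/-- `D₁ = {f ∈ C(Δ(K),ℝ) : ∀ x,y, ∀ a,b ≥ 0, a·f(x) − b·f(y) ≤ ‖a·x − b·y‖₁}`. -/
def D1 : Set C(Δ K, ℝ) :=
  {f | ∀ x y : Δ K, ∀ a b : ℝ, 0 ≤ a → 0 ≤ b →
    a * f x - b * f y ≤ ∑ k, |a * (x : K → ℝ) k - b * (y : K → ℝ) k|}

end Stmt5

/-!
Both directions rest on the fact that `p ↦ matValue (∑ k, p k • G k)` is positively homogeneous and
`1`-Lipschitz for the `ℓ¹` norm on all of `K → ℝ`. This gives `D0 ⊆ D1`, and `D1` is closed.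

Conversely, by the Hahn–Banach theorem, the inequality defining `D1` says exactly that `f` agrees at
any two points `x`, `y` with a linear form `⟨·, g x y⟩` with coefficients in `[-1, 1]`. Given
`z 1, …, z n`, the game with `G k i j = g (z i) (z j) k` has at `p = z i` the saddle point `(i, i)`:
the whole row `i` and the whole column `i` are equal to `f (z i)`. Hence its value interpolates `f`
at finitely many prescribed points, and equicontinuity turns this into uniform approximation.
-/

namespace Stmt5

open scoped Topology

theorem exists_linearMap_comp_eq_of_le_sublinear {V E : Type*} [AddCommGroup V] [Module ℝ V]
    [AddCommGroup E] [Module ℝ E] (A : V →ₗ[ℝ] E) (u : V →ₗ[ℝ] ℝ) (N : E → ℝ)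
    (N_hom : ∀ c : ℝ, 0 < c → ∀ x, N (c • x) = c * N x)
    (N_add : ∀ x y, N (x + y) ≤ N x + N y) (hu : ∀ v, u v ≤ N (A v)) :
    ∃ φ : E →ₗ[ℝ] ℝ, φ ∘ₗ A = u ∧ ∀ x, φ x ≤ N x := by
  have N_zero : N 0 = 0 := by
    have h := N_hom 2 two_pos 0
    rw [smul_zero] at h
    linarith
  have u_nonpos_of_mem_ker {v : V} (hv : A v = 0) : u v ≤ 0 := by
    simpa only [hv, N_zero] using hu v
  have u_mem : u ∈ (LinearMap.ker A).dualAnnihilator := by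
    refine (Submodule.mem_dualAnnihilator u).2 fun v hv => ?_
    have h_neg : u (-v) ≤ 0 := u_nonpos_of_mem_ker (by rw [map_neg, hv, neg_zero])
    rw [map_neg] at h_neg
    exact le_antisymm (u_nonpos_of_mem_ker hv) (by linarith)
  obtain ⟨ψ, hψ⟩ : ∃ ψ, A.dualMap ψ = u := by
    rwa [← LinearMap.range_dualMap_eq_dualAnnihilator_ker] at u_mem
  have ψ_apply (v : V) : ψ (A v) = u v := LinearMap.congr_fun hψ v
  obtain ⟨φ, φ_eq, φ_le⟩ := exists_extension_of_le_sublinear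
    ⟨LinearMap.range A, ψ.domRestrict (LinearMap.range A)⟩ N N_hom N_add
    (by rintro ⟨_, v, rfl⟩; exact (ψ_apply v).trans_le (hu v))
  exact ⟨φ, LinearMap.ext fun v => (φ_eq ⟨A v, v, rfl⟩).trans (ψ_apply v), φ_le⟩

theorem exists_mem_Icc_forall_eq_sum_mul {K : Type*} [Fintype K] {φ : (K → ℝ) →ₗ[ℝ] ℝ}
    (hφ : ∀ v, φ v ≤ ∑ k, |v k|) :
    ∃ g : K → ℝ, (∀ k, g k ∈ Icc (-1 : ℝ) 1) ∧ ∀ v, φ v = ∑ k, v k * g k := by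
  classical
  have sum_abs_single (k : K) (c : ℝ) : ∑ l, |(Pi.single k c : K → ℝ) l| = |c| := by
    rw [Fintype.sum_eq_single k fun l hl => by rw [Pi.single_eq_of_ne hl, abs_zero],
      Pi.single_eq_same]
  refine ⟨fun k => φ (Pi.single k 1), fun k => ⟨?_, ?_⟩, fun v => ?_⟩
  · have h := hφ (Pi.single k (-1))
    rw [sum_abs_single, Pi.single_neg, map_neg, abs_neg, abs_one] at h
    linarith
  · simpa only [sum_abs_single, abs_one] using hφ (Pi.single k 1)
  · calc φ v = φ (∑ k, v k • Pi.single k 1) := by rw [← pi_eq_sum_univ' v]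
      _ = ∑ k, v k * φ (Pi.single k 1) := by simp only [map_sum, map_smul, smul_eq_mul]

theorem mem_closure_of_equicontinuous_of_forall_eqOn {X α : Type*} [TopologicalSpace X]
    [CompactSpace X] [PseudoMetricSpace α] {S : Set C(X, α)} {f : C(X, α)}
    (hS : Equicontinuous fun (g : S) (x : X) => (g : C(X, α)) x)
    (h : ∀ t : Finset X, ∃ g ∈ S, EqOn g f t) : f ∈ closure S := by
  refine Metric.mem_closure_iff.2 fun ε hε => ?_
  let U (x : X) : Set X :=
    {y | dist (f y) (f x) < ε / 2 ∧ ∀ g : S, dist ((g : C(X, α)) x) ((g : C(X, α)) y) < ε / 2}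
  have U_mem (x : X) : U x ∈ 𝓝 x :=
    (Metric.tendsto_nhds.1 f.continuous.continuousAt _ (half_pos hε)).and
      (Metric.equicontinuousAt_iff_right.1 (hS x) _ (half_pos hε))
  obtain ⟨t, ht⟩ := CompactSpace.elim_nhds_subcover U U_mem
  obtain ⟨g, hg, hgf⟩ := h t
  refine ⟨g, hg, (ContinuousMap.dist_lt_iff hε).2 fun y => ?_⟩
  obtain ⟨x, hx, hfy, hgy⟩ : ∃ x ∈ t, y ∈ U x := by
    simpa only [mem_iUnion, exists_prop] using ht.ge (mem_univ y)
  calc dist (f y) (g y) ≤ dist (f y) (f x) + dist (f x) (g y) := dist_triangle _ _ _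
    _ = dist (f y) (f x) + dist (g x) (g y) := by rw [hgf hx]
    _ < ε / 2 + ε / 2 := add_lt_add hfy (hgy ⟨g, hg⟩)
    _ = ε := add_halves ε

theorem lipschitzWith_card_of_sub_le_sum_abs {K : Type*} [Fintype K] {s : Set (K → ℝ)}
    {f : s → ℝ} (hf : ∀ p q : s, f p - f q ≤ ∑ k, |(p : K → ℝ) k - (q : K → ℝ) k|) :
    LipschitzWith (Fintype.card K) f := by
  refine LipschitzWith.of_le_add_mul _ fun p q => sub_le_iff_le_add'.1 ?_
  calc f p - f q ≤ ∑ k, |(p : K → ℝ) k - (q : K → ℝ) k| := hf p q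
    _ ≤ ∑ _k : K, dist p q := Finset.sum_le_sum fun k _ => dist_le_pi_dist p.1 q.1 k
    _ = (Fintype.card K : NNReal) * dist p q := by simp

section MatrixGame

variable {n m : ℕ}

/-- The expected payoff `∑ i j, x i * y j * M i j` of the matrix game `M` under the mixed strategies
`x` and `y`; `matValue M` is its maximin over the two simplices. -/
def payoff (M : Fin n → Fin m → ℝ) (x : Fin n → ℝ) (y : Fin m → ℝ) : ℝ :=
  ∑ i, ∑ j, x i * y j * M i j

theorem fsimplex_nonempty [NeZero n] : (fsimplex n).Nonempty :=
  ⟨_, single_mem_stdSimplex ℝ 0⟩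

theorem continuous_payoff (M : Fin n → Fin m → ℝ) :
    Continuous fun p : (Fin n → ℝ) × (Fin m → ℝ) => payoff M p.1 p.2 := by
  unfold payoff
  fun_prop

theorem bddBelow_payoff (M : Fin n → Fin m → ℝ) (x : Fin n → ℝ) :
    BddBelow (payoff M x '' fsimplex m) :=
  ((isCompact_stdSimplex ℝ (Fin m)).image
    ((continuous_payoff M).comp (Continuous.prodMk_right x))).bddBelow

theorem payoff_const (c : ℝ) {x : Fin n → ℝ} {y : Fin m → ℝ} (hx : x ∈ fsimplex n)
    (hy : y ∈ fsimplex m) : payoff (fun _ _ => c) x y = c := by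
  simp only [payoff, ← Finset.sum_mul, ← Finset.mul_sum, hx.2, hy.2, one_mul]

theorem payoff_sub (M N : Fin n → Fin m → ℝ) (x : Fin n → ℝ) (y : Fin m → ℝ) :
    payoff (fun i j => M i j - N i j) x y = payoff M x y - payoff N x y := by
  simp only [payoff, mul_sub, Finset.sum_sub_distrib]

theorem payoff_const_mul (a : ℝ) (M : Fin n → Fin m → ℝ) (x : Fin n → ℝ) (y : Fin m → ℝ) :
    payoff (fun i j => a * M i j) x y = a * payoff M x y := by
  simp only [payoff, Finset.mul_sum, mul_left_comm]

theorem payoff_mono {M N : Fin n → Fin m → ℝ} {x : Fin n → ℝ} {y : Fin m → ℝ}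
    (hx : x ∈ fsimplex n) (hy : y ∈ fsimplex m) (h : ∀ i j, M i j ≤ N i j) :
    payoff M x y ≤ payoff N x y :=
  Finset.sum_le_sum fun i _ => Finset.sum_le_sum fun j _ =>
    mul_le_mul_of_nonneg_left (h i j) (mul_nonneg (hx.1 i) (hy.1 j))

theorem payoff_single_left (M : Fin n → Fin m → ℝ) (i : Fin n) (y : Fin m → ℝ) :
    payoff M (Pi.single i 1) y = ∑ j, y j * M i j := by
  rw [payoff, Fintype.sum_eq_single i fun i' hi' => by simp [hi']]
  simp only [Pi.single_eq_same, one_mul]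

theorem payoff_single_right (M : Fin n → Fin m → ℝ) (x : Fin n → ℝ) (j : Fin m) :
    payoff M x (Pi.single j 1) = ∑ i, x i * M i j := by
  refine Finset.sum_congr rfl fun i _ => ?_
  rw [Fintype.sum_eq_single j fun j' hj' => by simp [hj'], Pi.single_eq_same, mul_one]

theorem bddAbove_sInf_payoff [NeZero m] (M : Fin n → Fin m → ℝ) :
    BddAbove ((fun x => sInf (payoff M x '' fsimplex m)) '' fsimplex n) := by
  obtain ⟨y, hy⟩ := fsimplex_nonempty (n := m)
  obtain ⟨B, hB⟩ : BddAbove ((fun x => payoff M x y) '' fsimplex n) :=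
    ((isCompact_stdSimplex ℝ (Fin n)).image
      ((continuous_payoff M).comp (Continuous.prodMk_left y))).bddAbove
  refine ⟨B, forall_mem_image.2 fun x hx => ?_⟩
  exact (csInf_le (bddBelow_payoff M x) (mem_image_of_mem _ hy)).trans
    (hB (mem_image_of_mem _ hx))

theorem le_matValue [NeZero m] {M : Fin n → Fin m → ℝ} {c : ℝ} {x : Fin n → ℝ}
    (hx : x ∈ fsimplex n) (h : ∀ y ∈ fsimplex m, c ≤ payoff M x y) : c ≤ matValue M :=
  (le_csInf (fsimplex_nonempty.image _) (forall_mem_image.2 h)).trans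
    (le_csSup (bddAbove_sInf_payoff M) (mem_image_of_mem _ hx))

theorem matValue_le_of_forall_sInf_le [NeZero n] {M : Fin n → Fin m → ℝ} {c : ℝ}
    (h : ∀ x ∈ fsimplex n, sInf (payoff M x '' fsimplex m) ≤ c) : matValue M ≤ c :=
  csSup_le (fsimplex_nonempty.image _) (forall_mem_image.2 h)

theorem matValue_le [NeZero n] {M : Fin n → Fin m → ℝ} {c : ℝ} {y : Fin m → ℝ}
    (hy : y ∈ fsimplex m) (h : ∀ x ∈ fsimplex n, payoff M x y ≤ c) : matValue M ≤ c :=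
  matValue_le_of_forall_sInf_le fun x hx =>
    (csInf_le (bddBelow_payoff M x) (mem_image_of_mem _ hy)).trans (h x hx)

theorem matValue_sub_le [NeZero n] [NeZero m] {M N : Fin n → Fin m → ℝ} {c : ℝ}
    (h : ∀ i j, M i j - N i j ≤ c) : matValue M - matValue N ≤ c := by
  refine sub_le_iff_le_add'.2 (matValue_le_of_forall_sInf_le fun x hx => ?_)
  refine sub_le_iff_le_add.1 (le_matValue hx fun y hy => ?_)
  have h_inf : sInf (payoff M x '' fsimplex m) ≤ payoff M x y :=
    csInf_le (bddBelow_payoff M x) (mem_image_of_mem _ hy)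
  have h_payoff : payoff M x y - payoff N x y ≤ c := by
    rw [← payoff_sub, ← payoff_const c hx hy]
    exact payoff_mono hx hy h
  linarith

theorem matValue_const_mul {a : ℝ} (ha : 0 ≤ a) (M : Fin n → Fin m → ℝ) :
    matValue (fun i j => a * M i j) = a * matValue M := by
  change sSup ((fun x => sInf (payoff (fun i j => a * M i j) x '' fsimplex m)) '' fsimplex n) =
    a * sSup ((fun x => sInf (payoff M x '' fsimplex m)) '' fsimplex n)
  simp only [sSup_image', sInf_image', payoff_const_mul, Real.mul_iSup_of_nonneg ha,
    Real.mul_iInf_of_nonneg ha]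

theorem matValue_eq_of_saddle {M : Fin n → Fin m → ℝ} {c : ℝ} {i : Fin n} {j : Fin m}
    (hrow : ∀ j', c ≤ M i j') (hcol : ∀ i', M i' j ≤ c) : matValue M = c := by
  have : NeZero n := .of_pos i.pos
  have : NeZero m := .of_pos j.pos
  refine le_antisymm (matValue_le (single_mem_stdSimplex ℝ j) fun x hx => ?_)
    (le_matValue (single_mem_stdSimplex ℝ i) fun y hy => ?_)
  · rw [payoff_single_right]
    exact (convex_Iic c).sum_mem (fun i' _ => hx.1 i') hx.2 fun i' _ => hcol i'
  · rw [payoff_single_left]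
    exact (convex_Ici c).sum_mem (fun j' _ => hy.1 j') hy.2 fun j' _ => hrow j'

end MatrixGame

section GameValue

variable {K : Type*} [Fintype K] {n m : ℕ}

/-- The value `Val (∑ k, p k • G k)` of the non-revealing game, extended from the simplex to all
vectors `p` so that homogeneity in `p` can be stated; the members of `D0` are its restrictions. -/
noncomputable def gameValue (G : K → Fin n → Fin m → ℝ) (p : K → ℝ) : ℝ :=
  matValue fun i j => ∑ k, p k * G k i j

theorem gameValue_smul (G : K → Fin n → Fin m → ℝ) {a : ℝ} (ha : 0 ≤ a) (p : K → ℝ) :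
    gameValue G (a • p) = a * gameValue G p := by
  simp only [gameValue, ← matValue_const_mul ha, Pi.smul_apply, smul_eq_mul, mul_assoc,
    Finset.mul_sum]

theorem gameValue_sub_le [NeZero n] [NeZero m] {G : K → Fin n → Fin m → ℝ}
    (hG : ∀ k i j, G k i j ∈ Icc (-1 : ℝ) 1) (p q : K → ℝ) :
    gameValue G p - gameValue G q ≤ ∑ k, |p k - q k| := by
  refine matValue_sub_le fun i j => ?_
  rw [← Finset.sum_sub_distrib]
  refine Finset.sum_le_sum fun k _ => ?_
  calc p k * G k i j - q k * G k i j = (p k - q k) * G k i j := (sub_mul _ _ _).symm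
    _ ≤ |p k - q k| * |G k i j| := (le_abs_self _).trans_eq (abs_mul _ _)
    _ ≤ |p k - q k| := mul_le_of_le_one_right (abs_nonneg _) (abs_le.2 (hG k i j))

theorem continuous_gameValue [NeZero n] [NeZero m] {G : K → Fin n → Fin m → ℝ}
    (hG : ∀ k i j, G k i j ∈ Icc (-1 : ℝ) 1) : Continuous fun p : Δ K => gameValue G p :=
  (lipschitzWith_card_of_sub_le_sum_abs fun p q : Δ K => gameValue_sub_le hG p q).continuous

end GameValue

section ClosureD0

variable {K : Type*} [Fintype K]

theorem D0_subset_D1 : D0 K ⊆ D1 K := by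
  rintro f ⟨n, m, hn, hm, G, hG, hf⟩ x y a b ha hb
  have : NeZero n := .of_pos hn
  have : NeZero m := .of_pos hm
  calc a * f x - b * f y = gameValue G (a • (x : K → ℝ)) - gameValue G (b • (y : K → ℝ)) := by
        rw [hf, hf, gameValue_smul G ha, gameValue_smul G hb, gameValue, gameValue]
    _ ≤ ∑ k, |a * (x : K → ℝ) k - b * (y : K → ℝ) k| := gameValue_sub_le hG _ _

theorem isClosed_D1 : IsClosed (D1 K) := by
  simp only [D1, ofPred_forall]
  refine isClosed_iInter fun x => isClosed_iInter fun y => isClosed_iInter fun a =>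
    isClosed_iInter fun b => isClosed_iInter fun _ => isClosed_iInter fun _ => ?_
  exact isClosed_le (by fun_prop) continuous_const

theorem sub_le_of_mem_D1 {f : C(Δ K, ℝ)} (hf : f ∈ D1 K) (p q : Δ K) :
    f p - f q ≤ ∑ k, |(p : K → ℝ) k - (q : K → ℝ) k| := by
  simpa only [one_mul] using hf p q 1 1 zero_le_one zero_le_one

theorem mul_le_abs_of_mem_D1 {f : C(Δ K, ℝ)} (hf : f ∈ D1 K) (x : Δ K) (c : ℝ) :
    c * f x ≤ |c| := by
  have sum_abs : ∑ k, |c * (x : K → ℝ) k| = |c| := by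
    simp only [abs_mul, abs_of_nonneg (x.2.1 _), ← Finset.mul_sum, x.2.2, mul_one]
  rcases le_total 0 c with hc | hc
  · simpa only [zero_mul, sub_zero, sum_abs] using hf x x c 0 hc le_rfl
  · simpa only [neg_mul, zero_mul, zero_sub, neg_neg, sum_abs] using
      hf x x 0 (-c) le_rfl (neg_nonneg.2 hc)

theorem add_mul_le_sum_abs_of_mem_D1 {f : C(Δ K, ℝ)} (hf : f ∈ D1 K) (x y : Δ K) (a b : ℝ) :
    a * f x + b * f y ≤ ∑ k, |a * (x : K → ℝ) k + b * (y : K → ℝ) k| := by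
  have same_sign (hab : 0 ≤ a ∧ 0 ≤ b ∨ a ≤ 0 ∧ b ≤ 0) :
      a * f x + b * f y ≤ ∑ k, |a * (x : K → ℝ) k + b * (y : K → ℝ) k| :=
    calc a * f x + b * f y ≤ |a| + |b| :=
          add_le_add (mul_le_abs_of_mem_D1 hf x a) (mul_le_abs_of_mem_D1 hf y b)
      _ = |a + b| := (abs_add_eq_add_abs_iff a b).2 hab |>.symm
      _ = |∑ k, (a * (x : K → ℝ) k + b * (y : K → ℝ) k)| := by
          rw [Finset.sum_add_distrib, ← Finset.mul_sum, ← Finset.mul_sum, x.2.2, y.2.2, mul_one,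
            mul_one]
      _ ≤ ∑ k, |a * (x : K → ℝ) k + b * (y : K → ℝ) k| := Finset.abs_sum_le_sum_abs _ _
  rcases le_total 0 a with ha | ha <;> rcases le_total 0 b with hb | hb
  · exact same_sign (.inl ⟨ha, hb⟩)
  · simpa only [neg_mul, sub_neg_eq_add] using hf x y a (-b) ha (neg_nonneg.2 hb)
  · simpa only [neg_mul, sub_neg_eq_add, add_comm] using hf y x b (-a) hb (neg_nonneg.2 ha)
  · exact same_sign (.inr ⟨ha, hb⟩)

theorem exists_mem_Icc_sum_mul_eq_of_mem_D1 {f : C(Δ K, ℝ)} (hf : f ∈ D1 K) (x y : Δ K) :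
    ∃ g : K → ℝ, (∀ k, g k ∈ Icc (-1 : ℝ) 1) ∧
      ∑ k, (x : K → ℝ) k * g k = f x ∧ ∑ k, (y : K → ℝ) k * g k = f y := by
  let A : ℝ × ℝ →ₗ[ℝ] K → ℝ :=
    (LinearMap.toSpanSingleton ℝ _ (x : K → ℝ)).coprod (LinearMap.toSpanSingleton ℝ _ (y : K → ℝ))
  let u : ℝ × ℝ →ₗ[ℝ] ℝ :=
    (LinearMap.toSpanSingleton ℝ ℝ (f x)).coprod (LinearMap.toSpanSingleton ℝ ℝ (f y))
  obtain ⟨φ, φ_comp, φ_le⟩ :=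
    exists_linearMap_comp_eq_of_le_sublinear A u (fun v => ∑ k, |v k|)
      (fun c hc v => by simp [abs_mul, abs_of_pos hc, Finset.mul_sum])
      (fun v w => by
        rw [← Finset.sum_add_distrib]
        exact Finset.sum_le_sum fun k _ => abs_add_le (v k) (w k))
      (fun c => add_mul_le_sum_abs_of_mem_D1 hf x y c.1 c.2)
  obtain ⟨g, hg, φ_eq⟩ := exists_mem_Icc_forall_eq_sum_mul φ_le
  refine ⟨g, hg, ?_, ?_⟩
  · simpa [A, u, φ_eq] using LinearMap.congr_fun φ_comp (1, 0)
  · simpa [A, u, φ_eq] using LinearMap.congr_fun φ_comp (0, 1)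

theorem exists_mem_D0_forall_apply_eq {f : C(Δ K, ℝ)} (hf : f ∈ D1 K) {n : ℕ} [NeZero n]
    (z : Fin n → Δ K) : ∃ F ∈ D0 K, ∀ i, F (z i) = f (z i) := by
  choose g g_mem g_left g_right using fun i j =>
    exists_mem_Icc_sum_mul_eq_of_mem_D1 hf (z i) (z j)
  let G (k : K) (i j : Fin n) : ℝ := g i j k
  have hG (k : K) (i j : Fin n) : G k i j ∈ Icc (-1 : ℝ) 1 := g_mem i j k
  refine ⟨⟨_, continuous_gameValue hG⟩, ⟨n, n, NeZero.pos n, NeZero.pos n, G, hG, fun _ => rfl⟩,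
    fun i => ?_⟩
  exact matValue_eq_of_saddle (fun j => (g_left i j).ge) fun i' => (g_right i' i).le

theorem exists_mem_D0_eqOn [Nonempty K] {f : C(Δ K, ℝ)} (hf : f ∈ D1 K) (t : Finset (Δ K)) :
    ∃ F ∈ D0 K, EqOn F f t := by
  classical
  obtain ⟨p⟩ : Nonempty (Δ K) := inferInstanceAs (Nonempty (stdSimplex ℝ K))
  let e := (insert p t).equivFin
  have : NeZero (insert p t).card := ⟨Finset.insert_ne_empty p t ∘ Finset.card_eq_zero.1⟩
  obtain ⟨F, hF, F_eq⟩ := exists_mem_D0_forall_apply_eq hf fun i => (e.symm i : Δ K)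
  refine ⟨F, hF, fun q hq => ?_⟩
  simpa only [Equiv.symm_apply_apply] using F_eq (e ⟨q, Finset.mem_insert_of_mem hq⟩)

theorem equicontinuous_D0 : Equicontinuous fun (F : D0 K) (p : Δ K) => (F : C(Δ K, ℝ)) p :=
  (LipschitzWith.uniformEquicontinuous _ (Fintype.card K) fun F =>
    lipschitzWith_card_of_sub_le_sum_abs (sub_le_of_mem_D1 (D0_subset_D1 F.2))).equicontinuous

theorem D1_subset_closure_D0 [Nonempty K] : D1 K ⊆ closure (D0 K) := by
  have : CompactSpace (Δ K) := inferInstanceAs (CompactSpace (stdSimplex ℝ K))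
  exact fun _ hf =>
    mem_closure_of_equicontinuous_of_forall_eqOn equicontinuous_D0 (exists_mem_D0_eqOn hf)

end ClosureD0

end Stmt5

/-- **Lemma 3 (Renault–Venel).** The closure of `D₀` in `C(X,ℝ)` for the uniform norm
(`X = Δ(K)` compact, so this is the closure for the compact-open topology) is `D₁`. -/
theorem stmt5 (K : Type*) [Fintype K] [Nonempty K] :
    closure (Stmt5.D0 K) = Stmt5.D1 K :=
  (closure_minimal Stmt5.D0_subset_D1 Stmt5.isClosed_D1).antisymm Stmt5.D1_subset_closure_D0
end

section
/- The map d_0 defined by d_0(u,v) = sup_{f ∈ D_0} (u(f) − v(f)) is a distance on Δ(X) which metrizes the weak-* topology on Δ(X), and d_0 = d_1 on Δ(X). -/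
open Set MeasureTheory

namespace Stmt6

variable (K : Type*) [Fintype K]

/-- The simplex `Δ(K)` of probability vectors on `K`, inside `K → ℝ`
(endowed with the ℓ¹ norm, written explicitly as sums of absolute values below). -/
def Δ : Set (K → ℝ) := {p | (∀ k, 0 ≤ p k) ∧ ∑ k, p k = 1}

/-- The probability simplex on `Fin n`. -/
def fsimplex (n : ℕ) : Set (Fin n → ℝ) := {x | (∀ i, 0 ≤ x i) ∧ ∑ i, x i = 1}

/-- The value `max_{x ∈ Δ(I)} min_{y ∈ Δ(J)} Σ_{i,j} x(i)·y(j)·M(i,j)` of a matrix game. -/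
noncomputable def matValue {n m : ℕ} (M : Fin n → Fin m → ℝ) : ℝ :=
  sSup ((fun x => sInf ((fun y => ∑ i, ∑ j, x i * y j * M i j) '' fsimplex m)) '' fsimplex n)

/-- `D₀`: the set of non-revealing game functions `p ↦ Val(Σ_k p^k G^k)`, for families
`(G^k)` of `I×J` matrices with entries in `[−1,1]` (with `I`, `J` nonempty finite). -/
def D0 : Set C(Δ K, ℝ) :=
  {f | ∃ (n m : ℕ), 0 < n ∧ 0 < m ∧ ∃ G : K → Fin n → Fin m → ℝ,
    (∀ k i j, G k i j ∈ Icc (-1 : ℝ) 1) ∧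
    ∀ p : Δ K, f p = matValue (fun i j => ∑ k, (p : K → ℝ) k * G k i j)}

/-- `D₁ = {f ∈ C(Δ(K),ℝ) : ∀ x,y, ∀ a,b ≥ 0, a·f(x) − b·f(y) ≤ ‖a·x − b·y‖₁}`. -/
def D1 : Set C(Δ K, ℝ) :=
  {f | ∀ x y : Δ K, ∀ a b : ℝ, 0 ≤ a → 0 ≤ b →
    a * f x - b * f y ≤ ∑ k, |a * (x : K → ℝ) k - b * (y : K → ℝ) k|}

/-- The pairing `u(f) = ∫_X f du`. -/
noncomputable def pairing (u : ProbabilityMeasure (Δ K)) (f : C(Δ K, ℝ)) : ℝ :=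
  ∫ p, f p ∂(u : Measure (Δ K))

noncomputable def d0 (u v : ProbabilityMeasure (Δ K)) : ℝ :=
  sSup ((fun f => pairing K u f - pairing K v f) '' D0 K)

noncomputable def d1 (u v : ProbabilityMeasure (Δ K)) : ℝ :=
  sSup ((fun f => pairing K u f - pairing K v f) '' D1 K)

end Stmt6

/-!
The functions in `D1` are uniformly bounded and equi-Lipschitz, so `D1` is compact; it is symmetric
and contains a positive multiple of every Lipschitz function. For such a family the supremum of the
integral gaps is a continuous distance which controls the integrals of all Lipschitz functions, so
it metrizes weak convergence. Passing from a family to its closure does not change the supremum, so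
it remains to see that `D0` is dense in `D1`.

Let `f ∈ D1` and let `z i` be finitely many points. By conic duality, the inequalities
`a * f (z i) - b * f (z j) ≤ ‖a • z i - b • z j‖₁` for `a, b ≥ 0` provide `c i j` with entries in
`[-1, 1]` such that `⟨z i, c i j⟩ ≥ f (z i)` and `⟨z j, c i j⟩ ≤ f (z j)`. In the game with payoff
`⟨p, c i j⟩` at `p`, row `i` then guarantees at least `f (z i)` at `p = z i` and column `i` at most
`f (z i)`, so its value agrees with `f` at every `z i`. Since both functions are Lipschitz with a
constant depending on `K` only, a fine net of points makes them uniformly close.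
-/

namespace Stmt6

open Filter Topology
open scoped NNReal

section IntegralProbabilityMetric

variable {X : Type*}

section Basic

variable [TopologicalSpace X] [MeasurableSpace X] {F : Set C(X, ℝ)}

/-- The integral probability metric of a family `F` of continuous test functions: the largest
gap between the integrals of a member of `F` against `u` and against `v`. For `F = D0 K` and
`F = D1 K` it is by definition `d0` and `d1`. -/
noncomputable def ipm (F : Set C(X, ℝ)) (u v : ProbabilityMeasure X) : ℝ :=
  sSup ((fun f => ∫ x, f x ∂(u : Measure X) - ∫ x, f x ∂(v : Measure X)) '' F)

lemma ipm_self (F : Set C(X, ℝ)) (u : ProbabilityMeasure X) : ipm F u u = 0 := by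
  obtain rfl | hF := F.eq_empty_or_nonempty
  · simp [ipm]
  · simp [ipm, hF.image_const]

lemma ipm_nonneg (h0 : 0 ∈ F) (u v : ProbabilityMeasure X) : 0 ≤ ipm F u v :=
  Real.sSup_nonneg' ⟨_, ⟨0, h0, rfl⟩, by simp⟩

lemma ipm_comm (hneg : ∀ f ∈ F, -f ∈ F) (u v : ProbabilityMeasure X) :
    ipm F u v = ipm F v u := by
  have image_subset (u v : ProbabilityMeasure X) :
      (fun f : C(X, ℝ) => ∫ x, f x ∂(u : Measure X) - ∫ x, f x ∂(v : Measure X)) '' F ⊆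
        (fun f : C(X, ℝ) => ∫ x, f x ∂(v : Measure X) - ∫ x, f x ∂(u : Measure X)) '' F := by
    rintro _ ⟨f, hf, rfl⟩
    refine ⟨-f, hneg f hf, ?_⟩
    simp only [ContinuousMap.neg_apply, integral_neg]
    ring
  exact congrArg sSup ((image_subset u v).antisymm (image_subset v u))

end Basic

section Compact

variable [TopologicalSpace X] [CompactSpace X] [MeasurableSpace X] [OpensMeasurableSpace X]
  {F : Set C(X, ℝ)}

lemma lipschitzWith_integral (u : ProbabilityMeasure X) :
    LipschitzWith 1 fun f : C(X, ℝ) => ∫ x, f x ∂(u : Measure X) := by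
  have integrable (f : C(X, ℝ)) : Integrable f (u : Measure X) :=
    (BoundedContinuousFunction.mkOfCompact f).integrable _
  refine LipschitzWith.of_dist_le_mul fun f g => ?_
  rw [dist_eq_norm, ← integral_sub (integrable f) (integrable g), NNReal.coe_one, one_mul,
    dist_eq_norm]
  simpa using norm_integral_le_of_norm_le_const (μ := (u : Measure X))
    (ae_of_all _ (f - g).norm_coe_le_norm)

lemma continuous_integral_prod :
    Continuous fun p : C(X, ℝ) × ProbabilityMeasure X => ∫ x, p.1 x ∂(p.2 : Measure X) :=
  continuous_prod_of_continuous_lipschitzWith _ 1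
    ProbabilityMeasure.continuous_integral_continuousMap lipschitzWith_integral

lemma continuous_integral_sub_integral (u v : ProbabilityMeasure X) :
    Continuous fun f : C(X, ℝ) => ∫ x, f x ∂(u : Measure X) - ∫ x, f x ∂(v : Measure X) :=
  (lipschitzWith_integral u).continuous.sub (lipschitzWith_integral v).continuous

lemma ipm_closure (hF : IsCompact (closure F)) (u v : ProbabilityMeasure X) :
    ipm (closure F) u v = ipm F u v := by
  obtain rfl | hne := F.eq_empty_or_nonempty
  · rw [closure_empty]
  have hφ := continuous_integral_sub_integral u v
  have isLUB_closure : IsLUB (_ '' closure F) (ipm (closure F) u v) :=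
    isLUB_csSup (hne.closure.image _) (hF.bddAbove_image hφ.continuousOn)
  have isLUB : IsLUB (_ '' F) (ipm (closure F) u v) :=
    (isLUB_iff_of_subset_of_subset_closure (image_mono subset_closure)
      (image_closure_subset_closure_image hφ)).2 isLUB_closure
  exact (isLUB.csSup_eq (hne.image _)).symm

lemma integral_sub_integral_le_ipm (hF : IsCompact F) {f : C(X, ℝ)} (hf : f ∈ F)
    (u v : ProbabilityMeasure X) :
    ∫ x, f x ∂(u : Measure X) - ∫ x, f x ∂(v : Measure X) ≤ ipm F u v :=
  le_csSup (hF.bddAbove_image (continuous_integral_sub_integral u v).continuousOn)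
    (mem_image_of_mem _ hf)

lemma abs_integral_sub_integral_le_ipm (hF : IsCompact F) (hneg : ∀ f ∈ F, -f ∈ F)
    {f : C(X, ℝ)} (hf : f ∈ F) (u v : ProbabilityMeasure X) :
    |∫ x, f x ∂(u : Measure X) - ∫ x, f x ∂(v : Measure X)| ≤ ipm F u v := by
  refine abs_sub_le_iff.2 ⟨integral_sub_integral_le_ipm hF hf u v, ?_⟩
  rw [ipm_comm hneg]
  exact integral_sub_integral_le_ipm hF hf v u

lemma ipm_triangle (hF : IsCompact F) (u v w : ProbabilityMeasure X) :
    ipm F u w ≤ ipm F u v + ipm F v w := by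
  obtain rfl | hne := F.eq_empty_or_nonempty
  · simp [ipm]
  refine csSup_le (hne.image _) ?_
  rintro _ ⟨f, hf, rfl⟩
  linarith [integral_sub_integral_le_ipm hF hf u v, integral_sub_integral_le_ipm hF hf v w]

lemma continuous_ipm (hF : IsCompact F) (u : ProbabilityMeasure X) : Continuous (ipm F u) := by
  have jointly_continuous : Continuous fun p : ProbabilityMeasure X × C(X, ℝ) =>
      ∫ x, p.2 x ∂(u : Measure X) - ∫ x, p.2 x ∂(p.1 : Measure X) :=
    ((lipschitzWith_integral u).continuous.comp continuous_snd).sub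
      (continuous_integral_prod.comp continuous_swap)
  exact hF.continuous_sSup jointly_continuous

end Compact

section Metrization

variable [PseudoEMetricSpace X] {F : Set C(X, ℝ)}

/-- A compact symmetric family of test functions containing a positive multiple of every Lipschitz
function. The integral probability metric of such a family metrizes weak convergence. -/
structure IsMetrizing (F : Set C(X, ℝ)) : Prop where
  isCompact : IsCompact F
  neg_mem : ∀ f ∈ F, -f ∈ F
  exists_smul_mem : ∀ (f : C(X, ℝ)) (L : ℝ≥0), LipschitzWith L f → ∃ c > (0 : ℝ), c • f ∈ F

namespace IsMetrizing

lemma zero_mem (hF : IsMetrizing F) : 0 ∈ F := by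
  obtain ⟨c, -, hc⟩ := hF.exists_smul_mem 0 0 (LipschitzWith.const 0)
  rwa [smul_zero] at hc

variable [CompactSpace X] [MeasurableSpace X]

lemma nhds_eq_comap_ipm [OpensMeasurableSpace X] (hF : IsMetrizing F)
    (u : ProbabilityMeasure X) : 𝓝 u = comap (ipm F u) (𝓝 0) := by
  refine le_antisymm ?_ ?_
  · rw [← tendsto_iff_comap, ← ipm_self F u]
    exact (continuous_ipm hF.isCompact u).tendsto u
  · refine tendsto_id'.1 (tendsto_iff_forall_lipschitz_integral_tendsto.2 ?_)
    rintro f - ⟨L, hL⟩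
    obtain ⟨c, hc, hcf⟩ := hF.exists_smul_mem ⟨f, hL.continuous⟩ L hL
    have norm_sub_le (v : ProbabilityMeasure X) :
        ‖∫ x, f x ∂(v : Measure X) - ∫ x, f x ∂(u : Measure X)‖ ≤ c⁻¹ * ipm F u v := by
      have h := abs_integral_sub_integral_le_ipm hF.isCompact hF.neg_mem hcf u v
      simp only [ContinuousMap.smul_apply, ContinuousMap.coe_mk, smul_eq_mul, integral_const_mul,
        ← mul_sub, abs_mul, abs_of_pos hc] at h
      rwa [Real.norm_eq_abs, abs_sub_comm, le_inv_mul_iff₀ hc]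
    have tendsto_bound : Tendsto (fun v => c⁻¹ * ipm F u v) (comap (ipm F u) (𝓝 0)) (𝓝 0) := by
      simpa only [mul_zero] using
        (tendsto_comap (f := ipm F u) (x := 𝓝 (0 : ℝ))).const_mul c⁻¹
    exact tendsto_iff_norm_sub_tendsto_zero.2
      (squeeze_zero (fun _ => norm_nonneg _) norm_sub_le tendsto_bound)

lemma ipm_eq_zero_iff [BorelSpace X] (hF : IsMetrizing F) {u v : ProbabilityMeasure X} :
    ipm F u v = 0 ↔ u = v := by
  refine ⟨fun h => ?_, fun h => h ▸ ipm_self F u⟩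
  have pure_le : pure v ≤ 𝓝 u := by
    rw [hF.nhds_eq_comap_ipm, ← tendsto_iff_comap, tendsto_pure_left]
    exact fun s hs => h ▸ mem_of_mem_nhds hs
  exact (pure_le_nhds_iff.1 pure_le).symm

lemma isOpen_iff [OpensMeasurableSpace X] (hF : IsMetrizing F)
    {s : Set (ProbabilityMeasure X)} :
    IsOpen s ↔ ∀ u ∈ s, ∃ ε > 0, ∀ v, ipm F u v < ε → v ∈ s := by
  have hasBasis (u : ProbabilityMeasure X) :
      (𝓝 u).HasBasis (fun ε : ℝ => 0 < ε) fun ε => {v | ipm F u v < ε} := by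
    rw [hF.nhds_eq_comap_ipm]
    refine (Metric.nhds_basis_ball.comap (ipm F u)).congr (fun _ => Iff.rfl) fun ε _ => ?_
    ext v
    simp [abs_of_nonneg (ipm_nonneg hF.zero_mem u v)]
  simp only [isOpen_iff_mem_nhds, (hasBasis _).mem_iff, subset_def, mem_ofPred_eq, gt_iff_lt]

end IsMetrizing

end Metrization

end IntegralProbabilityMetric

section MatrixGame

variable {n m : ℕ} {M N : Fin n → Fin m → ℝ}

instance [NeZero n] : Nonempty (fsimplex n) := inferInstanceAs (Nonempty (stdSimplex ℝ (Fin n)))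

instance : CompactSpace (fsimplex n) := inferInstanceAs (CompactSpace (stdSimplex ℝ (Fin n)))

/-- The expected payoff of the matrix game `M` under the mixed strategies `x` and `y`. -/
def payoff (M : Fin n → Fin m → ℝ) (x : Fin n → ℝ) (y : Fin m → ℝ) : ℝ :=
  ∑ i, ∑ j, x i * y j * M i j

lemma matValue_eq_iSup_iInf (M : Fin n → Fin m → ℝ) :
    matValue M = ⨆ x : fsimplex n, ⨅ y : fsimplex m, payoff M x y := by
  simp only [matValue, sSup_image', sInf_image', payoff]

lemma payoff_mono (h : ∀ i j, M i j ≤ N i j) (x : fsimplex n) (y : fsimplex m) :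
    payoff M x y ≤ payoff N x y :=
  Finset.sum_le_sum fun i _ => Finset.sum_le_sum fun j _ =>
    mul_le_mul_of_nonneg_left (h i j) (mul_nonneg (x.2.1 i) (y.2.1 j))

lemma payoff_const_mul (a : ℝ) (M : Fin n → Fin m → ℝ) (x : Fin n → ℝ) (y : Fin m → ℝ) :
    payoff (fun i j => a * M i j) x y = a * payoff M x y := by
  simp only [payoff, Finset.mul_sum, mul_left_comm]

lemma payoff_add_const (M : Fin n → Fin m → ℝ) (e : ℝ) (x : fsimplex n) (y : fsimplex m) :
    payoff (fun i j => M i j + e) x y = payoff M x y + e := by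
  simp only [payoff, mul_add, Finset.sum_add_distrib, ← Finset.sum_mul, ← Finset.mul_sum,
    x.2.2, y.2.2, mul_one, one_mul]

lemma payoff_single_left (M : Fin n → Fin m → ℝ) (i : Fin n) (y : Fin m → ℝ) :
    payoff M (Pi.single i 1) y = ∑ j, y j * M i j := by
  simp [payoff, Pi.single_apply]

lemma payoff_single_right (M : Fin n → Fin m → ℝ) (x : Fin n → ℝ) (j : Fin m) :
    payoff M x (Pi.single j 1) = ∑ i, x i * M i j := by
  simp [payoff, Pi.single_apply]

lemma continuous_payoff_left (M : Fin n → Fin m → ℝ) (y : Fin m → ℝ) :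
    Continuous fun x => payoff M x y := by
  unfold payoff
  fun_prop

lemma continuous_payoff_right (M : Fin n → Fin m → ℝ) (x : Fin n → ℝ) :
    Continuous (payoff M x) := by
  unfold payoff
  fun_prop

lemma bddBelow_range_payoff (M : Fin n → Fin m → ℝ) (x : Fin n → ℝ) :
    BddBelow (range fun y : fsimplex m => payoff M x y) :=
  (isCompact_range ((continuous_payoff_right M x).comp continuous_subtype_val)).bddBelow

lemma bddAbove_range_iInf_payoff [NeZero m] (M : Fin n → Fin m → ℝ) :
    BddAbove (range fun x : fsimplex n => ⨅ y : fsimplex m, payoff M x y) := by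
  obtain ⟨y⟩ : Nonempty (fsimplex m) := inferInstance
  have bddAbove_payoff : BddAbove (range fun x : fsimplex n => payoff M x y) :=
    (isCompact_range ((continuous_payoff_left M y).comp continuous_subtype_val)).bddAbove
  exact bddAbove_payoff.range_mono _ fun x => ciInf_le (bddBelow_range_payoff M x) y

lemma matValue_mono [NeZero m] (h : ∀ i j, M i j ≤ N i j) : matValue M ≤ matValue N := by
  rw [matValue_eq_iSup_iInf, matValue_eq_iSup_iInf]
  exact ciSup_mono (bddAbove_range_iInf_payoff N) fun x =>
    ciInf_mono (bddBelow_range_payoff M x) (payoff_mono h x)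

lemma matValue_const_mul {a : ℝ} (ha : 0 ≤ a) (M : Fin n → Fin m → ℝ) :
    matValue (fun i j => a * M i j) = a * matValue M := by
  simp only [matValue_eq_iSup_iInf, payoff_const_mul, Real.mul_iSup_of_nonneg ha,
    Real.mul_iInf_of_nonneg ha]

lemma matValue_add_const [NeZero n] [NeZero m] (M : Fin n → Fin m → ℝ) (e : ℝ) :
    matValue (fun i j => M i j + e) = matValue M + e := by
  simp only [matValue_eq_iSup_iInf, payoff_add_const, ciSup_add (bddAbove_range_iInf_payoff M),
    ciInf_add (bddBelow_range_payoff M _)]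

lemma le_matValue [NeZero m] {c : ℝ} (i : Fin n) (h : ∀ j, c ≤ M i j) : c ≤ matValue M := by
  rw [matValue_eq_iSup_iInf]
  refine le_ciSup_of_le (bddAbove_range_iInf_payoff M)
    ⟨Pi.single i 1, single_mem_stdSimplex ℝ i⟩ (le_ciInf fun y => ?_)
  rw [payoff_single_left]
  calc c = ∑ j, (y : Fin m → ℝ) j * c := by rw [← Finset.sum_mul, y.2.2, one_mul]
    _ ≤ ∑ j, (y : Fin m → ℝ) j * M i j :=
      Finset.sum_le_sum fun j _ => mul_le_mul_of_nonneg_left (h j) (y.2.1 j)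

lemma matValue_le [NeZero n] {c : ℝ} (j : Fin m) (h : ∀ i, M i j ≤ c) : matValue M ≤ c := by
  rw [matValue_eq_iSup_iInf]
  refine ciSup_le fun x => ciInf_le_of_le (bddBelow_range_payoff M x)
    ⟨Pi.single j 1, single_mem_stdSimplex ℝ j⟩ ?_
  rw [payoff_single_right]
  calc ∑ i, (x : Fin n → ℝ) i * M i j ≤ ∑ i, (x : Fin n → ℝ) i * c :=
      Finset.sum_le_sum fun i _ => mul_le_mul_of_nonneg_left (h i) (x.2.1 i)
    _ = c := by rw [← Finset.sum_mul, x.2.2, one_mul]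

end MatrixGame

section ConicDuality

variable {ι E : Type*} [Fintype ι] [TopologicalSpace E] [AddCommGroup E] [IsTopologicalAddGroup E]
  [Module ℝ E] [ContinuousSMul ℝ E] [LocallyConvexSpace ℝ E]

lemma exists_sum_smul_sub_mem (C : ProperCone ℝ E) (v : ι → E) (e : E)
    (h : ∀ φ : StrongDual ℝ E, (∀ x ∈ C, 0 ≤ φ x) → φ e ≤ ∑ k, |φ (v k)|) :
    ∃ c ∈ Icc (-1 : ι → ℝ) 1, ∑ k, c k • v k - e ∈ C := by
  by_contra! hC
  have convex_image : Convex ℝ ((fun c : ι → ℝ => ∑ k, c k • v k - e) '' Icc (-1) 1) :=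
    (convex_Icc _ _).affine_image
      ((Fintype.linearCombination ℝ v).toAffineMap - AffineMap.const ℝ (ι → ℝ) e)
  obtain ⟨φ, hφC, hφ⟩ := C.hyperplane_separation convex_image
    (isCompact_Icc.image (by fun_prop)) (disjoint_left.2 (forall_mem_image.2 hC))
  let c : ι → ℝ := fun k => SignType.sign (φ (v k))
  have hc : c ∈ Icc (-1 : ι → ℝ) 1 := by
    refine ⟨fun k => ?_, fun k => ?_⟩ <;> cases hsign : SignType.sign (φ (v k)) <;>
      simp [c, hsign]
  have eval : φ (∑ k, c k • v k - e) = ∑ k, |φ (v k)| - φ e := by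
    simp [c]
  linarith [h φ hφC, hφ _ (mem_image_of_mem _ hc)]

end ConicDuality

lemma dist_le_of_eqOn_net {X : Type*} [PseudoMetricSpace X] [CompactSpace X] {L : ℝ≥0}
    {f g : C(X, ℝ)} (hf : LipschitzWith L f) (hg : LipschitzWith L g) {t : Set X} (hfg : EqOn f g t)
    {δ : ℝ} (hδ : 0 ≤ δ) (ht : ∀ x, ∃ y ∈ t, dist x y ≤ δ) : dist f g ≤ 2 * L * δ := by
  refine (ContinuousMap.dist_le (by positivity)).2 fun x => ?_
  obtain ⟨y, hy, hxy⟩ := ht x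
  calc dist (f x) (g x) ≤ dist (f x) (f y) + dist (g x) (g y) := by
        rw [← hfg hy]
        exact dist_triangle_right _ _ _
    _ ≤ L * dist x y + L * dist x y := add_le_add (hf.dist_le_mul x y) (hg.dist_le_mul x y)
    _ ≤ L * δ + L * δ := by gcongr
    _ = 2 * L * δ := by ring

section Simplex

variable {K : Type*} [Fintype K]

local notation "‖" z "‖₁" => norm (WithLp.toLp 1 z)

instance : CompactSpace (Δ K) := inferInstanceAs (CompactSpace (stdSimplex ℝ K))

instance [Nonempty K] : Nonempty (Δ K) := inferInstanceAs (Nonempty (stdSimplex ℝ K))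

lemma l1_norm_coe (p : Δ K) : ‖(p : K → ℝ)‖₁ = 1 := by
  simp [PiLp.norm_eq_of_L1, abs_of_nonneg (p.2.1 _), p.2.2]

lemma norm_le_l1_norm (z : K → ℝ) : ‖z‖ ≤ ‖z‖₁ :=
  (pi_norm_le_iff_of_nonneg (norm_nonneg _)).2 (PiLp.norm_apply_le (WithLp.toLp 1 z))

lemma l1_norm_le_card_mul_norm (z : K → ℝ) : ‖z‖₁ ≤ Fintype.card K * ‖z‖ := by
  rw [PiLp.norm_eq_of_L1, ← nsmul_eq_mul]
  exact Finset.sum_le_card_nsmul _ _ _ fun k _ => norm_le_pi_norm z k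

lemma abs_sum_le_l1_norm (z : K → ℝ) : |∑ k, z k| ≤ ‖z‖₁ := by
  rw [PiLp.norm_eq_of_L1]
  exact Finset.abs_sum_le_sum_abs _ _

lemma sum_mul_le_l1_norm {c : K → ℝ} (hc : ∀ k, c k ∈ Icc (-1 : ℝ) 1) (z : K → ℝ) :
    ∑ k, z k * c k ≤ ‖z‖₁ := by
  rw [PiLp.norm_eq_of_L1]
  refine Finset.sum_le_sum fun k _ => (le_abs_self _).trans ?_
  rw [abs_mul]
  exact mul_le_of_le_one_right (abs_nonneg _) (abs_le.2 (hc k))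

lemma exists_sum_mul_ge_and_le {x y : K → ℝ} {α β : ℝ}
    (h : ∀ a b : ℝ, 0 ≤ a → 0 ≤ b → a * α - b * β ≤ ‖a • x - b • y‖₁) :
    ∃ c : K → ℝ, (∀ k, c k ∈ Icc (-1 : ℝ) 1) ∧ α ≤ ∑ k, x k * c k ∧ ∑ k, y k * c k ≤ β := by
  have dual_bound (φ : StrongDual ℝ (ℝ × ℝ)) (hφ : ∀ z ∈ ProperCone.positive ℝ (ℝ × ℝ), 0 ≤ φ z) :
      φ (α, -β) ≤ ∑ k, |φ (x k, -y k)| := by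
    have eval (s t : ℝ) : φ (s, -t) = φ (1, 0) * s - φ (0, 1) * t := by
      rw [show (s, -t) = s • ((1 : ℝ), (0 : ℝ)) - t • ((0 : ℝ), (1 : ℝ)) by simp]
      simp only [map_sub, map_smul, smul_eq_mul, mul_comm]
    have bound := h (φ (1, 0)) (φ (0, 1)) (hφ _ (by simp [Prod.le_def]))
      (hφ _ (by simp [Prod.le_def]))
    simpa [eval, PiLp.norm_eq_of_L1] using bound
  -- Both inequalities at once: `∑ k, c k • (x k, -y k)` must dominate `(α, -β)` in `ℝ × ℝ`.
  obtain ⟨c, hc, hpos⟩ := exists_sum_smul_sub_mem _ (fun k => (x k, -y k)) (α, -β) dual_bound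
  simp only [Prod.smul_mk, smul_eq_mul, mul_neg, ProperCone.mem_positive, sub_nonneg, Prod.le_def,
    Prod.fst_sum, Prod.snd_sum, Finset.sum_neg_distrib, neg_le_neg_iff] at hpos
  simp only [mul_comm (c _)] at hpos
  exact ⟨c, fun k => ⟨hc.1 k, hc.2 k⟩, hpos.1, hpos.2⟩

/-- The extension `a • x ↦ a * f x` of `f` to the nonnegative orthant is nonexpansive for the
`ℓ¹` norm. This is the condition defining `D1`, for functions not yet known to be continuous. -/
def IsHomNonexpansive (f : Δ K → ℝ) : Prop :=
  ∀ x y : Δ K, ∀ a b : ℝ, 0 ≤ a → 0 ≤ b →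
    a * f x - b * f y ≤ ‖a • (x : K → ℝ) - b • (y : K → ℝ)‖₁

lemma mem_D1_iff {f : C(Δ K, ℝ)} : f ∈ D1 K ↔ IsHomNonexpansive f := by
  simp [D1, IsHomNonexpansive, PiLp.norm_eq_of_L1]

namespace IsHomNonexpansive

variable {f : Δ K → ℝ}

lemma lipschitzWith (hf : IsHomNonexpansive f) : LipschitzWith (Fintype.card K) f := by
  refine LipschitzWith.of_le_add_mul _ fun p q => ?_
  have h := hf p q 1 1 zero_le_one zero_le_one
  simp only [one_mul, one_smul] at h
  rw [NNReal.coe_natCast, Subtype.dist_eq, dist_eq_norm]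
  linarith [l1_norm_le_card_mul_norm ((p : K → ℝ) - (q : K → ℝ))]

lemma mem_Icc (hf : IsHomNonexpansive f) (p : Δ K) : f p ∈ Icc (-1) 1 := by
  have lower := hf p p 0 1 le_rfl zero_le_one
  have upper := hf p p 1 0 zero_le_one le_rfl
  simp only [zero_mul, one_mul, zero_smul, one_smul, zero_sub, sub_zero, WithLp.toLp_neg, norm_neg,
    l1_norm_coe] at lower upper
  exact ⟨by linarith, upper⟩

end IsHomNonexpansive

lemma isClosed_setOf_isHomNonexpansive : IsClosed {f : Δ K → ℝ | IsHomNonexpansive f} := by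
  simp only [IsHomNonexpansive, Set.ofPred_forall]
  exact isClosed_iInter fun x => isClosed_iInter fun y => isClosed_iInter fun a =>
    isClosed_iInter fun b => isClosed_iInter fun _ => isClosed_iInter fun _ =>
      isClosed_le (by fun_prop) continuous_const

lemma isCompact_D1 : IsCompact (D1 K) := by
  have image_toFun : ContinuousMap.toFun '' D1 K = {f | IsHomNonexpansive f} := by
    ext f
    refine ⟨?_, fun hf => ⟨⟨f, hf.lipschitzWith.continuous⟩, mem_D1_iff.2 hf, rfl⟩⟩
    rintro ⟨f, hf, rfl⟩
    exact mem_D1_iff.1 hf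
  refine ArzelaAscoli.isCompact_of_equicontinuous _ ?_ ?_
  · rw [image_toFun]
    exact (isCompact_univ_pi fun _ => isCompact_Icc).of_isClosed_subset
      isClosed_setOf_isHomNonexpansive fun f hf p _ => hf.mem_Icc p
  · exact (LipschitzWith.uniformEquicontinuous _ _
      fun f : D1 K => (mem_D1_iff.1 f.2).lipschitzWith).equicontinuous

lemma neg_mem_D1 {f : C(Δ K, ℝ)} (hf : f ∈ D1 K) : -f ∈ D1 K := by
  rw [mem_D1_iff] at hf ⊢
  intro x y a b ha hb
  have h := hf y x b a hb ha
  rw [← norm_neg, ← WithLp.toLp_neg, neg_sub] at h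
  simp only [ContinuousMap.coe_neg, Pi.neg_apply]
  linarith

lemma abs_sub_le_l1_norm_smul_sub_smul (a b : ℝ) (x y : Δ K) :
    |a - b| ≤ ‖a • (x : K → ℝ) - b • (y : K → ℝ)‖₁ := by
  have h := abs_sum_le_l1_norm (a • (x : K → ℝ) - b • (y : K → ℝ))
  simpa only [Pi.sub_apply, Pi.smul_apply, smul_eq_mul, Finset.sum_sub_distrib, ← Finset.mul_sum,
    x.2.2, y.2.2, mul_one] using h

lemma mul_dist_le_l1_norm_smul_sub_smul {a : ℝ} (ha : 0 ≤ a) (b : ℝ) (x y : Δ K) :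
    a * dist x y ≤ 2 * ‖a • (x : K → ℝ) - b • (y : K → ℝ)‖₁ := by
  calc a * dist x y = ‖a • ((x : K → ℝ) - y)‖ := by
        rw [norm_smul, Real.norm_of_nonneg ha, Subtype.dist_eq, dist_eq_norm]
    _ ≤ ‖a • ((x : K → ℝ) - y)‖₁ := norm_le_l1_norm _
    _ = ‖(a • (x : K → ℝ) - b • (y : K → ℝ)) - (a - b) • (y : K → ℝ)‖₁ := by
        congr 2
        module
    _ ≤ ‖a • (x : K → ℝ) - b • (y : K → ℝ)‖₁ + ‖(a - b) • (y : K → ℝ)‖₁ := norm_sub_le _ _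
    _ ≤ 2 * ‖a • (x : K → ℝ) - b • (y : K → ℝ)‖₁ := by
        rw [WithLp.toLp_smul 1 (a - b), norm_smul, l1_norm_coe, mul_one, Real.norm_eq_abs]
        linarith [abs_sub_le_l1_norm_smul_sub_smul a b x y]

lemma exists_smul_mem_D1 {f : C(Δ K, ℝ)} {L : ℝ≥0} (hf : LipschitzWith L f) :
    ∃ c > (0 : ℝ), c • f ∈ D1 K := by
  have hC : 0 < 2 * (L : ℝ) + ‖f‖ + 1 := by positivity
  refine ⟨(2 * (L : ℝ) + ‖f‖ + 1)⁻¹, inv_pos.2 hC, mem_D1_iff.2 fun x y a b ha _ => ?_⟩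
  set N := ‖a • (x : K → ℝ) - b • (y : K → ℝ)‖₁
  have hN : 0 ≤ N := norm_nonneg _
  have sub_le : f x - f y ≤ L * dist x y := (le_abs_self _).trans (hf.dist_le_mul x y)
  have mul_le : (a - b) * f y ≤ |a - b| * ‖f‖ := by
    refine (le_abs_self _).trans ?_
    rw [abs_mul]
    exact mul_le_mul_of_nonneg_left (f.norm_coe_le_norm y) (abs_nonneg _)
  have gap_le : a * f x - b * f y ≤ (2 * L + ‖f‖ + 1) * N :=
    calc a * f x - b * f y = a * (f x - f y) + (a - b) * f y := by ring
      _ ≤ a * (L * dist x y) + |a - b| * ‖f‖ :=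
        add_le_add (mul_le_mul_of_nonneg_left sub_le ha) mul_le
      _ = L * (a * dist x y) + |a - b| * ‖f‖ := by ring
      _ ≤ L * (2 * N) + N * ‖f‖ :=
        add_le_add
          (mul_le_mul_of_nonneg_left (mul_dist_le_l1_norm_smul_sub_smul ha b x y) L.coe_nonneg)
          (mul_le_mul_of_nonneg_right (abs_sub_le_l1_norm_smul_sub_smul a b x y) (norm_nonneg f))
      _ ≤ (2 * L + ‖f‖ + 1) * N := by linarith
  rw [← inv_mul_le_iff₀ hC] at gap_le
  simp only [ContinuousMap.coe_smul, Pi.smul_apply, smul_eq_mul]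
  linarith

lemma isMetrizing_D1 : IsMetrizing (D1 K) where
  isCompact := isCompact_D1
  neg_mem _ := neg_mem_D1
  exists_smul_mem _ _ := exists_smul_mem_D1

/-- The value `Val(Σ_k p^k G^k)` of the non-revealing game of the family of matrices `G` at the
prior `p`. -/
noncomputable def gameValue {n m : ℕ} (G : K → Fin n → Fin m → ℝ) (p : K → ℝ) : ℝ :=
  matValue fun i j => ∑ k, p k * G k i j

lemma isHomNonexpansive_gameValue {n m : ℕ} [NeZero n] [NeZero m] {G : K → Fin n → Fin m → ℝ}
    (hG : ∀ k i j, G k i j ∈ Icc (-1 : ℝ) 1) : IsHomNonexpansive fun p : Δ K => gameValue G p := by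
  intro x y a b ha hb
  set N := ‖a • (x : K → ℝ) - b • (y : K → ℝ)‖₁
  have entry_le (i : Fin n) (j : Fin m) : a * ∑ k, (x : K → ℝ) k * G k i j ≤
      b * ∑ k, (y : K → ℝ) k * G k i j + N := by
    have h := sum_mul_le_l1_norm (fun k => hG k i j) (a • (x : K → ℝ) - b • (y : K → ℝ))
    simp only [Pi.sub_apply, Pi.smul_apply, smul_eq_mul, sub_mul, mul_assoc,
      Finset.sum_sub_distrib, ← Finset.mul_sum] at h
    linarith
  have value_le : a * gameValue G x ≤ b * gameValue G y + N := by
    simpa only [gameValue, matValue_const_mul ha, matValue_const_mul hb, matValue_add_const]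
      using matValue_mono entry_le
  linarith

lemma D0_subset_D1 : D0 K ⊆ D1 K := by
  rintro f ⟨n, m, hn, hm, G, hG, hf⟩
  have := NeZero.of_pos hn
  have := NeZero.of_pos hm
  rw [mem_D1_iff, show ⇑f = fun p : Δ K => gameValue G p from funext hf]
  exact isHomNonexpansive_gameValue hG

lemma exists_mem_D0_eqOn {f : C(Δ K, ℝ)} (hf : f ∈ D1 K) {t : Finset (Δ K)} (ht : t.Nonempty) :
    ∃ g ∈ D0 K, EqOn g f t := by
  have := NeZero.of_pos ht.card_pos
  let z : Fin t.card → Δ K := fun i => t.equivFin.symm i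
  choose c hc le_row col_le using fun i j => exists_sum_mul_ge_and_le (mem_D1_iff.1 hf (z i) (z j))
  let G : K → Fin t.card → Fin t.card → ℝ := fun k i j => c i j k
  have hG (k i j) : G k i j ∈ Icc (-1 : ℝ) 1 := hc i j k
  refine ⟨⟨fun p => gameValue G p, (isHomNonexpansive_gameValue hG).lipschitzWith.continuous⟩,
    ⟨_, _, ht.card_pos, ht.card_pos, G, hG, fun _ => rfl⟩, fun p hp => ?_⟩
  obtain ⟨i, rfl⟩ : ∃ i, z i = p := ⟨t.equivFin ⟨p, hp⟩, by simp [z]⟩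
  exact le_antisymm (matValue_le i fun j => col_le j i) (le_matValue i (le_row i))

lemma D1_subset_closure_D0 [Nonempty K] : D1 K ⊆ closure (D0 K) := by
  intro f hf
  refine Metric.mem_closure_iff.2 fun ε hε => ?_
  have hδ : 0 < ε / (2 * Fintype.card K + 1) := by positivity
  obtain ⟨t, -, ht, hcover⟩ := finite_cover_balls_of_compact (isCompact_univ (X := Δ K)) hδ
  lift t to Finset (Δ K) using ht
  have exists_near (p : Δ K) : ∃ q ∈ t, dist p q < ε / (2 * Fintype.card K + 1) := by
    simpa using hcover (mem_univ p)
  obtain ⟨q, hq, -⟩ := exists_near (Classical.arbitrary (Δ K))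
  obtain ⟨g, hg, hgf⟩ := exists_mem_D0_eqOn hf ⟨q, hq⟩
  refine ⟨g, hg, ?_⟩
  calc dist f g ≤ 2 * Fintype.card K * (ε / (2 * Fintype.card K + 1)) :=
        dist_le_of_eqOn_net (mem_D1_iff.1 hf).lipschitzWith
          (mem_D1_iff.1 (D0_subset_D1 hg)).lipschitzWith hgf.symm hδ.le
          fun p => (exists_near p).imp fun _ h => ⟨h.1, h.2.le⟩
    _ < ε := by
        rw [mul_div_assoc', div_lt_iff₀ (by positivity)]
        linarith

lemma closure_D0 [Nonempty K] : closure (D0 K) = D1 K :=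
  (closure_minimal D0_subset_D1 isCompact_D1.isClosed).antisymm D1_subset_closure_D0

lemma d0_eq_d1 [Nonempty K] : d0 K = d1 K := by
  have isCompact_closure : IsCompact (closure (D0 K)) := closure_D0 (K := K) ▸ isCompact_D1
  ext u v
  calc d0 K u v = ipm (D0 K) u v := rfl
    _ = ipm (closure (D0 K)) u v := (ipm_closure isCompact_closure u v).symm
    _ = ipm (D1 K) u v := by rw [closure_D0]
    _ = d1 K u v := rfl

end Simplex

end Stmt6

/-- **Proposition 3 (Renault–Venel).** `d₀(u,v) = sup_{f ∈ D₀} (u(f) − v(f))` is a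
distance on `Δ(X)` (`X = Δ(K)`) which metrizes the weak-* topology, and `d₀ = d₁`. -/
theorem stmt6 (K : Type*) [Fintype K] [Nonempty K] :
    (∀ u v : ProbabilityMeasure (Stmt6.Δ K), 0 ≤ Stmt6.d0 K u v) ∧
    (∀ u v : ProbabilityMeasure (Stmt6.Δ K), Stmt6.d0 K u v = 0 ↔ u = v) ∧
    (∀ u v : ProbabilityMeasure (Stmt6.Δ K), Stmt6.d0 K u v = Stmt6.d0 K v u) ∧
    (∀ u v w : ProbabilityMeasure (Stmt6.Δ K),
      Stmt6.d0 K u w ≤ Stmt6.d0 K u v + Stmt6.d0 K v w) ∧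
    (∀ s : Set (ProbabilityMeasure (Stmt6.Δ K)),
      IsOpen s ↔ ∀ u ∈ s, ∃ ε > 0, ∀ v, Stmt6.d0 K u v < ε → v ∈ s) ∧
    (∀ u v : ProbabilityMeasure (Stmt6.Δ K), Stmt6.d0 K u v = Stmt6.d1 K u v) := by
  rw [Stmt6.d0_eq_d1]
  have h := Stmt6.isMetrizing_D1 (K := K)
  exact ⟨Stmt6.ipm_nonneg h.zero_mem, fun _ _ => h.ipm_eq_zero_iff, Stmt6.ipm_comm h.neg_mem,
    Stmt6.ipm_triangle h.isCompact, fun _ => h.isOpen_iff, fun _ _ => rfl⟩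
end

section
/- For all p and q in X = Δ(K), d_*(δ_p, δ_q) = ‖p − q‖, where δ_p, δ_q are the Dirac measures at p and q. -/
open Set MeasureTheory

namespace Stmt7

variable (K : Type*) [Fintype K]

/-- The simplex `Δ(K)` of probability vectors on `K`, inside `K → ℝ`
(endowed with the ℓ¹ norm, written explicitly as sums of absolute values below). -/
def Δ : Set (K → ℝ) := {p | (∀ k, 0 ≤ p k) ∧ ∑ k, p k = 1}

/-- `D₁ = {f ∈ C(Δ(K),ℝ) : ∀ x,y, ∀ a,b ≥ 0, a·f(x) − b·f(y) ≤ ‖a·x − b·y‖₁}`. -/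
def D1 : Set C(Δ K, ℝ) :=
  {f | ∀ x y : Δ K, ∀ a b : ℝ, 0 ≤ a → 0 ≤ b →
    a * f x - b * f y ≤ ∑ k, |a * (x : K → ℝ) k - b * (y : K → ℝ) k|}

/-- The pairing `u(f) = ∫_X f du`. -/
noncomputable def pairing (u : ProbabilityMeasure (Δ K)) (f : C(Δ K, ℝ)) : ℝ :=
  ∫ p, f p ∂(u : Measure (Δ K))

/-- The distance `d_*(u,v) = sup_{f ∈ D₁} (u(f) − v(f))`. -/
noncomputable def dstar (u v : ProbabilityMeasure (Δ K)) : ℝ :=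
  sSup ((fun f => pairing K u f - pairing K v f) '' D1 K)

end Stmt7

/-!
Every `f ∈ D₁` satisfies `f p - f q ≤ ‖p - q‖` (take `a = b = 1`), and the bound is attained: a
linear form with coefficients in `[-1, 1]` has dual norm at most `1`, hence belongs to `D₁`, and the
one with coefficients `sign (p k - q k)` takes the value `‖p - q‖` at `p - q`.
-/

section DotProduct

variable {K R : Type*} [Fintype K] [Ring R] [LinearOrder R] [IsStrictOrderedRing R]

theorem abs_signType_le_one (s : SignType) : |(s : R)| ≤ 1 := by
  cases s <;> simp

theorem dotProduct_le_sum_abs {c : K → R} (hc : ∀ k, |c k| ≤ 1) (v : K → R) :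
    c ⬝ᵥ v ≤ ∑ k, |v k| :=
  Finset.sum_le_sum fun k _ => calc
    c k * v k ≤ |c k * v k| := le_abs_self _
    _ = |c k| * |v k| := abs_mul _ _
    _ ≤ |v k| := mul_le_of_le_one_left (abs_nonneg _) (hc k)

theorem sign_dotProduct_self (v : K → R) :
    (fun k => (SignType.sign (v k) : R)) ⬝ᵥ v = ∑ k, |v k| :=
  Finset.sum_congr rfl fun k _ => sign_mul_self (v k)

end DotProduct

namespace Stmt7

variable {K : Type*} [Fintype K]

theorem pairing_dirac (p : Δ K) (f : C(Δ K, ℝ)) :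
    pairing K ⟨Measure.dirac p, inferInstance⟩ f = f p :=
  integral_dirac f p

theorem sub_le_of_mem_D1 {f : C(Δ K, ℝ)} (hf : f ∈ D1 K) (p q : Δ K) :
    f p - f q ≤ ∑ k, |(p : K → ℝ) k - (q : K → ℝ) k| := by
  simpa only [one_mul] using hf p q 1 1 zero_le_one zero_le_one

/-- The linear form on `K → ℝ` with coefficients `c`, restricted to `Δ(K)`. Such forms provide the
test functions at which the supremum defining `d_*` is attained. -/
def linearForm (c : K → ℝ) : C(Δ K, ℝ) where
  toFun x := c ⬝ᵥ (x : K → ℝ)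
  continuous_toFun := continuous_const.dotProduct continuous_subtype_val

theorem linearForm_apply (c : K → ℝ) (x : Δ K) : linearForm c x = c ⬝ᵥ (x : K → ℝ) :=
  rfl

theorem linearForm_mem_D1 {c : K → ℝ} (hc : ∀ k, |c k| ≤ 1) : linearForm c ∈ D1 K := by
  intro x y a b _ _
  calc a * linearForm c x - b * linearForm c y
      = c ⬝ᵥ (a • (x : K → ℝ) - b • (y : K → ℝ)) := by
        simp only [linearForm_apply, dotProduct_sub, dotProduct_smul, smul_eq_mul]
    _ ≤ ∑ k, |a * (x : K → ℝ) k - b * (y : K → ℝ) k| := dotProduct_le_sum_abs hc _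

theorem exists_mem_D1_sub_eq (p q : Δ K) :
    ∃ f ∈ D1 K, f p - f q = ∑ k, |(p : K → ℝ) k - (q : K → ℝ) k| := by
  refine ⟨linearForm fun k => SignType.sign ((p : K → ℝ) k - (q : K → ℝ) k),
    linearForm_mem_D1 fun k => abs_signType_le_one _, ?_⟩
  rw [linearForm_apply, linearForm_apply, ← dotProduct_sub]
  exact sign_dotProduct_self ((p : K → ℝ) - (q : K → ℝ))

end Stmt7

/-- **Lemma (Renault–Venel).** For `p, q` in `X = Δ(K)`,
`d_*(δ_p, δ_q) = ‖p − q‖₁`. -/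
theorem stmt7 (K : Type*) [Fintype K] [Nonempty K] (p q : Stmt7.Δ K) :
    Stmt7.dstar K ⟨Measure.dirac p, inferInstance⟩ ⟨Measure.dirac q, inferInstance⟩ =
      ∑ k, |(p : K → ℝ) k - (q : K → ℝ) k| := by
  simp only [Stmt7.dstar, Stmt7.pairing_dirac]
  apply IsGreatest.csSup_eq
  constructor
  · exact Stmt7.exists_mem_D1_sub_eq p q
  · rintro _ ⟨f, hf, rfl⟩
    exact Stmt7.sub_le_of_mem_D1 hf p q
end

section
/- (Duality formula) Let u and v be Borel probability measures on X with finite supports U and V respectively. Then d_*(u,v) = sup_{f ∈ D_1} |u(f) − v(f)| = min_{(α,β) ∈ M_4(u,v)} Σ_{(x,y) ∈ U×V} ‖α(x,y)·x − β(x,y)·y‖, and the minimum is attained. -/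
open Set MeasureTheory

namespace Stmt8

variable (K : Type*) [Fintype K]

/-- The simplex `Δ(K)` of probability vectors on `K`, inside `K → ℝ`
(endowed with the ℓ¹ norm, written explicitly as sums of absolute values below). -/
def Δ : Set (K → ℝ) := {p | (∀ k, 0 ≤ p k) ∧ ∑ k, p k = 1}

/-- `D₁ = {f ∈ C(Δ(K),ℝ) : ∀ x,y, ∀ a,b ≥ 0, a·f(x) − b·f(y) ≤ ‖a·x − b·y‖₁}`. -/
def D1 : Set C(Δ K, ℝ) :=
  {f | ∀ x y : Δ K, ∀ a b : ℝ, 0 ≤ a → 0 ≤ b →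
    a * f x - b * f y ≤ ∑ k, |a * (x : K → ℝ) k - b * (y : K → ℝ) k|}

/-- The pairing `u(f) = ∫_X f du`. -/
noncomputable def pairing (u : ProbabilityMeasure (Δ K)) (f : C(Δ K, ℝ)) : ℝ :=
  ∫ p, f p ∂(u : Measure (Δ K))

/-- The distance `d_*(u,v) = sup_{f ∈ D₁} (u(f) − v(f))`. -/
noncomputable def dstar (u v : ProbabilityMeasure (Δ K)) : ℝ :=
  sSup ((fun f => pairing K u f - pairing K v f) '' D1 K)

/-- `M₄(u,v)` for finitely supported `u, v`, described through the supports `U, V` and the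
weight functions `wu, wv`. -/
def M4 (U V : Finset (Δ K)) (wu wv : Δ K → ℝ) :
    Set ((Δ K → Δ K → ℝ) × (Δ K → Δ K → ℝ)) :=
  {ab | (∀ x ∈ U, ∀ y ∈ V, 0 ≤ ab.1 x y ∧ 0 ≤ ab.2 x y) ∧
    (∀ x ∈ U, ∑ y ∈ V, ab.1 x y = wu x) ∧ (∀ y ∈ V, ∑ x ∈ U, ab.2 x y = wv y)}

/-- The transport-like cost `Σ_{(x,y) ∈ U×V} ‖α(x,y)·x − β(x,y)·y‖₁`. -/
noncomputable def cost (U V : Finset (Δ K))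
    (ab : (Δ K → Δ K → ℝ) × (Δ K → Δ K → ℝ)) : ℝ :=
  ∑ x ∈ U, ∑ y ∈ V, ∑ k, |ab.1 x y * (x : K → ℝ) k - ab.2 x y * (y : K → ℝ) k|

end Stmt8

/- The set of triples `(s, t, r)` such that some nonnegative `(α, β)` has margins `(s, t)` and cost
at most `r` is a convex cone, and it is closed because nonnegative weights are bounded by their
margins. Separating a point below the minimal cost from this cone yields dual potentials `φ` on `U`
and `ψ` on `V` with `a φ(x) + b ψ(y) ≤ ‖a x - b y‖` for all `a, b ≥ 0`. These potentials come from
a function of `D₁`: the largest admissible one below `-ψ` on `V`, namely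
`p ↦ inf {‖p - b y‖ - b ψ(y) | y ∈ V, b ≥ 0}`, which is at least `φ` on `U`. -/

namespace Stmt8

open Filter Topology
open scoped NNReal

section ConicDuality

theorem isClosed_image_snd_of_norm_le {F G : Type*} [SeminormedAddCommGroup F] [ProperSpace F]
    [PseudoMetricSpace G] {S : Set (F × G)} (hS : IsClosed S) {g : G → ℝ} (hg : Continuous g)
    (hSg : ∀ z ∈ S, ‖z.1‖ ≤ g z.2) : IsClosed (Prod.snd '' S) := by
  refine IsSeqClosed.isClosed fun y y₀ hy hlim => ?_
  choose z hzS hzy using hy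
  obtain ⟨R, hR⟩ := (Metric.isBounded_range_of_tendsto _ ((hg.tendsto y₀).comp hlim)).bddAbove
  have hz_mem (n) : (z n).1 ∈ Metric.closedBall 0 R := by
    simpa using (hSg _ (hzS n)).trans (hR ⟨n, by simp [hzy]⟩)
  obtain ⟨x₀, -, θ, hθ, hx₀⟩ := tendsto_subseq_of_bounded Metric.isBounded_closedBall hz_mem
  have hy₀ : Tendsto (fun n => (z (θ n)).2) atTop (𝓝 y₀) := by
    simpa only [hzy, Function.comp_def] using hlim.comp hθ.tendsto_atTop
  exact ⟨(x₀, y₀), hS.mem_of_tendsto (hx₀.prodMk_nhds hy₀) (.of_forall fun n => hzS _), rfl⟩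

variable {E F : Type*} [SeminormedAddCommGroup E] [NormedSpace ℝ E]
  [NormedAddCommGroup F] [NormedSpace ℝ F]

/-- The epigraph of the value function `w ↦ inf {p x | x ∈ C, A x = w}` of a conic program. The
infimum is required to be attained below the given level, so that no value is assigned to
infeasible `w`. -/
def valueCone (C : ProperCone ℝ E) (A : E →L[ℝ] F) (p : Seminorm ℝ E) : PointedCone ℝ (F × ℝ) where
  carrier := {z | ∃ x ∈ C, A x = z.1 ∧ p x ≤ z.2}
  zero_mem' := ⟨0, C.zero_mem, by simp⟩
  add_mem' := by
    rintro _ _ ⟨x, hx, hAx, hpx⟩ ⟨y, hy, hAy, hpy⟩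
    exact ⟨x + y, C.add_mem hx hy, by simp [hAx, hAy],
      (map_add_le_add p x y).trans (add_le_add hpx hpy)⟩
  smul_mem' := by
    rintro ⟨c, hc⟩ _ ⟨x, hx, hAx, hpx⟩
    refine ⟨c • x, C.smul_mem hx hc, by simp [hAx], ?_⟩
    rw [map_smul_eq_mul, Real.norm_of_nonneg hc]
    exact mul_le_mul_of_nonneg_left hpx hc

/-- The feasible set of the dual of the conic program `inf {p x | x ∈ C, A x = w}`. -/
def dualFunctionals (C : ProperCone ℝ E) (A : E →L[ℝ] F) (p : Seminorm ℝ E) : Set (F →L[ℝ] ℝ) :=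
  {g | ∀ x ∈ C, g (A x) ≤ p x}

variable {C : ProperCone ℝ E} {A : E →L[ℝ] F} {p : Seminorm ℝ E}

theorem mem_valueCone {w : F} {r : ℝ} : (w, r) ∈ valueCone C A p ↔ ∃ x ∈ C, A x = w ∧ p x ≤ r :=
  Iff.rfl

theorem isClosed_valueCone [ProperSpace E] {k : ℝ} (hA : ∀ x ∈ C, ‖x‖ ≤ k * ‖A x‖)
    (hp : Continuous p) : IsClosed (valueCone C A p : Set (F × ℝ)) := by
  let S : Set (E × F × ℝ) := {z | z.1 ∈ C ∧ A z.1 = z.2.1 ∧ p z.1 ≤ z.2.2}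
  have hS : IsClosed S := (C.isClosed.preimage continuous_fst).inter <|
    (isClosed_eq (by fun_prop) (by fun_prop)).inter
      (isClosed_le (hp.comp continuous_fst) (by fun_prop))
  have hS_bound : ∀ z ∈ S, ‖z.1‖ ≤ k * ‖z.2.1‖ := fun z ⟨hz, hAz, _⟩ => hAz ▸ hA _ hz
  have hS_image : (valueCone C A p : Set (F × ℝ)) = Prod.snd '' S :=
    Subset.antisymm (fun z ⟨x, hx⟩ => ⟨(x, z), hx, rfl⟩) (image_subset_iff.2 fun z hz => ⟨z.1, hz⟩)
  rw [hS_image]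
  exact isClosed_image_snd_of_norm_le hS (g := fun z => k * ‖z.1‖) (by fun_prop) hS_bound

theorem exists_mem_dualFunctionals_lt (hclosed : IsClosed (valueCone C A p : Set (F × ℝ)))
    {x : E} (hx : x ∈ C) {r : ℝ} (hr : (A x, r) ∉ valueCone C A p) :
    ∃ g ∈ dualFunctionals C A p, r < g (A x) := by
  obtain ⟨f, hf, hfr⟩ :=
    ProperCone.hyperplane_separation_point (⟨valueCone C A p, hclosed⟩ : ProperCone ℝ _) hr
  have f_apply (w : F) (a : ℝ) : f (w, a) = f (w, 0) + a * f (0, 1) := by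
    rw [← smul_eq_mul, ← map_smul, ← map_add]
    simp
  have f_nonneg (y : E) (hy : y ∈ C) : 0 ≤ f (A y, 0) + p y * f (0, 1) :=
    f_apply (A y) (p y) ▸ hf (A y, p y) (mem_valueCone.2 ⟨y, hy, rfl, le_rfl⟩)
  have hpx : r < p x := lt_of_not_ge fun h => hr (mem_valueCone.2 ⟨x, hx, rfl, h⟩)
  have f_pos : 0 < f (0, 1) := by
    rw [f_apply] at hfr
    nlinarith [f_nonneg x hx]
  refine ⟨-(f (0, 1))⁻¹ • f.comp (.inl ℝ F ℝ), fun y hy => ?_, ?_⟩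
  · have := f_nonneg y hy
    simp only [_root_.smul_apply, ContinuousLinearMap.comp_apply,
      ContinuousLinearMap.inl_apply, smul_eq_mul, neg_mul, ← mul_neg]
    rw [inv_mul_le_iff₀ f_pos]
    linarith
  · rw [f_apply] at hfr
    simp only [_root_.smul_apply, ContinuousLinearMap.comp_apply,
      ContinuousLinearMap.inl_apply, smul_eq_mul, neg_mul, ← mul_neg]
    rw [lt_inv_mul_iff₀ f_pos]
    linarith

theorem exists_isMinOn_fiber [ProperSpace E] {k : ℝ} (hA : ∀ x ∈ C, ‖x‖ ≤ k * ‖A x‖)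
    (hp : Continuous p) {x₀ : E} (hx₀ : x₀ ∈ C) :
    ∃ x ∈ C, A x = A x₀ ∧ ∀ y ∈ C, A y = A x₀ → p x ≤ p y := by
  have hclosed : IsClosed ((C : Set E) ∩ A ⁻¹' {A x₀}) :=
    C.isClosed.inter (isClosed_singleton.preimage A.continuous)
  have hbounded : (C : Set E) ∩ A ⁻¹' {A x₀} ⊆ Metric.closedBall 0 (k * ‖A x₀‖) := by
    rintro x ⟨hxC, hx⟩
    simpa only [mem_closedBall_zero_iff, ← show A x = A x₀ from hx] using hA x hxC
  obtain ⟨x, ⟨hxC, hx⟩, hmin⟩ :=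
    ((isCompact_closedBall _ _).of_isClosed_subset hclosed hbounded).exists_isMinOn
      ⟨x₀, hx₀, rfl⟩ hp.continuousOn
  exact ⟨x, hxC, hx, fun y hyC hy => hmin ⟨hyC, hy⟩⟩

theorem exists_isLUB_dualFunctionals [ProperSpace E] {k : ℝ} (hA : ∀ x ∈ C, ‖x‖ ≤ k * ‖A x‖)
    (hp : Continuous p) {x₀ : E} (hx₀ : x₀ ∈ C) :
    ∃ x ∈ C, A x = A x₀ ∧ IsLUB ((fun g => g (A x₀)) '' dualFunctionals C A p) (p x) := by
  obtain ⟨x, hxC, hx, hmin⟩ := exists_isMinOn_fiber hA hp hx₀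
  refine ⟨x, hxC, hx, forall_mem_image.2 fun g hg => hx ▸ hg x hxC, fun b hb => ?_⟩
  by_contra! hbx
  have hb_notMem : (A x₀, b) ∉ valueCone C A p := fun ⟨y, hyC, hy, hyb⟩ =>
    ((hmin y hyC hy).trans hyb).not_gt hbx
  obtain ⟨g, hg, hbg⟩ := exists_mem_dualFunctionals_lt (isClosed_valueCone hA hp) hx₀ hb_notMem
  exact (hb ⟨g, hg, rfl⟩).not_gt hbg

end ConicDuality

section Transport

variable {ι κ E : Type*} [Fintype ι] [Fintype κ] [SeminormedAddCommGroup E] [NormedSpace ℝ E]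

variable (ι κ) in
/-- The pair of margins of `(α, β)` prescribed in `M₄`: the sums of `α` over its second variable
and those of `β` over its first. -/
def marginals : ((ι → κ → ℝ) × (ι → κ → ℝ)) →L[ℝ] (ι → ℝ) × (κ → ℝ) where
  toFun γ := (fun i => ∑ j, γ.1 i j, fun j => ∑ i, γ.2 i j)
  map_add' γ δ := by ext <;> simp [Finset.sum_add_distrib]
  map_smul' c γ := by ext <;> simp [Finset.mul_sum]
  cont := by fun_prop

/-- The cost `∑ i, ∑ j, ‖α i j • X i - β i j • Y j‖`, as a seminorm in `(α, β)`. -/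
def transportCost (X : ι → E) (Y : κ → E) : Seminorm ℝ ((ι → κ → ℝ) × (ι → κ → ℝ)) :=
  .of (fun γ => ∑ i, ∑ j, ‖γ.1 i j • X i - γ.2 i j • Y j‖)
    (fun γ δ => by
      simp only [← Finset.sum_add_distrib]
      gcongr with i _ j _
      simpa only [Prod.fst_add, Prod.snd_add, Pi.add_apply, add_smul, add_sub_add_comm]
        using norm_add_le _ _)
    (fun c γ => by
      simp only [Prod.smul_fst, Prod.smul_snd, Pi.smul_apply, smul_assoc, ← smul_sub, norm_smul,
        Finset.mul_sum])

/-- The pairs of dual potentials for `transportCost X Y`. -/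
def potentials (X : ι → E) (Y : κ → E) : Set ((ι → ℝ) × (κ → ℝ)) :=
  {φ | ∀ i j (a b : ℝ), 0 ≤ a → 0 ≤ b → a * φ.1 i + b * φ.2 j ≤ ‖a • X i - b • Y j‖}

/-- The value `∑ i, w.1 i * φ.1 i + ∑ j, w.2 j * φ.2 j` of the potentials `φ` for margins `w`. -/
def dualValue (w φ : (ι → ℝ) × (κ → ℝ)) : ℝ := w.1 ⬝ᵥ φ.1 + w.2 ⬝ᵥ φ.2

theorem marginals_apply (γ : (ι → κ → ℝ) × (ι → κ → ℝ)) :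
    marginals ι κ γ = (fun i => ∑ j, γ.1 i j, fun j => ∑ i, γ.2 i j) := rfl

theorem norm_le_norm_marginals {γ : (ι → κ → ℝ) × (ι → κ → ℝ)} (hγ : 0 ≤ γ) :
    ‖γ‖ ≤ ‖marginals ι κ γ‖ := by
  refine max_le ?_ ?_
  all_goals
    refine (pi_norm_le_iff_of_nonneg (norm_nonneg _)).2 fun i =>
      (pi_norm_le_iff_of_nonneg (norm_nonneg _)).2 fun j => ?_
  · calc ‖γ.1 i j‖ = γ.1 i j := Real.norm_of_nonneg (hγ.1 i j)
      _ ≤ ∑ j, γ.1 i j := Finset.single_le_sum (fun j _ => hγ.1 i j) (Finset.mem_univ j)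
      _ ≤ ‖(marginals ι κ γ).1 i‖ := Real.le_norm_self _
      _ ≤ ‖marginals ι κ γ‖ := (norm_le_pi_norm _ i).trans (norm_fst_le _)
  · calc ‖γ.2 i j‖ = γ.2 i j := Real.norm_of_nonneg (hγ.2 i j)
      _ ≤ ∑ i, γ.2 i j :=
        Finset.single_le_sum (f := fun i => γ.2 i j) (fun i _ => hγ.2 i j) (Finset.mem_univ i)
      _ ≤ ‖(marginals ι κ γ).2 j‖ := Real.le_norm_self _
      _ ≤ ‖marginals ι κ γ‖ := (norm_le_pi_norm _ j).trans (norm_snd_le _)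

theorem exists_nonneg_marginals_eq [Nonempty ι] [Nonempty κ] {w : (ι → ℝ) × (κ → ℝ)}
    (hw : 0 ≤ w) : ∃ γ, 0 ≤ γ ∧ marginals ι κ γ = w := by
  classical
  obtain ⟨i₀⟩ := ‹Nonempty ι›
  obtain ⟨j₀⟩ := ‹Nonempty κ›
  refine ⟨(fun i => Pi.single j₀ (w.1 i), Pi.single i₀ w.2),
    ⟨fun i => by simpa using hw.1 i, by simpa using hw.2⟩, ?_⟩
  ext <;> simp [marginals_apply, ← Finset.sum_apply]

theorem transportCost_apply (X : ι → E) (Y : κ → E) (γ : (ι → κ → ℝ) × (ι → κ → ℝ)) :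
    transportCost X Y γ = ∑ i, ∑ j, ‖γ.1 i j • X i - γ.2 i j • Y j‖ := rfl

theorem continuous_transportCost (X : ι → E) (Y : κ → E) : Continuous (transportCost X Y) := by
  change Continuous fun γ => transportCost X Y γ
  simp only [transportCost_apply]
  fun_prop

theorem dualValue_marginals_le_transportCost {X : ι → E} {Y : κ → E} {φ : (ι → ℝ) × (κ → ℝ)}
    (hφ : φ ∈ potentials X Y) {γ : (ι → κ → ℝ) × (ι → κ → ℝ)} (hγ : 0 ≤ γ) :
    dualValue (marginals ι κ γ) φ ≤ transportCost X Y γ := by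
  calc dualValue (marginals ι κ γ) φ = ∑ i, ∑ j, (γ.1 i j * φ.1 i + γ.2 i j * φ.2 j) := by
        simp only [dualValue, marginals_apply, dotProduct, Finset.sum_mul, Finset.sum_add_distrib]
        rw [Finset.sum_comm (γ := κ)]
    _ ≤ transportCost X Y γ := Finset.sum_le_sum fun i _ => Finset.sum_le_sum fun j _ =>
        hφ i j _ _ (hγ.1 i j) (hγ.2 i j)

theorem apply_eq_dualValue [DecidableEq ι] [DecidableEq κ] (g : (ι → ℝ) × (κ → ℝ) →L[ℝ] ℝ)
    (w : (ι → ℝ) × (κ → ℝ)) :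
    g w = dualValue w (fun i => g (Pi.single i 1, 0), fun j => g (0, Pi.single j 1)) := by
  simp only [dualValue, dotProduct, ← smul_eq_mul, ← map_smul, ← map_sum, ← map_add]
  congr 1
  ext <;> simp [Prod.fst_sum, Prod.snd_sum, Finset.sum_apply, Pi.single_apply]

theorem mem_potentials_of_mem_dualFunctionals [DecidableEq ι] [DecidableEq κ] {X : ι → E}
    {Y : κ → E} {g : (ι → ℝ) × (κ → ℝ) →L[ℝ] ℝ}
    (hg : g ∈ dualFunctionals (.positive ℝ _) (marginals ι κ) (transportCost X Y)) :
    (fun i => g (Pi.single i 1, 0), fun j => g (0, Pi.single j 1)) ∈ potentials X Y := by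
  intro i j a b ha hb
  let γ : (ι → κ → ℝ) × (ι → κ → ℝ) := (Pi.single i (Pi.single j a), Pi.single i (Pi.single j b))
  have hγ : 0 ≤ γ := ⟨Pi.single_nonneg.2 (Pi.single_nonneg.2 ha),
    Pi.single_nonneg.2 (Pi.single_nonneg.2 hb)⟩
  have hγ_marginals : marginals ι κ γ = (Pi.single i a, Pi.single j b) := by
    ext l
    · rcases eq_or_ne l i with rfl | hl
      · simp [γ, marginals_apply]
      · simp [γ, marginals_apply, hl]
    · simp [γ, marginals_apply, ← Finset.sum_apply]
  have hγ_cost : transportCost X Y γ = ‖a • X i - b • Y j‖ := by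
    rw [transportCost_apply, Finset.sum_eq_single i _ (by simp), Finset.sum_eq_single j _ (by simp)]
    · simp [γ]
    · simp +contextual [γ]
    · simp +contextual [γ]
  calc a * g (Pi.single i 1, 0) + b * g (0, Pi.single j 1) = g (Pi.single i a, Pi.single j b) := by
        rw [apply_eq_dualValue g (Pi.single i a, _)]
        simp [dualValue]
    _ ≤ ‖a • X i - b • Y j‖ := hγ_marginals ▸ hγ_cost ▸ hg γ (ProperCone.mem_positive.2 hγ)

theorem exists_isLUB_potentials [Nonempty ι] [Nonempty κ] (X : ι → E) (Y : κ → E)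
    {w : (ι → ℝ) × (κ → ℝ)} (hw : 0 ≤ w) :
    ∃ γ, 0 ≤ γ ∧ marginals ι κ γ = w ∧
      IsLUB (dualValue w '' potentials X Y) (transportCost X Y γ) := by
  classical
  obtain ⟨γ₀, hγ₀, rfl⟩ := exists_nonneg_marginals_eq hw
  obtain ⟨γ, hγ, hγ_marginals, hlub⟩ := exists_isLUB_dualFunctionals
    (C := .positive ℝ _) (k := 1)
    (fun γ hγ => by simpa using norm_le_norm_marginals (ProperCone.mem_positive.1 hγ))
    (continuous_transportCost X Y) (ProperCone.mem_positive.2 hγ₀)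
  rw [ProperCone.mem_positive] at hγ
  refine ⟨γ, hγ, hγ_marginals, forall_mem_image.2 fun φ hφ => ?_, fun b hb => hlub.2 ?_⟩
  · rw [← hγ_marginals]
    exact dualValue_marginals_le_transportCost hφ hγ
  · refine forall_mem_image.2 fun g hg => ?_
    rw [apply_eq_dualValue g]
    exact hb ⟨_, mem_potentials_of_mem_dualFunctionals hg, rfl⟩

end Transport

section ConicExtension

variable {κ E : Type*} [SeminormedAddCommGroup E] [NormedSpace ℝ E]

/-- The largest `1`-Lipschitz positively homogeneous function that is at most `-ψ j` at `Y j` for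
every `j`: the McShane extension, with the points `Y j` replaced by the rays through them. The
infimum is a genuine one as soon as `ψ j ≤ ‖Y j‖` for all `j`. -/
noncomputable def conicExtension (Y : κ → E) (ψ : κ → ℝ) (p : E) : ℝ :=
  ⨅ q : κ × ℝ≥0, (‖p - (q.2 : ℝ) • Y q.1‖ - q.2 * ψ q.1)

variable {Y : κ → E} {ψ : κ → ℝ}

theorem neg_norm_le_norm_sub_smul_sub {y : E} {c : ℝ} (hc : c ≤ ‖y‖) (p : E) {b : ℝ} (hb : 0 ≤ b) :
    -‖p‖ ≤ ‖p - b • y‖ - b * c := by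
  have hbc : b * c ≤ ‖b • y‖ := by
    rw [norm_smul_of_nonneg hb]
    exact mul_le_mul_of_nonneg_left hc hb
  linarith [norm_le_norm_add_norm_sub p (b • y)]

theorem conicExtension_le (hψ : ∀ j, ψ j ≤ ‖Y j‖) (p : E) (j : κ) {b : ℝ} (hb : 0 ≤ b) :
    conicExtension Y ψ p ≤ ‖p - b • Y j‖ - b * ψ j := by
  have hbdd : BddBelow (range fun q : κ × ℝ≥0 => ‖p - (q.2 : ℝ) • Y q.1‖ - q.2 * ψ q.1) :=
    ⟨-‖p‖, forall_mem_range.2 fun q => neg_norm_le_norm_sub_smul_sub (hψ q.1) p q.2.2⟩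
  exact ciInf_le hbdd (j, ⟨b, hb⟩)

variable [Nonempty κ]

theorem mul_conicExtension_sub_mul_conicExtension_le (hψ : ∀ j, ψ j ≤ ‖Y j‖) (p q : E)
    {a b : ℝ} (ha : 0 ≤ a) (hb : 0 ≤ b) :
    a * conicExtension Y ψ p - b * conicExtension Y ψ q ≤ ‖a • p - b • q‖ := by
  rcases ha.eq_or_lt with rfl | ha
  · have hq : -‖q‖ ≤ conicExtension Y ψ q :=
      le_ciInf fun z => neg_norm_le_norm_sub_smul_sub (hψ z.1) q z.2.2
    calc 0 * conicExtension Y ψ p - b * conicExtension Y ψ q ≤ b * ‖q‖ := by nlinarith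
      _ = ‖(0 : ℝ) • p - b • q‖ := by simp [norm_smul, abs_of_nonneg hb]
  · suffices h : a * conicExtension Y ψ p - ‖a • p - b • q‖ ≤ b * conicExtension Y ψ q by linarith
    conv_rhs => rw [conicExtension, Real.mul_iInf_of_nonneg hb]
    refine le_ciInf fun ⟨j, c⟩ => ?_
    have hsmul : a • (p - (b * c / a) • Y j) = (a • p - b • q) + b • (q - (c : ℝ) • Y j) := by
      rw [smul_sub, smul_smul, mul_div_cancel₀ _ ha.ne', smul_sub, smul_smul]
      abel
    have htriangle : a * ‖p - (b * c / a) • Y j‖ ≤ ‖a • p - b • q‖ + b * ‖q - (c : ℝ) • Y j‖ :=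
      calc a * ‖p - (b * c / a) • Y j‖ = ‖a • (p - (b * c / a) • Y j)‖ :=
            (norm_smul_of_nonneg ha.le _).symm
        _ ≤ ‖a • p - b • q‖ + b * ‖q - (c : ℝ) • Y j‖ := by
            rw [hsmul, ← norm_smul_of_nonneg hb]
            exact norm_add_le _ _
    calc a * conicExtension Y ψ p - ‖a • p - b • q‖
        ≤ a * (‖p - (b * c / a) • Y j‖ - b * c / a * ψ j) - ‖a • p - b • q‖ := by
          gcongr
          exact conicExtension_le hψ p j (by positivity)
      _ = a * ‖p - (b * c / a) • Y j‖ - ‖a • p - b • q‖ - b * c * ψ j := by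
          field_simp
          ring
      _ ≤ b * (‖q - (c : ℝ) • Y j‖ - c * ψ j) := by linarith

theorem continuous_conicExtension (hψ : ∀ j, ψ j ≤ ‖Y j‖) :
    Continuous (conicExtension Y ψ) := by
  refine (LipschitzWith.of_le_add fun p q => ?_).continuous
  have := mul_conicExtension_sub_mul_conicExtension_le hψ p q zero_le_one zero_le_one
  simp only [one_mul, one_smul, ← dist_eq_norm] at this
  linarith

end ConicExtension

section Simplex

variable {K : Type*} [Fintype K]

/-- A probability vector as an element of `ℝ^K` with the `ℓ¹` norm. -/
noncomputable def toL1 (x : Δ K) : PiLp 1 fun _ : K => ℝ := WithLp.toLp 1 x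

/-- The restriction to `U × V` of a pair `(α, β)` of functions on `Δ K × Δ K`. -/
def restrictPair (U V : Finset (Δ K)) (γ : (Δ K → Δ K → ℝ) × (Δ K → Δ K → ℝ)) :
    (U → V → ℝ) × (U → V → ℝ) :=
  (fun x y => γ.1 x y, fun x y => γ.2 x y)

theorem norm_smul_toL1_sub_smul_toL1 (a b : ℝ) (x y : Δ K) :
    ‖a • toL1 x - b • toL1 y‖ = ∑ k, |a * (x : K → ℝ) k - b * (y : K → ℝ) k| := by
  simp [PiLp.norm_eq_of_L1, toL1]

theorem continuous_toL1 : Continuous (toL1 : Δ K → PiLp 1 fun _ : K => ℝ) :=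
  (PiLp.continuous_toLp 1 _).comp continuous_subtype_val

theorem restrictPair_surjective (U V : Finset (Δ K)) : Function.Surjective (restrictPair U V) := by
  have hinj : Function.Injective (Prod.map Subtype.val Subtype.val : U × V → Δ K × Δ K) :=
    Subtype.val_injective.prodMap Subtype.val_injective
  intro γ
  obtain ⟨α, hα⟩ := hinj.surjective_comp_right (Function.uncurry γ.1)
  obtain ⟨β, hβ⟩ := hinj.surjective_comp_right (Function.uncurry γ.2)
  refine ⟨(Function.curry α, Function.curry β), Prod.ext ?_ ?_⟩ <;> ext x y
  exacts [congrFun hα (x, y), congrFun hβ (x, y)]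

theorem mem_M4_iff {U V : Finset (Δ K)} {wu wv : Δ K → ℝ}
    {γ : (Δ K → Δ K → ℝ) × (Δ K → Δ K → ℝ)} :
    γ ∈ M4 K U V wu wv ↔ 0 ≤ restrictPair U V γ ∧
      marginals U V (restrictPair U V γ) = (fun x : U => wu x, fun y : V => wv y) := by
  have hrow (x : U) : ∑ y : V, γ.1 x y = ∑ y ∈ V, γ.1 x y := Finset.sum_coe_sort V _
  have hcol (y : V) : ∑ x : U, γ.2 x y = ∑ x ∈ U, γ.2 x y := Finset.sum_coe_sort U (γ.2 · y)
  simp only [M4, mem_ofPred_eq, restrictPair, marginals_apply, Prod.le_def, Pi.le_def,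
    Prod.mk.injEq, funext_iff, Subtype.forall, forall_and, Prod.fst_zero, Prod.snd_zero,
    Pi.zero_apply, hrow, hcol]

theorem cost_eq_transportCost (U V : Finset (Δ K))
    (γ : (Δ K → Δ K → ℝ) × (Δ K → Δ K → ℝ)) :
    cost K U V γ =
      transportCost (fun x : U => toL1 x.1) (fun y : V => toL1 y.1) (restrictPair U V γ) := by
  simp only [cost, transportCost_apply, restrictPair, norm_smul_toL1_sub_smul_toL1]
  rw [← Finset.sum_coe_sort U]
  exact Finset.sum_congr rfl fun x _ => (Finset.sum_coe_sort V _).symm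

theorem neg_mem_D1 {f : C(Δ K, ℝ)} (hf : f ∈ D1 K) : -f ∈ D1 K := by
  intro x y a b ha hb
  calc a * (-f) x - b * (-f) y = b * f y - a * f x := by simp; ring
    _ ≤ ∑ k, |b * (y : K → ℝ) k - a * (x : K → ℝ) k| := hf y x b a hb ha
    _ = ∑ k, |a * (x : K → ℝ) k - b * (y : K → ℝ) k| := by simp only [abs_sub_comm]

theorem mem_potentials_of_mem_D1 {f : C(Δ K, ℝ)} (hf : f ∈ D1 K) (U V : Finset (Δ K)) :
    (fun x : U => f x, fun y : V => -f y) ∈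
      potentials (fun x : U => toL1 x.1) (fun y : V => toL1 y.1) := by
  intro x y a b ha hb
  rw [norm_smul_toL1_sub_smul_toL1, mul_neg, ← sub_eq_add_neg]
  exact hf x y a b ha hb

theorem exists_mem_D1_of_mem_potentials {ι κ : Type*} [Nonempty ι] [Nonempty κ] {X : ι → Δ K}
    {Y : κ → Δ K} {φ : (ι → ℝ) × (κ → ℝ)}
    (hφ : φ ∈ potentials (fun i => toL1 (X i)) (fun j => toL1 (Y j))) :
    ∃ f ∈ D1 K, (∀ i, φ.1 i ≤ f (X i)) ∧ ∀ j, φ.2 j ≤ -f (Y j) := by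
  have hψ (j : κ) : φ.2 j ≤ ‖toL1 (Y j)‖ := by
    simpa using hφ (Classical.arbitrary ι) j 0 1 le_rfl zero_le_one
  refine ⟨⟨fun x => conicExtension (fun j => toL1 (Y j)) φ.2 (toL1 x),
    (continuous_conicExtension hψ).comp continuous_toL1⟩, fun x y a b ha hb => ?_, fun i => ?_,
    fun j => ?_⟩
  · rw [← norm_smul_toL1_sub_smul_toL1]
    exact mul_conicExtension_sub_mul_conicExtension_le hψ _ _ ha hb
  · refine le_ciInf fun ⟨j, b⟩ => le_sub_iff_add_le.2 ?_
    simpa using hφ i j 1 b zero_le_one b.2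
  · have := conicExtension_le hψ (toL1 (Y j)) j zero_le_one
    simp only [one_smul, sub_self, norm_zero, one_mul, zero_sub] at this
    exact le_neg_of_le_neg this

theorem dualValue_restrict_eq (U V : Finset (Δ K)) (wu wv : Δ K → ℝ) (f : Δ K → ℝ) :
    dualValue (fun x : U => wu x, fun y : V => wv y) (fun x : U => f x, fun y : V => -f y) =
      ∑ x ∈ U, wu x * f x - ∑ y ∈ V, wv y * f y := by
  rw [← Finset.sum_coe_sort U, ← Finset.sum_coe_sort V]
  simp [dualValue, dotProduct, sub_eq_add_neg]

theorem sum_sub_sum_le_cost {U V : Finset (Δ K)} {wu wv : Δ K → ℝ} {f : C(Δ K, ℝ)}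
    (hf : f ∈ D1 K) {γ : (Δ K → Δ K → ℝ) × (Δ K → Δ K → ℝ)} (hγ : γ ∈ M4 K U V wu wv) :
    ∑ x ∈ U, wu x * f x - ∑ y ∈ V, wv y * f y ≤ cost K U V γ := by
  obtain ⟨hγ_nonneg, hγ_marginals⟩ := mem_M4_iff.1 hγ
  rw [← dualValue_restrict_eq, ← hγ_marginals, cost_eq_transportCost]
  exact dualValue_marginals_le_transportCost (mem_potentials_of_mem_D1 hf U V) hγ_nonneg

theorem exists_mem_M4_isLUB {U V : Finset (Δ K)} (hU : U.Nonempty) (hV : V.Nonempty)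
    {wu wv : Δ K → ℝ} (hwu : ∀ x ∈ U, 0 ≤ wu x) (hwv : ∀ y ∈ V, 0 ≤ wv y) :
    ∃ γ ∈ M4 K U V wu wv,
      IsLUB ((fun f => ∑ x ∈ U, wu x * f x - ∑ y ∈ V, wv y * f y) '' D1 K) (cost K U V γ) := by
  have := hU.to_subtype
  have := hV.to_subtype
  let w : (U → ℝ) × (V → ℝ) := (fun x => wu x, fun y => wv y)
  have hw : 0 ≤ w := ⟨fun x => hwu x x.2, fun y => hwv y y.2⟩
  obtain ⟨γ', hγ'_nonneg, hγ'_marginals, hlub⟩ :=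
    exists_isLUB_potentials (fun x : U => toL1 x.1) (fun y : V => toL1 y.1) hw
  obtain ⟨γ, rfl⟩ := restrictPair_surjective U V γ'
  have hγ : γ ∈ M4 K U V wu wv := mem_M4_iff.2 ⟨hγ'_nonneg, hγ'_marginals⟩
  refine ⟨γ, hγ, forall_mem_image.2 fun f hf => sum_sub_sum_le_cost hf hγ, fun b hb => ?_⟩
  rw [cost_eq_transportCost]
  refine hlub.2 (forall_mem_image.2 fun φ hφ => ?_)
  obtain ⟨f, hf, hφf, hψf⟩ := exists_mem_D1_of_mem_potentials hφ
  calc dualValue w φ ≤ dualValue w (fun x : U => f x, fun y : V => -f y) :=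
        add_le_add (dotProduct_le_dotProduct_of_nonneg_left hφf hw.1)
          (dotProduct_le_dotProduct_of_nonneg_left hψf hw.2)
    _ = ∑ x ∈ U, wu x * f x - ∑ y ∈ V, wv y * f y := dualValue_restrict_eq U V wu wv f
    _ ≤ b := hb ⟨f, hf, rfl⟩

end Simplex

section Pairing

theorem integral_sum_ofReal_smul_dirac {X : Type*} [MeasurableSpace X] [MeasurableSingletonClass X]
    {U : Finset X} {w : X → ℝ} (hw : ∀ x ∈ U, 0 ≤ w x) (f : X → ℝ) :
    ∫ p, f p ∂(∑ x ∈ U, ENNReal.ofReal (w x) • Measure.dirac x) = ∑ x ∈ U, w x * f x := by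
  rw [integral_finsetSum_measure fun x _ =>
    (integrable_dirac (by simp)).smul_measure ENNReal.ofReal_ne_top]
  refine Finset.sum_congr rfl fun x hx => ?_
  rw [integral_smul_measure, integral_dirac, ENNReal.toReal_ofReal (hw x hx), smul_eq_mul]

theorem nonempty_of_eq_sum_smul_dirac {X : Type*} [MeasurableSpace X] {μ : Measure X} [NeZero μ]
    {U : Finset X} {w : X → ENNReal} (hμ : μ = ∑ x ∈ U, w x • Measure.dirac x) : U.Nonempty := by
  rw [Finset.nonempty_iff_ne_empty]
  rintro rfl
  exact NeZero.ne μ (by simpa using hμ)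

theorem upperBounds_abs_image {G : Type*} [Neg G] {S : Set G} {F : G → ℝ}
    (hS : ∀ g ∈ S, -g ∈ S) (hF : ∀ g, F (-g) = -F g) :
    upperBounds ((fun g => |F g|) '' S) = upperBounds (F '' S) := by
  ext b
  simp only [mem_upperBounds, forall_mem_image, abs_le']
  exact ⟨fun h g hg => (h hg).1, fun h g hg => ⟨h hg, hF g ▸ h (hS g hg)⟩⟩

variable {K : Type*} [Fintype K]

theorem pairing_neg (u : ProbabilityMeasure (Δ K)) (f : C(Δ K, ℝ)) :
    pairing K u (-f) = -pairing K u f := by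
  simp [pairing, integral_neg]

theorem isLUB_abs_pairing_sub_iff {u v : ProbabilityMeasure (Δ K)} {c : ℝ} :
    IsLUB ((fun f => |pairing K u f - pairing K v f|) '' D1 K) c ↔
      IsLUB ((fun f => pairing K u f - pairing K v f) '' D1 K) c := by
  rw [IsLUB, IsLUB, upperBounds_abs_image fun _ => neg_mem_D1]
  intro f
  rw [pairing_neg, pairing_neg]
  ring

end Pairing

end Stmt8

/-- **Theorem 2 (Renault–Venel), duality formula.** For Borel probability measures `u, v`
on `X = Δ(K)` with finite supports `U, V`,
`d_*(u,v) = sup_{f ∈ D₁} |u(f) − v(f)| = min_{(α,β) ∈ M₄(u,v)} Σ_{(x,y) ∈ U×V}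
‖α(x,y)·x − β(x,y)·y‖₁`, the minimum being attained. -/
theorem stmt8 (K : Type*) [Fintype K] [Nonempty K]
    (u v : ProbabilityMeasure (Stmt8.Δ K))
    (U V : Finset (Stmt8.Δ K)) (wu wv : Stmt8.Δ K → ℝ)
    (hwu : ∀ x ∈ U, 0 < wu x) (hwv : ∀ y ∈ V, 0 < wv y)
    (hu : (u : Measure (Stmt8.Δ K)) = ∑ x ∈ U, ENNReal.ofReal (wu x) • Measure.dirac x)
    (hv : (v : Measure (Stmt8.Δ K)) = ∑ y ∈ V, ENNReal.ofReal (wv y) • Measure.dirac y) :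
    Stmt8.dstar K u v =
      sSup ((fun f => |Stmt8.pairing K u f - Stmt8.pairing K v f|) '' Stmt8.D1 K) ∧
    IsLeast (Stmt8.cost K U V '' Stmt8.M4 K U V wu wv) (Stmt8.dstar K u v) := by
  have hU := Stmt8.nonempty_of_eq_sum_smul_dirac hu
  have hV := Stmt8.nonempty_of_eq_sum_smul_dirac hv
  have hpairing (f : C(Stmt8.Δ K, ℝ)) : Stmt8.pairing K u f - Stmt8.pairing K v f =
      ∑ x ∈ U, wu x * f x - ∑ y ∈ V, wv y * f y := by
    rw [Stmt8.pairing, Stmt8.pairing, hu, hv,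
      Stmt8.integral_sum_ofReal_smul_dirac fun x hx => (hwu x hx).le,
      Stmt8.integral_sum_ofReal_smul_dirac fun y hy => (hwv y hy).le]
  obtain ⟨γ, hγ, hlub⟩ := Stmt8.exists_mem_M4_isLUB hU hV (fun x hx => (hwu x hx).le)
    fun y hy => (hwv y hy).le
  simp only [← hpairing] at hlub
  have hdstar : Stmt8.dstar K u v = Stmt8.cost K U V γ := hlub.csSup_eq hlub.nonempty
  have hlub_abs := Stmt8.isLUB_abs_pairing_sub_iff.2 hlub
  rw [hdstar]
  refine ⟨(hlub_abs.csSup_eq hlub_abs.nonempty).symm, mem_image_of_mem _ hγ, ?_⟩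
  refine forall_mem_image.2 fun γ' hγ' => hlub.2 (forall_mem_image.2 fun f hf => ?_)
  rw [hpairing]
  exact Stmt8.sum_sub_sum_le_cost hf hγ'
end
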